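/- For every integer k ≥ 2 and every real p > p̄_k, where p̄_k is the smallest even integer that is greater than or equal to q_k, there exists a constant C = C(k,p) < ∞ such that ‖E_k f‖_{L^p(ℝ^N)} ≤ C · ‖f‖_{L^∞([0,1]²)} for every f ∈ L^∞([0,1]²). -/

import Mathlib

open MeasureTheory Real Set
open scoped ENNReal

noncomputable section

/-- Index set for multi-indices `β = (β₁, β₂) ∈ ℕ²` with `1 ≤ β₁ + β₂ ≤ k`;
its cardinality is `N = (k+1)(k+2)/2 − 1`. -/
def Idx (k : ℕ) : Type :=
  {β : Fin (k + 1) × Fin (k + 1) // 1 ≤ (β.1 : ℕ) + (β.2 : ℕ) ∧ (β.1 : ℕ) + (β.2 : ℕ) ≤ k}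

instance (k : ℕ) : Fintype (Idx k) := by unfold Idx; infer_instance

/-- The phase polynomial `P(ξ; x) = ∑_{1 ≤ |β| ≤ k} x_β ξ₁^{β₁} ξ₂^{β₂}`. -/
def Pphase (k : ℕ) (x : Idx k → ℝ) (ξ : Fin 2 → ℝ) : ℝ :=
  ∑ β : Idx k, x β * ξ 0 ^ (β.1.1 : ℕ) * ξ 1 ^ (β.1.2 : ℕ)

/-- `E_k1(x) = ∫_{[0,1]²} e(P(ξ; x)) dξ` with `e(t) = exp(2πit)`. -/
def Eone (k : ℕ) (x : Idx k → ℝ) : ℂ :=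
  ∫ ξ in Icc (0 : Fin 2 → ℝ) 1, Complex.exp (2 * Real.pi * Complex.I * (Pphase k x ξ))

/-- The Fourier extension operator `E_k f(x) = ∫_{[0,1]²} f(ξ) e(P(ξ; x)) dξ`. -/
def Eext (k : ℕ) (f : (Fin 2 → ℝ) → ℂ) (x : Idx k → ℝ) : ℂ :=
  ∫ ξ in Icc (0 : Fin 2 → ℝ) 1, f ξ * Complex.exp (2 * Real.pi * Complex.I * (Pphase k x ξ))

theorem exists_lintegral_enorm_sub_rpow_le {b : ℝ} (hb0 : 0 ≤ b) (hb : b < 1) :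
    ∃ B : ℝ≥0∞, B ≠ ⊤ ∧ ∀ x : ℝ, ∫⁻ t in Icc (0:ℝ) 1, ‖t - x‖ₑ ^ (-b) ≤ B := by
  refine ⟨1 + ∫⁻ t in Icc (-1:ℝ) 1, ‖t‖ₑ ^ (-b), ?_, fun x => ?_⟩
  · refine ENNReal.add_ne_top.2 ⟨by simp, ?_⟩
    have hInt : IntervalIntegrable (fun t : ℝ => |t| ^ (-b)) volume (-1) 1 := by
      have h1 : IntervalIntegrable (fun t : ℝ => |t| ^ (-b)) volume 0 1 := by
        refine (intervalIntegral.intervalIntegrable_rpow' (by linarith : -1 < -b)).congr ?_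
        intro t ht
        rw [uIoc_of_le zero_le_one] at ht
        simp only
        rw [abs_of_pos ht.1]
      have h2 : IntervalIntegrable (fun t : ℝ => |t| ^ (-b)) volume (-1) 0 := by
        have := h1.comp_sub_left 0
        simpa using this.symm
      exact h2.trans h1
    have h3 : IntegrableOn (fun t : ℝ => |t| ^ (-b)) (Icc (-1) 1) volume := by
      rw [integrableOn_Icc_iff_integrableOn_Ioc]
      exact (intervalIntegrable_iff_integrableOn_Ioc_of_le (by norm_num)).1 hInt
    have h4 := h3.2
    rw [hasFiniteIntegral_iff_enorm] at h4
    refine ne_of_lt (lt_of_le_of_lt (le_of_eq ?_) h4)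
    refine lintegral_congr_ae ?_
    have : ∀ᵐ t : ℝ ∂volume.restrict (Icc (-1:ℝ) 1), t ≠ 0 := by
      refine ae_restrict_of_ae ?_
      simp [ae_iff]
    filter_upwards [this] with t ht
    have hp : 0 < |t| := abs_pos.2 ht
    rw [Real.enorm_eq_ofReal_abs t, Real.enorm_eq_ofReal (Real.rpow_nonneg hp.le _),
      ENNReal.ofReal_rpow_of_pos hp]
  · calc ∫⁻ t in Icc (0:ℝ) 1, ‖t - x‖ₑ ^ (-b)
        ≤ ∫⁻ t in Icc (0:ℝ) 1, (1 + (Icc (-1:ℝ) 1).indicator (fun t => ‖t‖ₑ ^ (-b)) (t - x)) := by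
          refine lintegral_mono fun t => ?_
          by_cases h : t - x ∈ Icc (-1:ℝ) 1
          · rw [indicator_of_mem h]; exact le_add_self
          · rw [indicator_of_notMem h, add_zero]
            have h1 : 1 ≤ ‖t - x‖ₑ := by
              rw [Real.enorm_eq_ofReal_abs]
              rw [ENNReal.one_le_ofReal]
              by_contra h'
              exact h ⟨by linarith [neg_abs_le (t-x)], by linarith [le_abs_self (t-x)]⟩
            rw [ENNReal.rpow_neg]
            refine ENNReal.inv_le_one.2 ?_
            simpa using ENNReal.rpow_le_rpow h1 hb0
      _ = 1 + ∫⁻ t in Icc (0:ℝ) 1, (Icc (-1:ℝ) 1).indicator (fun t => ‖t‖ₑ ^ (-b)) (t - x) := by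
          rw [lintegral_add_left measurable_const]; simp
      _ ≤ 1 + ∫⁻ t : ℝ, (Icc (-1:ℝ) 1).indicator (fun t => ‖t‖ₑ ^ (-b)) (t - x) := by
          gcongr; exact Measure.restrict_le_self
      _ = _ := by
          rw [lintegral_sub_right_eq_self (fun t => (Icc (-1:ℝ) 1).indicator (fun t => ‖t‖ₑ ^ (-b)) t) x,
            lintegral_indicator measurableSet_Icc]

theorem ENNReal.multiset_prod_le_one_add_sum_pow (s : Multiset ℝ≥0∞) {d : ℕ} (hs : s.card ≤ d) :
    s.prod ≤ 1 + (s.map (fun x => x ^ d)).sum := by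
  by_cases h : ∃ x ∈ s, 1 ≤ x ∧ ∀ y ∈ s, y ≤ x
  · obtain ⟨x, hx, h1, hy⟩ := h
    calc s.prod ≤ x ^ s.card := Multiset.prod_le_pow_card s x hy
      _ ≤ x ^ d := pow_le_pow_right₀ h1 hs
      _ ≤ (s.map (fun x => x ^ d)).sum := Multiset.le_sum_of_mem (Multiset.mem_map_of_mem (fun x => x ^ d) hx)
      _ ≤ _ := le_add_self
  · have h2 : ∀ y ∈ s, y ≤ 1 := by
      intro y hy
      by_contra h3
      have hne : s.toFinset.Nonempty := ⟨y, by simpa using hy⟩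
      obtain ⟨x, hx, hmax⟩ := s.toFinset.exists_max_image id hne
      refine h ⟨x, by simpa using hx, ?_, fun z hz => hmax z (by simpa using hz)⟩
      exact (not_le.1 h3).le.trans (hmax y (by simpa using hy))
    calc s.prod ≤ 1 ^ s.card := Multiset.prod_le_pow_card s 1 h2
      _ ≤ _ := by simp

theorem Polynomial.exists_lintegral_enorm_eval_rpow_le (d : ℕ) {c : ℝ} (hc : 0 < c)
    (hcd : c * d < 1) :
    ∃ C : ℝ≥0∞, C ≠ ⊤ ∧ ∀ p : Polynomial ℝ, p.natDegree ≤ d → ∀ t₀ ∈ Icc (0:ℝ) 1,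
      ∫⁻ t in Icc (0:ℝ) 1, ‖p.eval t‖ₑ ^ (-c) ≤ C * ‖p.eval t₀‖ₑ ^ (-c) := by
  obtain ⟨B, hB, hBx⟩ := exists_lintegral_enorm_sub_rpow_le (b := c * d) (by positivity) hcd
  refine ⟨1 + d * (1 + B), by finiteness, fun p hp t₀ ht₀ => ?_⟩
  by_cases h0 : p.eval t₀ = 0
  · rw [h0, enorm_zero, ENNReal.zero_rpow_of_neg (by linarith), ENNReal.mul_top]
    · exact le_top
    · simp
  have hp0 : p ≠ 0 := by rintro rfl; simp at h0
  set q : Polynomial ℂ := p.map (algebraMap ℝ ℂ) with hq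
  have hq0 : q ≠ 0 := (Polynomial.map_ne_zero_iff (algebraMap ℝ ℂ).injective).2 hp0
  have hcard : q.roots.card ≤ d := by
    refine (Polynomial.card_roots' q).trans ?_
    rw [hq, Polynomial.natDegree_map]; exact hp
  have hev : ∀ t : ℝ, ‖p.eval t‖ₑ = ‖q.leadingCoeff‖ₑ * (q.roots.map (fun z => ‖(t:ℂ) - z‖ₑ)).prod := by
    intro t
    have h1 : ((p.eval t : ℝ) : ℂ) = q.eval (t : ℂ) := by
      rw [hq, Polynomial.eval_map]
      exact (Polynomial.eval₂_at_apply (algebraMap ℝ ℂ) t).symm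
    have h2 : q.eval (t:ℂ) = q.leadingCoeff * (q.roots.map (fun z => (t:ℂ) - z)).prod := by
      conv_lhs => rw [(IsAlgClosed.splits q).eq_prod_roots]
      simp [Polynomial.eval_multiset_prod, Multiset.map_map]

    have h3 : ‖p.eval t‖ₑ = ‖((p.eval t : ℝ) : ℂ)‖ₑ := by
      rw [← ofReal_norm, ← ofReal_norm, Complex.norm_real]
    rw [h3, h1, h2, enorm_mul]
    congr 1
    generalize q.roots = s
    induction s using Multiset.induction_on with
    | empty => simp
    | cons a s ih => simp [enorm_mul, ih]
  have hlc : ‖q.leadingCoeff‖ₑ ≠ 0 := by simpa using hq0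
  have hr0 : ∀ z ∈ q.roots, ‖(t₀:ℂ) - z‖ₑ ≠ 0 := by
    intro z hz h
    apply h0
    have := hev t₀
    rw [Multiset.prod_eq_zero (Multiset.mem_map.2 ⟨z, hz, h⟩)] at this
    simpa using this
  have hpt : ∀ t : ℝ, ‖p.eval t‖ₑ ^ (-c) ≤ ‖p.eval t₀‖ₑ ^ (-c) *
      (1 + (q.roots.map (fun z => (‖(t₀:ℂ) - z‖ₑ ^ c * ‖(t:ℂ) - z‖ₑ ^ (-c)) ^ d)).sum) := by
    intro t
    have h1 := ENNReal.multiset_prod_le_one_add_sum_pow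
      (q.roots.map (fun z => (‖(t₀:ℂ) - z‖ₑ ^ c * ‖(t:ℂ) - z‖ₑ ^ (-c)))) (d := d) (by simpa using hcard)
    rw [Multiset.map_map] at h1
    refine le_trans (le_of_eq ?_) (mul_le_mul_right h1 _)
    rw [hev t, hev t₀]
    have key : ∀ s : Multiset ℂ, (∀ z ∈ s, ‖(t₀:ℂ) - z‖ₑ ≠ 0) →
        (s.map (fun z => ‖(t:ℂ) - z‖ₑ)).prod ^ (-c) = (s.map (fun z => ‖(t₀:ℂ) - z‖ₑ)).prod ^ (-c) *
        (s.map (fun z => (‖(t₀:ℂ) - z‖ₑ ^ c * ‖(t:ℂ) - z‖ₑ ^ (-c)))).prod := by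
      intro s
      have hfin : ∀ (s : Multiset ℂ) (t : ℝ), (s.map (fun z => ‖(t:ℂ) - z‖ₑ)).prod ≠ ⊤ := by
        intro s t
        induction s using Multiset.induction_on with
        | empty => simp
        | cons a s ih => simpa using ENNReal.mul_ne_top (by simp) ih
      induction s using Multiset.induction_on with
      | empty => simp
      | cons a s ih =>
        intro hs
        have ih' := ih (fun z hz => hs z (Multiset.mem_cons_of_mem hz))
        have ha := hs a (Multiset.mem_cons_self a s)
        simp only [Multiset.map_cons, Multiset.prod_cons]
        rw [ENNReal.mul_rpow_of_ne_top (by simp) (hfin _ _),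
          ENNReal.mul_rpow_of_ne_top (by simp) (hfin _ _), ih']
        have h5 : ‖(t₀:ℂ) - a‖ₑ ^ (-c) * ‖(t₀:ℂ) - a‖ₑ ^ c = 1 := by
          rw [← ENNReal.rpow_add _ _ ha (by simp)]; simp
        generalize (s.map (fun z => ‖(t₀:ℂ) - z‖ₑ)).prod ^ (-c) = X
        generalize (s.map (fun z => (‖(t₀:ℂ) - z‖ₑ ^ c * ‖(t:ℂ) - z‖ₑ ^ (-c)))).prod = Y
        calc ‖(t:ℂ) - a‖ₑ ^ (-c) * (X * Y) = 1 * (‖(t:ℂ) - a‖ₑ ^ (-c) * (X * Y)) := by rw [one_mul]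
          _ = _ := by rw [← h5]; ring

    have hfin : ∀ (t : ℝ), (q.roots.map (fun z => ‖(t:ℂ) - z‖ₑ)).prod ≠ ⊤ := by
      intro t
      generalize q.roots = s
      induction s using Multiset.induction_on with
      | empty => simp
      | cons a s ih => simpa using ENNReal.mul_ne_top (by simp) ih
    rw [ENNReal.mul_rpow_of_ne_top (by simp) (hfin _), ENNReal.mul_rpow_of_ne_top (by simp) (hfin _),
      key _ hr0]
    ring
  have hone : ∀ z : ℂ, ∫⁻ t in Icc (0:ℝ) 1, (‖(t₀:ℂ) - z‖ₑ ^ c * ‖(t:ℂ) - z‖ₑ ^ (-c)) ^ d ≤ 1 + B := by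
    intro z
    calc ∫⁻ t in Icc (0:ℝ) 1, (‖(t₀:ℂ) - z‖ₑ ^ c * ‖(t:ℂ) - z‖ₑ ^ (-c)) ^ d
        ≤ ∫⁻ t in Icc (0:ℝ) 1, (1 + ‖t - z.re‖ₑ ^ (-(c*d))) := by
          refine lintegral_mono_ae ?_
          have hne : ∀ᵐ t : ℝ ∂volume.restrict (Icc (0:ℝ) 1), t ≠ z.re := by
            refine ae_restrict_of_ae ?_
            simp [ae_iff]
          filter_upwards [hne, ae_restrict_mem measurableSet_Icc] with t ht htm
          have e1 : ‖(t₀:ℂ) - z‖ₑ ≤ 1 + ‖(t:ℂ) - z‖ₑ := by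
            have : (t₀:ℂ) - z = ((t₀ - t : ℝ) : ℂ) + ((t:ℂ) - z) := by push_cast; ring
            rw [this]
            refine (enorm_add_le _ _).trans ?_
            gcongr
            rw [← ofReal_norm, Complex.norm_real]
            refine ENNReal.ofReal_le_one.2 ?_
            rw [Real.norm_eq_abs, abs_le]
            constructor <;> linarith [ht₀.1, ht₀.2, htm.1, htm.2]
          have e2 : ‖t - z.re‖ₑ ≤ ‖(t:ℂ) - z‖ₑ := by
            rw [Real.enorm_eq_ofReal_abs, ← ofReal_norm]
            refine ENNReal.ofReal_le_ofReal ?_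
            simpa using Complex.abs_re_le_norm ((t:ℂ) - z)
          have e3 : ‖t - z.re‖ₑ ≠ 0 := by simpa [sub_eq_zero] using ht
          have e4 : ‖(t:ℂ) - z‖ₑ ≠ 0 := fun h => e3 (le_antisymm (h ▸ e2) bot_le)
          have hle1 : c * d ≤ 1 := hcd.le
          rw [mul_pow, ← ENNReal.rpow_natCast, ← ENNReal.rpow_natCast, ← ENNReal.rpow_mul,
            ← ENNReal.rpow_mul, neg_mul]
          calc ‖(t₀:ℂ) - z‖ₑ ^ (c*d) * ‖(t:ℂ) - z‖ₑ ^ (-(c*d))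
              ≤ (1 + ‖(t:ℂ) - z‖ₑ ^ (c*d)) * ‖(t:ℂ) - z‖ₑ ^ (-(c*d)) := by
                gcongr
                refine (ENNReal.rpow_le_rpow e1 (by positivity)).trans ?_
                simpa using ENNReal.rpow_add_le_add_rpow 1 ‖(t:ℂ) - z‖ₑ (by positivity) hle1
            _ = ‖(t:ℂ) - z‖ₑ ^ (-(c*d)) + 1 := by
                rw [add_mul, one_mul, ← ENNReal.rpow_add _ _ e4 (by simp)]; simp
            _ ≤ _ := by
                rw [add_comm, ENNReal.rpow_neg, ENNReal.rpow_neg]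
                refine add_le_add le_rfl (ENNReal.inv_le_inv.2 ?_)
                exact ENNReal.rpow_le_rpow e2 (by positivity)
      _ = 1 + ∫⁻ t in Icc (0:ℝ) 1, ‖t - z.re‖ₑ ^ (-(c*d)) := by
          rw [lintegral_add_left measurable_const]; simp
      _ ≤ _ := by gcongr; exact hBx _
  calc ∫⁻ t in Icc (0:ℝ) 1, ‖p.eval t‖ₑ ^ (-c)
      ≤ ∫⁻ t in Icc (0:ℝ) 1, ‖p.eval t₀‖ₑ ^ (-c) *
      (1 + (q.roots.map (fun z => (‖(t₀:ℂ) - z‖ₑ ^ c * ‖(t:ℂ) - z‖ₑ ^ (-c)) ^ d)).sum) :=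
        lintegral_mono fun t => hpt t
    _ = ‖p.eval t₀‖ₑ ^ (-c) * (1 + ∫⁻ t in Icc (0:ℝ) 1,
          (q.roots.map (fun z => (‖(t₀:ℂ) - z‖ₑ ^ c * ‖(t:ℂ) - z‖ₑ ^ (-c)) ^ d)).sum) := by
        have hne : ‖p.eval t₀‖ₑ ^ (-c) ≠ ⊤ := by
          refine ENNReal.rpow_ne_top_of_ne_zero ?_ (by simp)
          simpa using h0
        rw [lintegral_const_mul' _ _ hne, lintegral_add_left measurable_const]
        simp
    _ ≤ ‖p.eval t₀‖ₑ ^ (-c) * (1 + d * (1 + B)) := by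
        gcongr
        refine le_trans ?_ (mul_le_mul_left (Nat.cast_le.2 hcard) _)
        generalize q.roots = s
        induction s using Multiset.induction_on with
        | empty => simp
        | cons a s ih =>
          simp only [Multiset.map_cons, Multiset.sum_cons, Multiset.card_cons]
          rw [lintegral_add_left (by fun_prop)]
          push_cast
          rw [add_mul, one_mul, add_comm]
          gcongr
          exact hone a
    _ = _ := mul_comm _ _

theorem MvPolynomial.exists_eval_update {δ : Type*} [DecidableEq δ] (P : MvPolynomial δ ℝ)
    (x : δ → ℝ) (i : δ) :
    ∃ p : Polynomial ℝ, p.natDegree ≤ P.totalDegree ∧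
      ∀ t, MvPolynomial.eval (Function.update x i t) P = p.eval t := by
  refine ⟨MvPolynomial.aeval (Function.update (fun j => Polynomial.C (x j)) i Polynomial.X) P,
    ?_, fun t => ?_⟩
  · refine (MvPolynomial.aeval_natDegree_le P le_rfl (n := 1) _ fun j => ?_).trans (by simp)
    by_cases h : j = i
    · subst h; simp
    · simp [h]
  · rw [← Polynomial.coe_evalRingHom, MvPolynomial.aeval_def, MvPolynomial.hom_eval₂]
    rw [← MvPolynomial.eval₂_id]
    congr 1
    · ext; simp
    · ext j
      by_cases h : j = i
      · subst h; simp
      · simp [h]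

theorem MvPolynomial.ae_eval_ne_zero {δ : Type*} [Fintype δ] (P : MvPolynomial δ ℝ) (hP : P ≠ 0) :
    ∀ᵐ x : δ → ℝ, MvPolynomial.eval x P ≠ 0 := by
  classical
  have hex : ∃ x₀ : δ → ℝ, MvPolynomial.eval x₀ P ≠ 0 := by
    by_contra! h
    exact hP (MvPolynomial.funext (by simpa using h))
  obtain ⟨x₀, hx₀⟩ := hex
  have hcont : Continuous fun x : δ → ℝ => MvPolynomial.eval x P := MvPolynomial.continuous_eval P
  set S : Set (δ → ℝ) := {x | MvPolynomial.eval x P = 0} with hS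
  have hSm : MeasurableSet S := (isClosed_eq hcont continuous_const).measurableSet
  set g : (δ → ℝ) → ℝ≥0∞ := S.indicator 1 with hg
  have hgm : Measurable g := measurable_one.indicator hSm
  have key : ∀ (s : Finset δ) (x : δ → ℝ), MvPolynomial.eval x P ≠ 0 →
      (∫⋯∫⁻_s, g ∂fun _ => volume) x = 0 := by
    intro s
    induction s using Finset.induction_on with
    | empty => intro x hx; simp [hg, hS, hx]
    | insert i s hi ih =>
      intro x hx
      rw [lmarginal_insert _ hgm hi]
      obtain ⟨p, -, hp⟩ := P.exists_eval_update x i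
      have hp0 : p ≠ 0 := by
        rintro rfl
        have := hp (x i)
        simp at this
        exact hx this
      rw [lintegral_eq_zero_iff' ?_]
      · have : ∀ᵐ t : ℝ, t ∉ (p.roots.toFinset : Set ℝ) :=
          (measure_eq_zero_iff_ae_notMem).1 (Finset.measure_zero _ _)
        filter_upwards [this] with t ht
        refine ih _ ?_
        rw [hp]
        intro h
        apply ht
        simp [hp0, h]
      · exact ((hgm.lmarginal _).comp (measurable_update x)).aemeasurable
  have h0 : ∫⁻ x, g x = 0 := by
    have := key Finset.univ x₀ hx₀
    rwa [← lintegral_eq_lmarginal_univ] at this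
  rw [hg, lintegral_indicator_one hSm] at h0
  exact (measure_eq_zero_iff_ae_notMem).1 h0

theorem MvPolynomial.exists_lintegral_enorm_eval_rpow_le {δ : Type*} [Fintype δ]
    (P : MvPolynomial δ ℝ) {c : ℝ} (hc : 0 < c) (hcd : c * P.totalDegree < 1) :
    ∃ C : ℝ≥0∞, C ≠ ⊤ ∧ ∀ x₀ ∈ Icc (0 : δ → ℝ) 1,
      ∫⁻ x in Icc (0 : δ → ℝ) 1, ‖MvPolynomial.eval x P‖ₑ ^ (-c) ≤
        C * ‖MvPolynomial.eval x₀ P‖ₑ ^ (-c) := by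
  classical
  obtain ⟨C, hC, h⟩ := Polynomial.exists_lintegral_enorm_eval_rpow_le P.totalDegree hc hcd
  refine ⟨C ^ (Fintype.card δ), by finiteness, fun x₀ hx₀ => ?_⟩
  have hcont : Continuous fun x : δ → ℝ => MvPolynomial.eval x P := MvPolynomial.continuous_eval P
  set g : (δ → ℝ) → ℝ≥0∞ := fun x => ‖MvPolynomial.eval x P‖ₑ ^ (-c) with hg
  have hgm : Measurable g := by fun_prop
  have key : ∀ (s : Finset δ) (x : δ → ℝ), x ∈ Icc (0 : δ → ℝ) 1 →
      (∫⋯∫⁻_s, g ∂fun _ => volume.restrict (Icc (0:ℝ) 1)) x ≤ C ^ s.card * g x := by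
    intro s
    induction s using Finset.induction_on with
    | empty => intro x hx; simp
    | insert i s hi ih =>
      intro x hx
      rw [lmarginal_insert _ hgm hi, Finset.card_insert_of_notMem hi]
      obtain ⟨p, hpd, hp⟩ := P.exists_eval_update x i
      calc ∫⁻ t in Icc (0:ℝ) 1, (∫⋯∫⁻_s, g ∂fun _ => volume.restrict (Icc (0:ℝ) 1)) (Function.update x i t)
          ≤ ∫⁻ t in Icc (0:ℝ) 1, C ^ s.card * ‖p.eval t‖ₑ ^ (-c) := by
            refine setLIntegral_mono' measurableSet_Icc fun t ht => ?_
            refine (ih _ ?_).trans (by simp [hg, hp])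
            constructor
            · intro j
              by_cases hj : j = i
              · subst hj; simpa using ht.1
              · simpa [hj] using hx.1 j
            · intro j
              by_cases hj : j = i
              · subst hj; simpa using ht.2
              · simpa [hj] using hx.2 j
        _ = C ^ s.card * ∫⁻ t in Icc (0:ℝ) 1, ‖p.eval t‖ₑ ^ (-c) := by
            rw [lintegral_const_mul' _ _ (by finiteness)]
        _ ≤ C ^ s.card * (C * ‖p.eval (x i)‖ₑ ^ (-c)) := by
            gcongr
            exact h p hpd _ ⟨hx.1 i, hx.2 i⟩
        _ = _ := by
            rw [← hp, Function.update_eq_self, pow_succ, mul_assoc]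
  have h1 := key Finset.univ x₀ hx₀
  rw [← lintegral_eq_lmarginal_univ, ← Measure.restrict_pi_pi, Set.pi_univ_Icc] at h1
  exact h1

theorem MvPolynomial.exists_measure_sublevel_le {δ : Type*} [Fintype δ]
    (P : MvPolynomial δ ℝ) (hP : P ≠ 0) :
    ∃ c > 0, ∃ C : ℝ≥0∞, C ≠ ⊤ ∧ ∀ κ : ℝ, 0 < κ →
      volume ({x | |MvPolynomial.eval x P| ≤ κ} ∩ Icc (0 : δ → ℝ) 1) ≤ C * ENNReal.ofReal κ ^ (c:ℝ) := by
  obtain ⟨c, hc, hcd⟩ : ∃ c : ℝ, 0 < c ∧ c * P.totalDegree < 1 := by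
    refine ⟨1 / (P.totalDegree + 1), by positivity, ?_⟩
    rw [div_mul_eq_mul_div, one_mul, div_lt_one (by positivity)]; linarith
  obtain ⟨C, hC, h⟩ := P.exists_lintegral_enorm_eval_rpow_le hc hcd
  obtain ⟨x₀, hx₀, hx₀P⟩ : ∃ x₀ ∈ Icc (0 : δ → ℝ) 1, MvPolynomial.eval x₀ P ≠ 0 := by
    by_contra! h
    refine hP (MvPolynomial.funext_set (fun _ => Icc (0:ℝ) 1) (fun i => Set.Icc_infinite zero_lt_one) fun x hx => ?_)
    rw [Set.pi_univ_Icc] at hx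
    simpa using h x hx
  refine ⟨c, hc, C * ‖MvPolynomial.eval x₀ P‖ₑ ^ (-c), ?_, fun κ hκ => ?_⟩
  · refine ENNReal.mul_ne_top hC (ENNReal.rpow_ne_top_of_ne_zero ?_ (by simp))
    simpa using hx₀P
  have hcont : Continuous fun x : δ → ℝ => MvPolynomial.eval x P := MvPolynomial.continuous_eval P
  have h1 := mul_meas_ge_le_lintegral₀ (μ := volume.restrict (Icc (0 : δ → ℝ) 1))
    (f := fun x => ‖MvPolynomial.eval x P‖ₑ ^ (-c)) (by fun_prop) (ENNReal.ofReal κ ^ (-c))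
  have h2 := h1.trans (h x₀ hx₀)
  have hκ0 : ENNReal.ofReal κ ≠ 0 := by simpa using hκ
  have h3 : volume ({x | |MvPolynomial.eval x P| ≤ κ} ∩ Icc (0 : δ → ℝ) 1) ≤
     volume.restrict (Icc (0 : δ → ℝ) 1) {x | ENNReal.ofReal κ ^ (-c) ≤ ‖MvPolynomial.eval x P‖ₑ ^ (-c)} := by
    rw [Measure.restrict_apply' measurableSet_Icc]
    refine measure_mono (inter_subset_inter_left _ fun x hx => ?_)
    simp only [mem_ofPred_eq] at hx ⊢
    rw [ENNReal.rpow_neg, ENNReal.rpow_neg, ENNReal.inv_le_inv, Real.enorm_eq_ofReal_abs]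
    gcongr
  calc _ ≤ _ := h3
    _ = ENNReal.ofReal κ ^ c * (ENNReal.ofReal κ ^ (-c) * volume.restrict (Icc (0 : δ → ℝ) 1)
        {x | ENNReal.ofReal κ ^ (-c) ≤ ‖MvPolynomial.eval x P‖ₑ ^ (-c)}) := by
        rw [← mul_assoc, ← ENNReal.rpow_add _ _ hκ0 (by simp)]; simp
    _ ≤ ENNReal.ofReal κ ^ c * (C * ‖MvPolynomial.eval x₀ P‖ₑ ^ (-c)) := by gcongr
    _ = _ := mul_comm _ _

theorem MvPolynomial.exists_finset_card_le_of_fiber {κ : Type*} [Fintype κ]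
    (Ψ : κ → MvPolynomial κ ℝ) :
    ∃ K : ℕ, ∀ᵐ z : κ → ℝ, ∃ T : Finset (κ → ℝ), T.card ≤ K ∧
      ∀ y : κ → ℝ, (fun c => MvPolynomial.eval y (Ψ c)) = z → y ∈ T := by
  classical
  have hG : ∀ c : κ, ∃ G : MvPolynomial (Option κ) ℝ, G ≠ 0 ∧
      MvPolynomial.aeval (fun o : Option κ => o.elim (MvPolynomial.X c) Ψ) G = 0 := by
    intro c
    have hnot : ¬ AlgebraicIndependent ℝ (fun o : Option κ => o.elim (MvPolynomial.X c) Ψ) := by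
      intro h
      have h1 := h.lift_cardinalMk_le_trdeg
      rw [MvPolynomial.trdeg_of_isDomain] at h1
      simp only [Cardinal.mk_fintype, Cardinal.lift_natCast, Fintype.card_option, Nat.cast_le] at h1
      omega
    rw [algebraicIndependent_iff] at hnot
    push Not at hnot
    obtain ⟨G, h1, h2⟩ := hnot
    exact ⟨G, h2, h1⟩
  choose G hG0 hG using hG
  set H : κ → Polynomial (MvPolynomial κ ℝ) := fun c => MvPolynomial.optionEquivLeft ℝ κ (G c) with hH
  have hH0 : ∀ c, H c ≠ 0 := fun c => by
    simpa [hH] using hG0 c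
  refine ⟨∏ c, (H c).natDegree, ?_⟩
  have hae : ∀ᵐ z : κ → ℝ, ∀ c, MvPolynomial.eval z (H c).leadingCoeff ≠ 0 := by
    rw [ae_all_iff]
    exact fun c => MvPolynomial.ae_eval_ne_zero _ (by simpa using hH0 c)
  filter_upwards [hae] with z hz
  have hroot0 : ∀ c, (H c).map (MvPolynomial.eval z) ≠ 0 := by
    intro c h
    apply hz c
    have := congrArg (fun p => Polynomial.coeff p (H c).natDegree) h
    simpa [Polynomial.coeff_map] using this
  refine ⟨Fintype.piFinset fun c => ((H c).map (MvPolynomial.eval z)).roots.toFinset, ?_, ?_⟩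
  · rw [Fintype.card_piFinset]
    refine Finset.prod_le_prod' fun c _ => ?_
    refine (Multiset.toFinset_card_le _).trans ((Polynomial.card_roots' _).trans ?_)
    exact Polynomial.natDegree_map_le
  · intro y hy
    rw [Fintype.mem_piFinset]
    intro c
    rw [Multiset.mem_toFinset, Polynomial.mem_roots (hroot0 c), Polynomial.IsRoot.def,
      ← MvPolynomial.optionEquivLeft_elim_eval]
    have h1 := congrArg (MvPolynomial.eval y) (hG c)
    rw [map_zero, MvPolynomial.aeval_def, ← MvPolynomial.coe_eval₂Hom] at h1
    rw [← h1, ← RingHom.comp_apply, ← hy]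

    congr 1
    refine MvPolynomial.ringHom_ext (fun r => by simp) fun o => ?_
    cases o <;> simp

theorem MeasureTheory.lintegral_abs_det_fderiv_mul_comp_le {E : Type*} [NormedAddCommGroup E]
    [NormedSpace ℝ E] [FiniteDimensional ℝ E] [MeasurableSpace E] [BorelSpace E]
    (μ : Measure E) [μ.IsAddHaarMeasure] {f : E → E} (hf : ContDiff ℝ 1 f) (K : ℕ)
    (hK : ∀ᵐ z ∂μ, ∃ T : Finset E, T.card ≤ K ∧ ∀ y, f y = z → y ∈ T)
    (h : E → ℝ≥0∞) (hh : Measurable h) :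
    ∫⁻ y, ENNReal.ofReal |(fderiv ℝ f y).det| * h (f y) ∂μ ≤ K * ∫⁻ z, h z ∂μ := by
  classical
  set U : Set E := {y | (fderiv ℝ f y).det ≠ 0} with hU
  have hcd : Continuous fun y => (fderiv ℝ f y).det :=
    ContinuousLinearMap.continuous_det.comp (hf.continuous_fderiv (by simp))
  have hUm : MeasurableSet U := (isOpen_ne_fun hcd continuous_const).measurableSet
  have hloc : ∀ x ∈ U, ∃ V : Set E, IsOpen V ∧ x ∈ V ∧ InjOn f V := by
    intro x hx
    have h1 : HasStrictFDerivAt f (fderiv ℝ f x) x := hf.contDiffAt.hasStrictFDerivAt (by simp)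
    have h2 : HasStrictFDerivAt f
      (((fderiv ℝ f x).toContinuousLinearEquivOfDetNeZero hx : E ≃L[ℝ] E) : E →L[ℝ] E) x := by
      simpa using h1
    refine ⟨(h2.toOpenPartialHomeomorph f).source, (h2.toOpenPartialHomeomorph f).open_source,
      h2.mem_toOpenPartialHomeomorph_source, ?_⟩
    simpa using (h2.toOpenPartialHomeomorph f).injOn
  choose! V hVo hxV hVi using hloc
  obtain ⟨t, htU, htc, htcov⟩ := TopologicalSpace.countable_cover_nhdsWithin
    (f := V) (s := U) fun x hx => mem_nhdsWithin_of_mem_nhds ((hVo x hx).mem_nhds (hxV x hx))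
  obtain ⟨g, hg⟩ := Set.countable_iff_exists_subset_range.1 htc
  set W : ℕ → Set E := fun n => if g n ∈ U then V (g n) else ∅ with hW
  have hWm : ∀ n, MeasurableSet (W n) := by
    intro n
    by_cases h : g n ∈ U
    · simpa [hW, h] using (hVo _ h).measurableSet
    · simp [hW, h]
  have hWi : ∀ n, InjOn f (W n) := by
    intro n
    by_cases h : g n ∈ U
    · simpa [hW, h] using hVi _ h
    · simp [hW, h]
  have hWU : U ⊆ ⋃ n, W n := by
    intro x hx
    obtain ⟨y, hy, hxy⟩ := mem_iUnion₂.1 (htcov hx)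
    obtain ⟨n, rfl⟩ := hg hy
    exact mem_iUnion.2 ⟨n, by simpa [hW, htU hy] using hxy⟩
  set A : ℕ → Set E := fun n => disjointed W n with hA
  have hAm : ∀ n, MeasurableSet (A n) := fun n => MeasurableSet.disjointed hWm n
  have hAi : ∀ n, InjOn f (A n) := fun n => (hWi n).mono (disjointed_subset W n)
  have hAd : Pairwise (Function.onFun Disjoint A) := disjoint_disjointed W
  have hAU : U ⊆ ⋃ n, A n := by rw [hA, iUnion_disjointed]; exact hWU
  have hderiv : ∀ n, ∀ x ∈ A n, HasFDerivWithinAt f (fderiv ℝ f x) (A n) x := fun n x _ =>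
    ((hf.differentiable (by simp)) x).hasFDerivAt.hasFDerivWithinAt
  calc ∫⁻ y, ENNReal.ofReal |(fderiv ℝ f y).det| * h (f y) ∂μ
      = ∫⁻ y in ⋃ n, A n, ENNReal.ofReal |(fderiv ℝ f y).det| * h (f y) ∂μ := by
        symm
        refine setLIntegral_eq_of_support_subset fun y hy => ?_
        refine hAU ?_
        intro h0
        simp [h0] at hy
    _ = ∑' n, ∫⁻ y in A n, ENNReal.ofReal |(fderiv ℝ f y).det| * h (f y) ∂μ :=
        lintegral_iUnion hAm hAd _
    _ = ∑' n, ∫⁻ z in f '' A n, h z ∂μ := by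
        congr 1; ext n
        exact (lintegral_image_eq_lintegral_abs_det_fderiv_mul μ (hAm n) (hderiv n) (hAi n) h).symm
    _ = ∑' n, ∫⁻ z, (f '' A n).indicator h z ∂μ := by
        congr 1; ext n
        rw [lintegral_indicator]
        exact measurable_image_of_fderivWithin (hAm n) (hderiv n) (hAi n)
    _ = ∫⁻ z, ∑' n, (f '' A n).indicator h z ∂μ := by
        rw [lintegral_tsum]
        intro n
        exact (hh.indicator (measurable_image_of_fderivWithin (hAm n) (hderiv n) (hAi n))).aemeasurable
    _ ≤ ∫⁻ z, K * h z ∂μ := by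
        refine lintegral_mono_ae ?_
        filter_upwards [hK] with z ⟨T, hT, hTz⟩
        rw [ENNReal.tsum_eq_iSup_sum]
        refine iSup_le fun F => ?_
        simp only [indicator_apply]
        rw [← Finset.sum_filter, Finset.sum_const, nsmul_eq_mul]
        gcongr
        refine le_trans ?_ hT
        have hex : ∀ n ∈ F.filter (fun n => z ∈ f '' A n), ∃ y, y ∈ A n ∧ f y = z := by
          intro n hn
          exact (Finset.mem_filter.1 hn).2
        choose! y hyA hyz using hex
        refine Finset.card_le_card_of_injOn y (fun n hn => hTz _ (hyz n hn)) ?_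
        intro n hn n' hn' heq
        by_contra hne
        exact Set.disjoint_left.1 (hAd hne) (hyA n hn) (heq ▸ hyA n' hn')
    _ = K * ∫⁻ z, h z ∂μ := lintegral_const_mul _ hh

theorem Matrix.exists_exchange {ι M K : Type*} [Finite ι] [Fintype M] [DecidableEq M] [Fintype K]
    [DecidableEq K] (E : ι → M → ℝ) (j : K → M)
    (a₀ : M → ι) (ha₀ : (Matrix.of fun γ => E (a₀ γ)).det ≠ 0)
    (b₀ : K → ι) (hb₀ : (Matrix.of fun l l' => E (b₀ l) (j l')).det ≠ 0) :
    ∃ (a : M → ι) (σ : K → M),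
      (∀ a' : M → ι, |(Matrix.of fun γ => E (a' γ)).det| ≤
        (Fintype.card M : ℝ) ^ Fintype.card K * |(Matrix.of fun γ => E (a γ)).det|) ∧
      (∀ b' : K → ι, |(Matrix.of fun l l' => E (b' l) (j l')).det| ≤
        |(Matrix.of fun l l' => E (a (σ l)) (j l')).det|) ∧
      (Matrix.of fun γ => E (a γ)).det ≠ 0 ∧ (Matrix.of fun l l' => E (a (σ l)) (j l')).det ≠ 0 := by
  have : Nonempty (M → ι) := ⟨a₀⟩
  have : Nonempty (K → ι) := ⟨b₀⟩
  obtain ⟨A, hA⟩ := Finite.exists_max fun a : M → ι => |(Matrix.of fun γ => E (a γ)).det|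
  obtain ⟨b, hb⟩ := Finite.exists_max fun b : K → ι => |(Matrix.of fun l l' => E (b l) (j l')).det|
  have hbne : (Matrix.of fun l l' => E (b l) (j l')).det ≠ 0 := by
    intro h
    have := hb b₀
    simp only [h, abs_zero, abs_nonpos_iff] at this
    exact hb₀ this
  have key : ∀ R : Finset K, ∃ a : M → ι, (∀ r ∈ R, ∃ γ, a γ = b r) ∧
      (Matrix.of fun γ => E (a γ)).det ≠ 0 ∧
      (∀ a' : M → ι, |(Matrix.of fun γ => E (a' γ)).det| ≤
        (Fintype.card M : ℝ) ^ R.card * |(Matrix.of fun γ => E (a γ)).det|) := by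
    intro R
    induction R using Finset.induction_on with
    | empty =>
      refine ⟨A, by simp, fun h => ?_, fun a' => by simpa using hA a'⟩
      have := hA a₀
      simp only [h, abs_zero, abs_nonpos_iff] at this
      exact ha₀ this
    | insert r R hr ih =>
      obtain ⟨a, hra, hane, hamax⟩ := ih
      set B : Matrix K K ℝ := Matrix.of fun l l' => E (b l) (j l') with hB
      set L : (M → ℝ) → ℝ := fun w => Matrix.cramer B.transpose (fun l => w (j l)) r with hL
      have hLE : ∀ i, L (E i) = (Matrix.of fun l l' => E (Function.update b r i l) (j l')).det := by
        intro i
        rw [hL]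
        simp only
        rw [Matrix.cramer_transpose_apply]
        congr 1
        ext l l'
        by_cases h : l = r
        · subst h; simp
        · simp [h, hB, Matrix.updateRow_ne]
      have hLmax : ∀ i, |L (E i)| ≤ |B.det| := fun i => by
        rw [hLE]; exact hb _
      have hLr : L (E (b r)) = B.det := by
        rw [hLE, Function.update_eq_self]
      have hLs : ∀ s, s ≠ r → L (E (b s)) = 0 := by
        intro s hs
        rw [hLE]
        refine Matrix.det_zero_of_row_eq hs ?_
        ext l'
        simp [hs]
      set D : Matrix M M ℝ := Matrix.of fun γ => E (a γ) with hD
      have hcr : ∀ γ, Matrix.cramer D.transpose (E (b r)) γ =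
          (Matrix.of fun γ' => E (Function.update a γ (b r) γ')).det := by
        intro γ
        rw [Matrix.cramer_transpose_apply]
        congr 1
        ext l l'
        by_cases h : l = γ
        · subst h; simp
        · simp [h, hD, Matrix.updateRow_ne]
      have hexp : ∀ m, ∑ γ, Matrix.cramer D.transpose (E (b r)) γ * E (a γ) m = D.det * E (b r) m := by
        intro m
        have := congrFun (Matrix.mulVec_cramer D.transpose (E (b r))) m
        rw [Matrix.det_transpose] at this
        simp only [Matrix.mulVec, dotProduct, Matrix.transpose_apply, Pi.smul_apply, smul_eq_mul] at this
        rw [← this]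
        exact Finset.sum_congr rfl fun γ _ => by rw [mul_comm]; rfl
      have hLexp : ∑ γ, Matrix.cramer D.transpose (E (b r)) γ * L (E (a γ)) = D.det * B.det := by
        have h1 : (fun l => D.det * E (b r) (j l)) =
            ∑ γ, Matrix.cramer D.transpose (E (b r)) γ • fun l => E (a γ) (j l) := by
          ext l
          rw [← hexp (j l)]
          simp [Finset.sum_apply]
        rw [← hLr]
        have h2 : D.det * L (E (b r)) = Matrix.cramer B.transpose (fun l => D.det * E (b r) (j l)) r := by
          have : (fun l => D.det * E (b r) (j l)) = D.det • fun l => E (b r) (j l) := rfl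
          rw [this, map_smul]; rfl
        rw [h2, h1, map_sum, Finset.sum_apply]
        exact Finset.sum_congr rfl fun γ _ => by rw [map_smul]; rfl
      obtain ⟨γ, hγ0, hγ⟩ : ∃ γ, L (E (a γ)) ≠ 0 ∧
          |D.det| ≤ Fintype.card M * |Matrix.cramer D.transpose (E (b r)) γ| := by
        by_contra! hcon
        have hBpos : 0 < |B.det| := abs_pos.2 hbne
        have hM : Nonempty M := by
          by_contra hM
          rw [not_nonempty_iff] at hM
          rw [Fintype.sum_empty] at hLexp
          exact mul_ne_zero hane hbne hLexp.symm
        have hMpos : (0:ℝ) < Fintype.card M := by exact_mod_cast Fintype.card_pos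
        have h1 : ∀ γ ∈ (Finset.univ : Finset M), |Matrix.cramer D.transpose (E (b r)) γ * L (E (a γ))| <
            |D.det| / Fintype.card M * |B.det| := by
          intro γ _
          rw [abs_mul]
          by_cases h : L (E (a γ)) = 0
          · rw [h, abs_zero, mul_zero]
            have : 0 < |D.det| := abs_pos.2 hane
            positivity
          · have h2 := hcon γ h
            refine lt_of_le_of_lt (mul_le_mul_of_nonneg_left (hLmax _) (abs_nonneg _)) ?_
            refine mul_lt_mul_of_pos_right ?_ hBpos
            rw [lt_div_iff₀ hMpos]; linarith
        have h2 := Finset.sum_lt_sum_of_nonempty Finset.univ_nonempty h1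
        have h3 := Finset.abs_sum_le_sum_abs (fun γ => Matrix.cramer D.transpose (E (b r)) γ * L (E (a γ))) Finset.univ
        rw [hLexp, abs_mul] at h3
        rw [Finset.sum_const, Finset.card_univ, nsmul_eq_mul] at h2
        have h4 : (Fintype.card M : ℝ) * (|D.det| / Fintype.card M * |B.det|) = |D.det| * |B.det| := by
          field_simp
        linarith
      rw [hcr] at hγ
      refine ⟨Function.update a γ (b r), ?_, ?_, ?_⟩
      · intro s hs
        rcases Finset.mem_insert.1 hs with rfl | hs
        · exact ⟨γ, by simp⟩
        · obtain ⟨γ', hγ'⟩ := hra s hs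
          refine ⟨γ', ?_⟩
          rw [Function.update_of_ne, hγ']
          rintro rfl
          rw [hγ'] at hγ0
          exact hγ0 (hLs s fun h => hr (h ▸ hs))
      · intro h
        rw [h, abs_zero, mul_zero] at hγ
        exact hane (abs_nonpos_iff.1 hγ)
      · intro a'
        refine (hamax a').trans ?_
        rw [Finset.card_insert_of_notMem hr, pow_succ, mul_assoc]
        gcongr
  obtain ⟨a, hab, hane, hamax⟩ := key Finset.univ
  choose σ hσ using fun r => hab r (Finset.mem_univ r)
  refine ⟨a, σ, ?_, ?_, hane, ?_⟩
  · simpa using hamax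
  · simpa only [hσ] using hb
  · simpa only [hσ] using hbne

theorem exists_prod_abs_sub_le_det_vandermonde {P : Type*} [Fintype P] [DecidableEq P] (n : ℕ)
    (hP : Fintype.card P = n * (n - 1) / 2 + 1) (t : P → ℝ) :
    ∃ (c : P) (b : Fin n → P), Function.Injective b ∧
      ∏ i ∈ Finset.univ.erase c, |t i - t c| ≤ |(Matrix.vandermonde fun l => t (b l)).det| := by
  set h := n * (n - 1) / 2 with hh
  have hnP : n ≤ Fintype.card P := by
    rw [hP]
    rcases n with _ | _ | n
    · simp
    · simp
    · have : (n + 2) * 1 ≤ (n + 2) * (n + 1) := Nat.mul_le_mul_left _ (by omega)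
      have h2 : (n+2)*(n+1) ≥ 2 * (n + 1) := Nat.mul_le_mul_right _ (by omega)
      have : h ≥ n + 1 := by
        rw [hh, ge_iff_le, Nat.le_div_iff_mul_le (by norm_num)]
        have : n + 1 + 1 - 1 = n + 1 := rfl
        rw [this]; linarith
      omega
  obtain ⟨i₀⟩ : Nonempty (Fin n ↪ P) := Function.Embedding.nonempty_of_card_le (by simpa using hnP)
  have hPne : Nonempty P := Fintype.card_pos_iff.1 (by omega)
  obtain ⟨X, hX⟩ : ∃ X : ℝ, ∀ i j : P, i ≠ j → ∏ τ : Equiv.Perm P, |t (τ j) - t (τ i)| = X := by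
    by_cases hex : ∃ i j : P, i ≠ j
    · obtain ⟨i, j, hij⟩ := hex
      refine ⟨∏ τ : Equiv.Perm P, |t (τ j) - t (τ i)|, fun i' j' hij' => ?_⟩
      set ρ : Equiv.Perm P := Equiv.swap (Equiv.swap i i' j) j' * Equiv.swap i i' with hρ
      have h1 : ρ i = i' := by
        rw [hρ, Equiv.Perm.mul_apply, Equiv.swap_apply_left]
        refine Equiv.swap_apply_of_ne_of_ne ?_ hij'
        intro h
        apply hij
        have := congrArg (Equiv.swap i i') h
        simpa using this
      have h2 : ρ j = j' := by
        rw [hρ, Equiv.Perm.mul_apply, Equiv.swap_apply_left]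
      rw [← Equiv.prod_comp (Equiv.mulRight ρ) fun τ : Equiv.Perm P => |t (τ j) - t (τ i)|]
      simp [h1, h2]
    · push Not at hex
      exact ⟨1, fun i j hij => absurd (hex i j) hij⟩
  obtain ⟨ρ, hρ⟩ := Finite.exists_max fun ρ : Equiv.Perm P =>
    |(Matrix.vandermonde fun l => t (ρ (i₀ l))).det|
  set v := |(Matrix.vandermonde fun l => t (ρ (i₀ l))).det| with hv
  obtain ⟨c, hc⟩ := Finite.exists_min fun c : P => ∏ i ∈ Finset.univ.erase c, |t i - t c|
  refine ⟨c, fun l => ρ (i₀ l), ρ.injective.comp i₀.injective, ?_⟩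
  set μ := ∏ i ∈ Finset.univ.erase c, |t i - t c| with hμ
  set N := Fintype.card (Equiv.Perm P) with hN
  have hXv : X ^ h ≤ v ^ N := by
    calc X ^ h = ∏ τ : Equiv.Perm P, |(Matrix.vandermonde fun l => t (τ (i₀ l))).det| := by
          simp_rw [Matrix.det_vandermonde, Finset.abs_prod]
          rw [Finset.prod_comm]
          have : ∀ i : Fin n, ∏ τ : Equiv.Perm P, ∏ j ∈ Finset.Ioi i, |t (τ (i₀ j)) - t (τ (i₀ i))| =
              X ^ (Finset.Ioi i).card := by
            intro i
            rw [Finset.prod_comm, ← Finset.prod_const]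
            refine Finset.prod_congr rfl fun j hj => hX _ _ ?_
            exact i₀.injective.ne (Finset.mem_Ioi.1 hj).ne
          rw [Finset.prod_congr rfl fun i _ => this i, Finset.prod_pow_eq_pow_sum]
          congr 1
          simp only [Fin.card_Ioi]
          rw [Fin.sum_univ_eq_sum_range (fun i => n - 1 - i), Finset.sum_range_reflect (fun i => i),
            Finset.sum_range_id]
      _ ≤ ∏ τ : Equiv.Perm P, v := Finset.prod_le_prod (fun _ _ => abs_nonneg _) fun τ _ => hρ τ
      _ = v ^ N := by simp [hN]
  have hX0 : 0 ≤ X ∨ h = 0 := by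
    by_cases hex : ∃ i j : P, i ≠ j
    · obtain ⟨i, j, hij⟩ := hex
      left; rw [← hX i j hij]; exact Finset.prod_nonneg fun _ _ => abs_nonneg _
    · right
      push Not at hex
      have : Fintype.card P ≤ 1 := Fintype.card_le_one_iff.2 hex
      omega
  have hμX : (μ ^ (h + 1)) ^ N ≤ (X ^ h) ^ (h + 1) := by
    calc (μ ^ (h + 1)) ^ N = ∏ τ : Equiv.Perm P, ∏ c' : P, μ := by simp [hP, hN]
      _ ≤ ∏ τ : Equiv.Perm P, ∏ c' : P, ∏ i ∈ Finset.univ.erase c', |t (τ i) - t (τ c')| := by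
          refine Finset.prod_le_prod (fun _ _ => Finset.prod_nonneg fun _ _ =>
            Finset.prod_nonneg fun _ _ => abs_nonneg _) fun τ _ => ?_
          refine Finset.prod_le_prod (fun _ _ => Finset.prod_nonneg fun _ _ => abs_nonneg _) fun c' _ => ?_
          refine (hc (τ c')).trans (le_of_eq ?_)
          symm
          refine Finset.prod_bij (fun i _ => τ i) ?_ ?_ ?_ ?_
          · intro i hi; simpa using hi
          · intro i _ i' _ h; exact τ.injective h
          · intro i hi; exact ⟨τ.symm i, by simpa [Equiv.symm_apply_eq] using hi, by simp⟩
          · intro i _; rfl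
      _ = (X ^ h) ^ (h + 1) := by
          rw [Finset.prod_comm]
          have : ∀ c' : P, ∏ τ : Equiv.Perm P, ∏ i ∈ Finset.univ.erase c', |t (τ i) - t (τ c')| = X ^ h := by
            intro c'
            rw [Finset.prod_comm, Finset.prod_congr rfl fun i hi => hX c' i (Finset.ne_of_mem_erase hi).symm]
            rw [Finset.prod_const, Finset.card_erase_of_mem (Finset.mem_univ _), Finset.card_univ, hP]
            simp
          rw [Finset.prod_congr rfl fun c' _ => this c', Finset.prod_const, Finset.card_univ, hP]
  have hfin : μ ^ ((h + 1) * N) ≤ v ^ ((h + 1) * N) := by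
    rw [pow_mul]
    refine hμX.trans ?_
    rw [mul_comm, pow_mul]
    refine pow_le_pow_left₀ ?_ hXv _
    rcases hX0 with h0 | h0
    · positivity
    · rw [h0]; norm_num
  refine le_of_pow_le_pow_left₀ ?_ (abs_nonneg _) hfin
  have : 0 < N := Fintype.card_pos
  positivity

theorem Matrix.volume_abs_mulVec_add {n : Type*} [Fintype n] [DecidableEq n]
    {A : Matrix n n ℝ} (hA : A.det ≠ 0) (w : n → ℝ) (r : ℝ) :
    volume {q : n → ℝ | ∀ i, |(A.mulVec q) i + w i| ≤ r} * ‖A.det‖ₑ =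
      ENNReal.ofReal (2 * r) ^ Fintype.card n := by
  have hdet : LinearMap.det (Matrix.toLin' A) ≠ 0 := by simpa using hA
  have hset : {q : n → ℝ | ∀ i, |(A.mulVec q) i + w i| ≤ r} =
      (Matrix.toLin' A) ⁻¹' (Icc (fun i => -r - w i) (fun i => r - w i)) := by
    ext q
    simp only [mem_ofPred_eq, mem_preimage, mem_Icc, Pi.le_def, Matrix.toLin'_apply, abs_le]
    constructor
    · intro h; exact ⟨fun i => by linarith [(h i).1], fun i => by linarith [(h i).2]⟩
    · intro h i; exact ⟨by linarith [h.1 i], by linarith [h.2 i]⟩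
  rw [hset, Measure.addHaar_preimage_linearMap volume hdet, Real.volume_Icc_pi]
  rw [LinearMap.det_toLin', Real.enorm_eq_ofReal_abs, mul_right_comm, ← ENNReal.ofReal_mul (abs_nonneg _),
    ← abs_mul, inv_mul_cancel₀ hA]
  simp only [abs_one, ENNReal.ofReal_one, one_mul]
  rw [Finset.prod_congr rfl fun i _ => by rw [show r - w i - (-r - w i) = 2 * r by ring]]
  simp

theorem Matrix.volume_abs_mulVec_add_le {n : Type*} [Fintype n] [DecidableEq n]
    (A : Matrix n n ℝ) (w : n → ℝ) (r : ℝ) :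
    volume {q : n → ℝ | ∀ i, |(A.mulVec q) i + w i| ≤ r} * ‖A.det‖ₑ ≤
      ENNReal.ofReal (2 * r) ^ Fintype.card n := by
  by_cases hA : A.det = 0
  · simp [hA]
  · exact (volume_abs_mulVec_add hA w r).le

theorem le_lintegral_enorm_det_vandermonde {X : Type*} [MeasurableSpace X] (ρ : Measure X)
    [SigmaFinite ρ] {φ : X → ℝ} (hφ : Measurable φ) {A δ : ℝ≥0∞} {N : ℕ}
    (h : ∀ F : Finset ℝ, F.card ≤ N → A ≤ ρ {x | ∀ t ∈ F, δ ≤ ‖t - φ x‖ₑ}) (r : ℕ) (hr : r ≤ N) :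
    A ^ r * δ ^ (∑ i ∈ Finset.range r, i) ≤
      ∫⁻ x : Fin r → X, ‖(Matrix.vandermonde fun i => φ (x i)).det‖ₑ ∂Measure.pi fun _ => ρ := by
  classical
  induction r with
  | zero => simp
  | succ r ih =>
    have hmeas : ∀ r : ℕ, Measurable fun x : Fin r → X => ‖(Matrix.vandermonde fun i => φ (x i)).det‖ₑ := by
      intro r
      simp_rw [Matrix.det_vandermonde]
      fun_prop
    have hmp := (measurePreserving_piFinSuccAbove (fun _ : Fin (r + 1) => ρ) 0).symm
    rw [← hmp.lintegral_comp (hmeas _)]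
    rw [lintegral_prod_symm _ (by exact ((hmeas (r + 1)).comp hmp.measurable).aemeasurable)]
    have hdet : ∀ (x₀ : X) (y : Fin r → X),
        ‖(Matrix.vandermonde fun i => φ (((MeasurableEquiv.piFinSuccAbove (fun _ : Fin (r+1) => X) 0).symm (x₀, y)) i)).det‖ₑ
        = (∏ j, ‖φ (y j) - φ x₀‖ₑ) * ‖(Matrix.vandermonde fun i => φ (y i)).det‖ₑ := by
      intro x₀ y
      have h0 : ((MeasurableEquiv.piFinSuccAbove (fun _ : Fin (r+1) => X) 0).symm (x₀, y)) =
        Fin.cons x₀ y := by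
        ext i; simp [MeasurableEquiv.piFinSuccAbove, Fin.insertNthEquiv]
      rw [h0, Matrix.det_vandermonde, Matrix.det_vandermonde, Fin.prod_univ_succ, Fin.prod_Ioi_zero]
      simp only [Fin.prod_Ioi_succ, Fin.cons_zero, Fin.cons_succ]
      rw [enorm_mul]
      congr 1
      simp only [← ofReal_norm, norm_prod]
      rw [ENNReal.ofReal_prod_of_nonneg fun _ _ => norm_nonneg _]
    simp only [hdet]
    calc A ^ (r + 1) * δ ^ (∑ i ∈ Finset.range (r + 1), i)
        = (δ ^ r * A) * (A ^ r * δ ^ (∑ i ∈ Finset.range r, i)) := by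
          rw [Finset.sum_range_succ, pow_add, pow_succ]; ring
      _ ≤ (δ ^ r * A) * ∫⁻ x : Fin r → X, ‖(Matrix.vandermonde fun i => φ (x i)).det‖ₑ ∂Measure.pi fun _ => ρ := by
          gcongr; exact ih (by omega)
      _ = ∫⁻ x : Fin r → X, (δ ^ r * A) * ‖(Matrix.vandermonde fun i => φ (x i)).det‖ₑ ∂Measure.pi fun _ => ρ := by
          rw [lintegral_const_mul _ (hmeas _)]
      _ ≤ _ := by
          refine lintegral_mono fun y => ?_
          rw [lintegral_mul_const _ (by fun_prop)]
          gcongr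
          have h1 := h (Finset.univ.image fun j => φ (y j)) (Finset.card_image_le.trans (by simp; omega))
          calc δ ^ r * A ≤ δ ^ r * ρ {x | δ ^ r ≤ ∏ j, ‖φ (y j) - φ x‖ₑ} := by
                gcongr
                refine h1.trans (measure_mono fun x hx => ?_)
                simp only [mem_ofPred_eq, Finset.mem_image, Finset.mem_univ, true_and,
                  forall_exists_index, forall_apply_eq_imp_iff] at hx ⊢
                calc δ ^ r = ∏ j : Fin r, δ := by simp
                  _ ≤ _ := Finset.prod_le_prod' fun j _ => hx j
            _ ≤ _ := mul_meas_ge_le_lintegral₀ (by fun_prop) _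

theorem Polynomial.mul_volume_le_of_abs_derivative {d : ℕ} (p : Polynomial ℝ) (hp : p.natDegree ≤ d)
    (L : ℝ) :
    ENNReal.ofReal L * volume {t : ℝ | |p.eval t| ≤ 1 ∧ L < |p.derivative.eval t|} ≤ 2 * d := by
  have hfd : ∀ t, (fderiv ℝ (fun t => p.eval t) t).det = p.derivative.eval t := by
    intro t
    rw [((p.hasDerivAt t).hasFDerivAt).fderiv]
    simp
  have hmain := lintegral_abs_det_fderiv_mul_comp_le (volume : Measure ℝ) (f := fun t => p.eval t)
    (by exact_mod_cast p.contDiff_aeval 1) d ?_ ((Icc (-1:ℝ) 1).indicator 1) (measurable_one.indicator measurableSet_Icc)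
  · rw [lintegral_indicator_one measurableSet_Icc, Real.volume_Icc] at hmain
    have h2 : (d:ℝ≥0∞) * ENNReal.ofReal (1 - -1) = 2 * d := by
      norm_num; ring
    rw [h2] at hmain
    refine le_trans ?_ hmain
    simp only [hfd]
    have hms : MeasurableSet {t : ℝ | |p.eval t| ≤ 1 ∧ L < |p.derivative.eval t|} := by
      have c1 : Continuous fun t => |p.eval t| := p.continuous.abs
      have c2 : Continuous fun t => |p.derivative.eval t| := p.derivative.continuous.abs
      exact (measurableSet_le c1.measurable measurable_const).inter
        (measurableSet_lt measurable_const c2.measurable)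

    rw [← setLIntegral_const]
    refine (setLIntegral_mono' hms (fun t ht => ?_)).trans (setLIntegral_le_lintegral _ _)
    have : p.eval t ∈ Icc (-1:ℝ) 1 := by rw [mem_Icc, ← abs_le]; exact ht.1
    rw [indicator_of_mem this]
    simp only [Pi.one_apply, mul_one]
    exact ENNReal.ofReal_le_ofReal ht.2.le
  · have : ∀ᵐ z : ℝ, z ≠ p.coeff 0 := by simp [ae_iff]
    filter_upwards [this] with z hz
    have hne : p - Polynomial.C z ≠ 0 := by
      intro h
      apply hz
      have := congrArg (fun q => q.coeff 0) h
      simp at this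
      linarith
    refine ⟨(p - Polynomial.C z).roots.toFinset, ?_, fun y hy => ?_⟩
    · refine (Multiset.toFinset_card_le _).trans ((Polynomial.card_roots' _).trans ?_)
      rwa [Polynomial.natDegree_sub_C]
    · rw [Multiset.mem_toFinset, Polynomial.mem_roots hne]
      simpa [sub_eq_zero] using hy

/-- Index type of the monomials of total degree less than `n` in two variables. -/
def Tri : ℕ → Type
  | 0 => Empty
  | n + 1 => Fin (n + 1) ⊕ Tri n

instance Tri.instFintype : ∀ n, Fintype (Tri n)
  | 0 => inferInstanceAs (Fintype Empty)
  | n + 1 => @instFintypeSum (Fin (n + 1)) (Tri n) _ (Tri.instFintype n)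

instance Tri.instDecidableEq : ∀ n, DecidableEq (Tri n)
  | 0 => inferInstanceAs (DecidableEq Empty)
  | n + 1 => @instDecidableEqSum (Fin (n + 1)) (Tri n) _ (Tri.instDecidableEq n)

/-- The pair of exponents of a monomial. -/
def Tri.exp : ∀ {n}, Tri n → ℕ × ℕ
  | _ + 1, .inl i => (i, 0)
  | _ + 1, .inr t => ((Tri.exp t).1, (Tri.exp t).2 + 1)

/-- The monomial `u ^ i * v ^ j / j!`. -/
def Tri.mono {n : ℕ} (t : Tri n) (u v : ℝ) : ℝ :=
  u ^ t.exp.1 * (v ^ t.exp.2 / (t.exp.2.factorial : ℝ))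

/-- The polynomial with coefficient vector `c` in the basis `Tri.mono`. -/
def triEval {n : ℕ} (c : Tri n → ℝ) (u v : ℝ) : ℝ := ∑ t, c t * t.mono u v

/-- `triEval c u` as a polynomial in the second variable. -/
def triPoly {n : ℕ} (c : Tri n → ℝ) (u : ℝ) : Polynomial ℝ :=
  ∑ t : Tri n, Polynomial.C (c t * u ^ t.exp.1 / (t.exp.2.factorial : ℝ)) * Polynomial.X ^ t.exp.2

theorem Tri.card_succ (n : ℕ) : Fintype.card (Tri (n + 1)) = n + 1 + Fintype.card (Tri n) := by
  have : Fintype.card (Tri (n + 1)) = Fintype.card (Fin (n + 1) ⊕ Tri n) := rfl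
  rw [this, Fintype.card_sum, Fintype.card_fin]

theorem Tri.card_eq_sum (n : ℕ) : Fintype.card (Tri n) = ∑ i ∈ Finset.range (n + 1), i := by
  induction n with
  | zero => rfl
  | succ n ih => rw [Tri.card_succ, ih, Finset.sum_range_succ _ (n + 1), add_comm]

theorem Tri.exp_add_lt : ∀ {n : ℕ} (t : Tri n), t.exp.1 + t.exp.2 < n
  | _ + 1, .inl i => i.2
  | _ + 1, .inr t => by
    have := Tri.exp_add_lt t
    simp only [Tri.exp]; omega

theorem Tri.sum_succ {n : ℕ} {α : Type*} [AddCommMonoid α] (f : Tri (n + 1) → α) :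
    ∑ t, f t = ∑ i : Fin (n + 1), f (.inl i) + ∑ t : Tri n, f (.inr t) :=
  Fintype.sum_sum_type f

theorem eval_triPoly {n : ℕ} (c : Tri n → ℝ) (u v : ℝ) : (triPoly c u).eval v = triEval c u v := by
  simp only [triPoly, triEval, Tri.mono, Polynomial.eval_finsetSum, Polynomial.eval_mul,
    Polynomial.eval_C, Polynomial.eval_pow, Polynomial.eval_X]
  exact Finset.sum_congr rfl fun t _ => by ring

theorem natDegree_triPoly_le {n : ℕ} (c : Tri n → ℝ) (u : ℝ) : (triPoly c u).natDegree ≤ n := by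
  refine Polynomial.natDegree_sum_le_of_forall_le _ _ fun t _ => ?_
  refine (Polynomial.natDegree_C_mul_X_pow_le _ _).trans ?_
  have := t.exp_add_lt
  omega

theorem derivative_triPoly {n : ℕ} (c : Tri (n + 1) → ℝ) (u : ℝ) :
    (triPoly c u).derivative = triPoly (fun t : Tri n => c (.inr t)) u := by
  unfold triPoly
  rw [Tri.sum_succ, Polynomial.derivative_add, Polynomial.derivative_sum, Polynomial.derivative_sum,
    Finset.sum_eq_zero, zero_add]
  · refine Finset.sum_congr rfl fun t _ => ?_
    rw [Polynomial.derivative_C_mul_X_pow]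
    have h1 : Tri.exp (n := n + 1) (.inr t) = (t.exp.1, t.exp.2 + 1) := rfl
    rw [h1]
    simp only [Nat.add_sub_cancel]
    congr 2
    rw [Nat.factorial_succ]
    push_cast
    have : (t.exp.2.factorial : ℝ) ≠ 0 := by positivity
    have h2 : ((t.exp.2 : ℝ) + 1) ≠ 0 := by positivity
    field_simp
  · intro i _
    rw [Polynomial.derivative_C_mul_X_pow]
    have h1 : Tri.exp (n := n + 1) (.inl i) = ((i : ℕ), 0) := rfl
    rw [h1]; simp

/-- Join the coefficients of the monomials `u ^ i` with the remaining ones. -/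
def Tri.cons {n : ℕ} (q : Fin (n + 1) → ℝ) (c : Tri n → ℝ) : Tri (n + 1) → ℝ := Sum.elim q c

@[simp]
theorem Tri.cons_inr {n : ℕ} (q : Fin (n + 1) → ℝ) (c : Tri n → ℝ) (t : Tri n) :
    Tri.cons q c (.inr t) = c t := rfl

theorem triEval_cons {n : ℕ} (q : Fin (n + 1) → ℝ) (c : Tri n → ℝ) (u v : ℝ) :
    triEval (Tri.cons q c) u v =
      ∑ i, q i * u ^ (i : ℕ) + ∑ t : Tri n, c t * Tri.mono (n := n + 1) (.inr t) u v := by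
  unfold triEval Tri.cons
  rw [Tri.sum_succ]
  congr 1
  refine Finset.sum_congr rfl fun i _ => ?_
  have h1 : Tri.mono (n := n + 1) (.inl i) u v = u ^ (i : ℕ) := by
    simp [Tri.mono, Tri.exp]
  rw [h1]; rfl

@[fun_prop]
theorem Tri.continuous_mono {n : ℕ} (t : Tri n) : Continuous fun x : ℝ × ℝ => t.mono x.1 x.2 := by
  unfold Tri.mono; fun_prop

theorem continuous_triEval {n : ℕ} :
    Continuous fun x : (Tri n → ℝ) × (ℝ × ℝ) => triEval x.1 x.2.1 x.2.2 := by
  unfold triEval Tri.mono; fun_prop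

theorem triEval_smul {n : ℕ} (r : ℝ) (c : Tri n → ℝ) (u v : ℝ) :
    triEval (r • c) u v = r * triEval c u v := by
  simp only [triEval, Finset.mul_sum, Pi.smul_apply, smul_eq_mul, mul_assoc]

/-- The part of the unit square where a polynomial is at most one in modulus. -/
def triSet {n : ℕ} (c : Tri n → ℝ) : Set (ℝ × ℝ) :=
  {x | x ∈ Icc (0 : ℝ × ℝ) 1 ∧ |triEval c x.1 x.2| ≤ 1}

theorem isClosed_triSet_prod (n : ℕ) :
    IsClosed {y : (Tri n → ℝ) × (ℝ × ℝ) | y.2 ∈ triSet y.1} := by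
  unfold triSet
  have := (continuous_triEval (n := n)).abs
  exact (isClosed_Icc.preimage continuous_snd).inter (isClosed_le this continuous_const)

theorem measurable_volume_triSet (n : ℕ) : Measurable fun c : Tri n → ℝ => volume (triSet c) :=
  measurable_measure_prodMk_left (isClosed_triSet_prod n).measurableSet

theorem measurableSet_triSet {n : ℕ} (c : Tri n → ℝ) : MeasurableSet (triSet c) :=
  measurable_prodMk_left (isClosed_triSet_prod n).measurableSet

theorem volume_unit_square : volume (Icc (0 : ℝ × ℝ) 1) = 1 := by
  rw [show (Icc (0 : ℝ × ℝ) 1) = Icc (0:ℝ) 1 ×ˢ Icc (0:ℝ) 1 by rw [Icc_prod_Icc]; rfl,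
    Measure.volume_eq_prod, Measure.prod_prod]
  simp

theorem volume_triSet_le_one {n : ℕ} (c : Tri n → ℝ) : volume (triSet c) ≤ 1 := by
  rw [← volume_unit_square]
  exact measure_mono fun x hx => hx.1

/-- The points of the triSet where the derivative in the second variable is controlled. -/
def triGood {n : ℕ} (μ : ℝ) (c : Tri (n + 1) → ℝ) : Set (ℝ × ℝ) :=
  {x | x ∈ triSet c ∧ x ∈ triSet ((μ / (4 * (n + 1))) • fun t : Tri n => c (.inr t))}

theorem isClosed_triGood_prod (n : ℕ) (μ : ℝ) :
    IsClosed {y : (Tri (n + 1) → ℝ) × (ℝ × ℝ) | y.2 ∈ triGood μ y.1} := by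
  refine (isClosed_triSet_prod (n + 1)).inter ?_
  refine (isClosed_triSet_prod n).preimage (f := fun y : (Tri (n + 1) → ℝ) × (ℝ × ℝ) =>
    ((μ / (4 * (n + 1))) • fun t : Tri n => y.1 (.inr t), y.2)) ?_
  have h (t : Tri n) : Continuous fun y : (Tri (n + 1) → ℝ) × (ℝ × ℝ) => y.1 (.inr t) :=
    (continuous_apply (A := fun _ : Tri (n + 1) => ℝ) (.inr t)).comp continuous_fst
  exact Continuous.prodMk (continuous_pi fun t => continuous_const.mul (h t)) continuous_snd

theorem measurableSet_triGood {n : ℕ} (μ : ℝ) (c : Tri (n + 1) → ℝ) : MeasurableSet (triGood μ c) :=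
  measurable_prodMk_left (isClosed_triGood_prod n μ).measurableSet

/-- The abscissae over which `triSet c` has a slice of size at least `μ`. -/
def triBase {n : ℕ} (μ : ℝ) (c : Tri n → ℝ) : Set ℝ :=
  {u | ENNReal.ofReal μ ≤ volume {v | (u, v) ∈ triSet c}}

theorem triBase_subset {n : ℕ} {μ : ℝ} (hμ : 0 < μ) (c : Tri n → ℝ) : triBase μ c ⊆ Icc 0 1 := by
  intro u hu
  by_contra h
  have : {v | (u, v) ∈ triSet c} = ∅ := by
    ext v
    simp only [triSet, mem_ofPred_eq, mem_empty_iff_false, iff_false, not_and]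
    intro h1
    exact absurd ⟨h1.1.1, h1.2.1⟩ h
  rw [triBase, mem_ofPred_eq, this, measure_empty] at hu
  simp at hu
  linarith

theorem measurableSet_triBase_prod {n : ℕ} (μ : ℝ) :
    MeasurableSet {y : (Tri n → ℝ) × ℝ | y.2 ∈ triBase μ y.1} := by
  unfold triBase
  have h1 : MeasurableSet {y : ((Tri n → ℝ) × ℝ) × ℝ | (y.1.2, y.2) ∈ triSet y.1.1} := by
    have h2 : Continuous fun y : ((Tri n → ℝ) × ℝ) × ℝ => (y.1.1, (y.1.2, y.2)) := by fun_prop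
    exact ((isClosed_triSet_prod n).preimage h2).measurableSet
  exact measurableSet_le measurable_const (measurable_measure_prodMk_left h1)

theorem measurableSet_triBase {n : ℕ} (μ : ℝ) (c : Tri n → ℝ) : MeasurableSet (triBase μ c) :=
  measurable_prodMk_left (measurableSet_triBase_prod μ)

theorem half_le_volume_slice_triGood {n : ℕ} {μ : ℝ} (hμ : 0 < μ) (c : Tri (n + 1) → ℝ) {u : ℝ}
    (hu : u ∈ triBase μ c) : ENNReal.ofReal (μ / 2) ≤ volume {v | (u, v) ∈ triGood μ c} := by
  set D : ℝ := 4 * (n + 1) with hD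
  have hDpos : 0 < D := by positivity
  set B : Set ℝ := {v | |(triPoly c u).eval v| ≤ 1 ∧ D / μ < |(triPoly c u).derivative.eval v|} with hB
  have hBle := Polynomial.mul_volume_le_of_abs_derivative (triPoly c u) (natDegree_triPoly_le c u) (D / μ)
  rw [← hB] at hBle
  have hBμ : volume B ≤ ENNReal.ofReal (μ / 2) := by
    have h1 : ENNReal.ofReal (D / μ) ≠ 0 := by simp; positivity
    rw [← ENNReal.mul_le_mul_iff_right h1 ENNReal.ofReal_ne_top]
    refine hBle.trans (le_of_eq ?_)
    rw [← ENNReal.ofReal_mul (by positivity)]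
    have : D / μ * (μ / 2) = ((2 * (n + 1) : ℕ) : ℝ) := by
      rw [hD]; push_cast; field_simp; ring
    rw [this, ENNReal.ofReal_natCast]
    push_cast; ring
  have hcov : {v | (u, v) ∈ triSet c} ⊆ {v | (u, v) ∈ triGood μ c} ∪ B := by
    intro v hv
    by_cases h : v ∈ B
    · exact Or.inr h
    · left
      refine ⟨hv, hv.1, ?_⟩
      simp only [hB, mem_ofPred_eq, not_and, not_lt, derivative_triPoly, eval_triPoly] at h
      have h2 := h hv.2
      simp only
      rw [triEval_smul, abs_mul, abs_of_pos (by positivity)]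
      calc μ / D * _ ≤ μ / D * (D / μ) := by gcongr
        _ = 1 := by field_simp
  have h3 : ENNReal.ofReal (μ / 2) + ENNReal.ofReal (μ / 2) ≤
      volume {v | (u, v) ∈ triGood μ c} + ENNReal.ofReal (μ / 2) := by
    rw [← ENNReal.ofReal_add (by positivity) (by positivity), add_halves]
    calc ENNReal.ofReal μ ≤ volume {v | (u, v) ∈ triSet c} := hu
      _ ≤ _ := measure_mono hcov
      _ ≤ _ := measure_union_le _ _
      _ ≤ _ := by gcongr
  exact (ENNReal.add_le_add_iff_right ENNReal.ofReal_ne_top).1 h3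

theorem mul_volume_le_volume_triGood {n : ℕ} {μ : ℝ} (hμ : 0 < μ) (c : Tri (n + 1) → ℝ) {E : Set ℝ}
    (hE : E ⊆ triBase μ c) (hEm : MeasurableSet E) :
    ENNReal.ofReal (μ / 2) * volume E ≤ volume (triGood μ c ∩ Prod.fst ⁻¹' E) := by
  rw [Measure.volume_eq_prod, Measure.prod_apply ((measurableSet_triGood μ c).inter (measurable_fst hEm)),
    ← setLIntegral_const]
  refine (setLIntegral_mono' hEm fun u hu => ?_).trans (setLIntegral_le_lintegral E _)
  refine (half_le_volume_slice_triGood hμ c (hE hu)).trans (measure_mono fun v hv => ?_)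
  exact ⟨hv, hu⟩

theorem volume_triBase_le_one {n : ℕ} {μ : ℝ} (hμ : 0 < μ) (c : Tri n → ℝ) : volume (triBase μ c) ≤ 1 := by
  refine (measure_mono (triBase_subset hμ c)).trans ?_
  simp

theorem le_lintegral_triGood_vandermonde {n : ℕ} {μ : ℝ} (hμ : 0 < μ) (c : Tri (n + 1) → ℝ) :
    (ENNReal.ofReal (μ / 2) * (volume (triBase μ c) / 2)) ^ (n + 1) *
      (volume (triBase μ c) / (4 * (n + 1))) ^ Fintype.card (Tri n) ≤
    ∫⁻ x : Fin (n + 1) → ℝ × ℝ, ‖(Matrix.vandermonde fun i => (x i).1).det‖ₑ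
      ∂Measure.pi fun _ => volume.restrict (triGood μ c) := by
  set ν := volume (triBase μ c) with hν
  have hν1 : ν ≤ 1 := volume_triBase_le_one hμ c
  have hνtop : ν ≠ ⊤ := (hν1.trans_lt ENNReal.one_lt_top).ne
  have hn : (4 * ((n:ℝ≥0∞) + 1)) ≠ 0 := by simp
  have hn' : (4 * ((n:ℝ≥0∞) + 1)) ≠ ⊤ := by finiteness
  rw [Tri.card_eq_sum]
  refine le_lintegral_enorm_det_vandermonde _ (φ := Prod.fst) measurable_fst (N := n + 1) ?_ _ le_rfl
  intro F hF
  set δ := ν / (4 * (n + 1)) with hδ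
  set E' := triBase μ c \ ⋃ t ∈ F, Metric.eball t δ with hE'
  have hE'm : MeasurableSet E' :=
    (measurableSet_triBase μ c).diff (Finset.measurableSet_biUnion _ fun t _ => Metric.isOpen_eball.measurableSet)
  have hbad : volume (⋃ t ∈ F, Metric.eball t δ) ≤ ν / 2 := by
    refine (measure_biUnion_finset_le _ _).trans ?_
    simp only [Real.volume_eball]
    rw [Finset.sum_const, nsmul_eq_mul]
    calc (F.card : ℝ≥0∞) * (2 * δ) ≤ ((n + 1 : ℕ) : ℝ≥0∞) * (2 * δ) := by gcongr
      _ = ν / 2 := by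
        rw [hδ, ENNReal.div_eq_inv_mul, ENNReal.div_eq_inv_mul, ENNReal.mul_inv (by simp) (by simp)]
        push_cast
        have h1 : ((n:ℝ≥0∞) + 1) * ((n:ℝ≥0∞) + 1)⁻¹ = 1 := ENNReal.mul_inv_cancel (by simp) (by finiteness)
        have h2 : (2:ℝ≥0∞) * 4⁻¹ = 2⁻¹ := by
          rw [show (4:ℝ≥0∞) = 2 * 2 by norm_num, ENNReal.mul_inv (by simp) (by simp), ← mul_assoc,
            ENNReal.mul_inv_cancel (by simp) (by simp), one_mul]
        calc _ = ((n:ℝ≥0∞) + 1) * ((n:ℝ≥0∞) + 1)⁻¹ * (2 * 4⁻¹) * ν := by ring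
          _ = _ := by rw [h1, h2, one_mul]
  have hE'vol : ν / 2 ≤ volume E' := by
    have h1 : ν / 2 + ν / 2 ≤ volume E' + ν / 2 := by
      rw [ENNReal.add_halves]
      calc ν ≤ volume (E' ∪ ⋃ t ∈ F, Metric.eball t δ) := measure_mono (by rw [hE', sdiff_union_self]; exact subset_union_left)
        _ ≤ _ := measure_union_le _ _
        _ ≤ _ := by gcongr
    exact (ENNReal.add_le_add_iff_right (by finiteness)).1 h1
  calc _ ≤ ENNReal.ofReal (μ / 2) * volume E' := by gcongr
    _ ≤ volume (triGood μ c ∩ Prod.fst ⁻¹' E') := mul_volume_le_volume_triGood hμ c sdiff_subset hE'm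
    _ ≤ _ := by
      rw [Measure.restrict_apply' (measurableSet_triGood μ c), inter_comm]
      refine measure_mono (inter_subset_inter_left _ fun x hx t ht => ?_)
      have := hx.2
      simp only [mem_iUnion, not_exists] at this
      have h3 := this t ht
      rw [Metric.mem_eball, not_lt, edist_comm, edist_eq_enorm_sub] at h3
      exact h3

theorem volume_triGood_le {n : ℕ} (μ : ℝ) (c : Tri (n + 1) → ℝ) :
    volume (triGood μ c) ≤ volume (triSet ((μ / (4 * (n + 1))) • fun t : Tri n => c (.inr t))) :=
  measure_mono fun _ hx => hx.2

theorem ENNReal.exists_tsum_rpow_le {θ δ : ℝ} (hθ : 0 < θ) (hδ : 0 < δ) :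
    ∃ C : ℝ≥0∞, C ≠ ⊤ ∧ ∀ a : ℕ → ℝ≥0∞,
      (∑' j, a j) ^ θ ≤ C * ∑' j : ℕ, (2 : ℝ≥0∞) ^ ((j : ℝ) * δ) * a j ^ θ := by
  set w : ℕ → ℝ≥0∞ := fun j => ((2 : ℝ≥0∞) ^ (-(δ / θ))) ^ j with hw
  have hr : (2 : ℝ≥0∞) ^ (-(δ / θ)) < 1 :=
    ENNReal.rpow_lt_one_of_one_lt_of_neg (by norm_num) (by simp; positivity)
  have hW : ∑' j, w j ≠ ⊤ := by
    rw [hw, ENNReal.tsum_geometric]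
    exact ENNReal.inv_ne_top.2 (tsub_pos_of_lt hr).ne'
  refine ⟨(∑' j, w j) ^ θ, ENNReal.rpow_ne_top_of_nonneg hθ.le hW, fun a => ?_⟩
  set b : ℕ → ℝ≥0∞ := fun j => (2 : ℝ≥0∞) ^ ((j : ℝ) * (δ / θ)) * a j with hb
  have hab (j : ℕ) : a j = w j * b j := by
    simp only [hw, hb]
    rw [← ENNReal.rpow_natCast, ← ENNReal.rpow_mul, ← mul_assoc, ← ENNReal.rpow_add _ _ (by simp) (by simp),
      show -(δ / θ) * (j : ℝ) + j * (δ / θ) = 0 by ring]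
    simp
  have hbθ (j : ℕ) : b j ^ θ = (2 : ℝ≥0∞) ^ ((j : ℝ) * δ) * a j ^ θ := by
    simp only [hb]
    rw [ENNReal.mul_rpow_of_nonneg _ _ hθ.le, ← ENNReal.rpow_mul]
    congr 2
    field_simp
  have h1 (j : ℕ) : b j ≤ (∑' j, b j ^ θ) ^ (1 / θ) := by
    rw [one_div, ENNReal.le_rpow_inv_iff hθ]
    exact ENNReal.le_tsum (f := fun j => b j ^ θ) j
  calc (∑' j, a j) ^ θ ≤ (∑' j, w j * (∑' j, b j ^ θ) ^ (1 / θ)) ^ θ := by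
        gcongr with j
        rw [hab j]
        gcongr
        exact h1 j
    _ = (∑' j, w j) ^ θ * ∑' j, b j ^ θ := by
        rw [ENNReal.tsum_mul_right, ENNReal.mul_rpow_of_nonneg _ _ hθ.le, ← ENNReal.rpow_mul,
          one_div_mul_cancel hθ.ne', ENNReal.rpow_one]
    _ = _ := by simp only [hbθ]

theorem lintegral_pi_comp_smul {ι : Type*} [Fintype ι] {r : ℝ} (hr : r ≠ 0) {f : (ι → ℝ) → ℝ≥0∞}
    (hf : Measurable f) :
    ∫⁻ x, f (r • x) = ENNReal.ofReal |(r ^ Fintype.card ι)⁻¹| * ∫⁻ x, f x := by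
  have h := Measure.map_addHaar_smul (volume : Measure (ι → ℝ)) hr
  rw [← lintegral_map hf (by fun_prop), h, lintegral_smul_measure, Module.finrank_fintype_fun_eq_card]
  rfl

theorem lintegral_triGood_vandermonde_le {n : ℕ} (μ : ℝ) (c : Tri n → ℝ) :
    ∫⁻ q : Fin (n + 1) → ℝ, (∫⁻ x : Fin (n + 1) → ℝ × ℝ, ‖(Matrix.vandermonde fun i => (x i).1).det‖ₑ
      ∂Measure.pi fun _ => volume.restrict (triGood μ (Tri.cons q c))) ≤
    2 ^ (n + 1) * volume (triSet ((μ / (4 * (n + 1))) • c)) ^ (n + 1) := by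
  set T := triSet ((μ / (4 * (n + 1))) • c) with hT
  have hTm : MeasurableSet T := measurableSet_triSet _
  set V : (Fin (n + 1) → ℝ × ℝ) → ℝ≥0∞ := fun x => ‖(Matrix.vandermonde fun i => (x i).1).det‖ₑ with hV
  have hVm : Measurable V := by
    have : Continuous fun x : Fin (n + 1) → ℝ × ℝ => (Matrix.vandermonde fun i => (x i).1).det := by
      refine Continuous.matrix_det ?_
      refine continuous_matrix fun i j => ?_
      simp only [Matrix.vandermonde_apply]
      fun_prop
    exact this.measurable.enorm
  set w : (Fin (n + 1) → ℝ × ℝ) → Fin (n + 1) → ℝ :=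
    fun x l => ∑ t : Tri n, c t * Tri.mono (n := n + 1) (.inr t) (x l).1 (x l).2 with hw
  set Z : Set ((Fin (n + 1) → ℝ) × (Fin (n + 1) → ℝ × ℝ)) :=
    {y | ∀ l, |((Matrix.vandermonde fun i => (y.2 i).1).mulVec y.1) l + w y.2 l| ≤ 1} with hZ
  have hev (q : Fin (n + 1) → ℝ) (x : Fin (n + 1) → ℝ × ℝ) (l) :
      triEval (Tri.cons q c) (x l).1 (x l).2 =
        ((Matrix.vandermonde fun i => (x i).1).mulVec q) l + w x l := by
    rw [triEval_cons, hw, Matrix.mulVec, dotProduct]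
    congr 1
    exact Finset.sum_congr rfl fun i _ => by rw [Matrix.vandermonde_apply, mul_comm]
  have hZm : MeasurableSet Z := by
    rw [hZ]
    simp only [ofPred_forall]
    refine MeasurableSet.iInter fun l => (isClosed_le ?_ continuous_const).measurableSet
    refine (Continuous.add ?_ ?_).abs
    · simp only [Matrix.mulVec, dotProduct, Matrix.vandermonde_apply]
      fun_prop
    · simp only [hw, Tri.mono]
      fun_prop
  have hsub (q : Fin (n + 1) → ℝ) (x : Fin (n + 1) → ℝ × ℝ)
      (hx : x ∈ univ.pi fun _ : Fin (n + 1) => triGood μ (Tri.cons q c)) :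
      x ∈ (univ.pi fun _ : Fin (n + 1) => T) ∧ (q, x) ∈ Z := by
    refine ⟨fun l hl => ?_, fun l => ?_⟩
    · have := (hx l hl).2
      simpa only [hT, Tri.cons_inr] using this
    · have := (hx l (mem_univ l)).1.2
      rwa [hev] at this
  have hPT : MeasurableSet (univ.pi fun _ : Fin (n + 1) => T) := MeasurableSet.univ_pi fun _ => hTm
  have h1 (q : Fin (n + 1) → ℝ) : (∫⁻ x, V x ∂Measure.pi fun _ : Fin (n + 1) =>
      (volume : Measure (ℝ × ℝ)).restrict (triGood μ (Tri.cons q c))) ≤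
      ∫⁻ x in univ.pi fun _ : Fin (n + 1) => T, V x * Z.indicator 1 (q, x) := by
    rw [← Measure.restrict_pi_pi, ← volume_pi, ← lintegral_indicator
      (MeasurableSet.univ_pi fun _ => measurableSet_triGood _ _), ← lintegral_indicator hPT]
    refine lintegral_mono fun x => ?_
    refine indicator_le (fun x hx => ?_) x
    rw [indicator_of_mem (hsub q x hx).1, indicator_of_mem (hsub q x hx).2]
    simp
  refine (lintegral_mono h1).trans ?_
  rw [lintegral_lintegral_swap]
  · calc _ ≤ ∫⁻ x in univ.pi fun _ : Fin (n + 1) => T, 2 ^ (n + 1) := by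
          refine lintegral_mono fun x => ?_
          have hm : MeasurableSet {q : Fin (n + 1) → ℝ | (q, x) ∈ Z} := measurable_prodMk_right hZm
          have := Matrix.volume_abs_mulVec_add_le (Matrix.vandermonde fun i => (x i).1) (w x) 1
          rw [Fintype.card_fin, mul_one, ENNReal.ofReal_ofNat] at this
          refine le_trans (le_of_eq ?_) this
          rw [lintegral_const_mul' _ _ (by simp [hV]), mul_comm]
          congr 1
          exact lintegral_indicator_one hm
      _ = _ := by
        rw [setLIntegral_const, volume_pi, Measure.pi_pi]
        simp
  · refine (((hVm.comp measurable_snd).mul ?_)).aemeasurable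
    exact (measurable_one.indicator hZm)

theorem lintegral_prod_le_lintegral_lintegral_swap {α β : Type*} [MeasurableSpace α] [MeasurableSpace β]
    {μ : Measure α} {ν : Measure β} [SFinite μ] [SFinite ν] (f : α × β → ℝ≥0∞) :
    ∫⁻ z, f z ∂μ.prod ν ≤ ∫⁻ y, ∫⁻ x, f (x, y) ∂μ ∂ν := by
  obtain ⟨g, hg, hgf, h⟩ := exists_measurable_le_lintegral_eq (μ.prod ν) f
  rw [h, lintegral_prod_symm' _ hg]
  exact lintegral_mono fun y => lintegral_mono fun x => hgf (x, y)

theorem lintegral_tri_succ_le {n : ℕ} (f : (Tri (n + 1) → ℝ) → ℝ≥0∞) :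
    ∫⁻ c, f c ≤ ∫⁻ c : Tri n → ℝ, ∫⁻ q : Fin (n + 1) → ℝ, f (Tri.cons q c) := by
  have h := (volume_measurePreserving_sumPiEquivProdPi_symm fun _ : Fin (n + 1) ⊕ Tri n => ℝ).lintegral_comp_emb
    (MeasurableEquiv.measurableEmbedding _) f
  refine h.symm.le.trans ?_
  exact lintegral_prod_le_lintegral_lintegral_swap _

theorem exists_lintegral_triBase_rpow_le {n : ℕ} {β : ℝ} (hβ : n + 1 ≤ β)
    (hK : ∫⁻ c : Tri n → ℝ, volume (triSet c) ^ β ≠ ⊤) {ε : ℝ} (hε : 0 ≤ ε) :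
    ∃ C : ℝ≥0∞, C ≠ ⊤ ∧ ∀ μ : ℝ, 0 < μ → μ ≤ 1 →
      ∫⁻ c : Tri (n + 1) → ℝ, (ENNReal.ofReal μ * volume (triBase μ c)) ^
        (β + Fintype.card (Tri n) + ε) ≤ C * ENNReal.ofReal μ ^ ε := by
  set M := Fintype.card (Tri n) with hM
  set K := ∫⁻ c : Tri n → ℝ, volume (triSet c) ^ β with hKdef
  set D : ℝ≥0∞ := 4 * (n + 1) with hD
  have hD0 : D ≠ 0 := by simp [hD]
  have hDt : D ≠ ⊤ := by rw [hD]; finiteness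
  refine ⟨4 ^ (n + 1) * D ^ M * 2 ^ (β - (n + 1)) * 2 ^ (n + 1) * D ^ M * K, ?_, fun μ hμ hμ1 => ?_⟩
  · finiteness
  have hm0 : ENNReal.ofReal μ ≠ 0 := by simpa using hμ
  set m := ENNReal.ofReal μ with hm
  have hmt : m ≠ ⊤ := ENNReal.ofReal_ne_top
  set T : (Tri n → ℝ) → ℝ≥0∞ := fun c => volume (triSet ((μ / (4 * (n + 1))) • c)) with hT
  have hTm : Measurable T := (measurable_volume_triSet n).comp (measurable_const_smul _)
  set V : (Tri (n + 1) → ℝ) → ℝ≥0∞ := fun c => ∫⁻ x : Fin (n + 1) → ℝ × ℝ,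
    ‖(Matrix.vandermonde fun i => (x i).1).det‖ₑ ∂Measure.pi fun _ => volume.restrict (triGood μ c) with hV
  have hpt (c : Tri (n + 1) → ℝ) : (m * volume (triBase μ c)) ^ (β + M + ε) ≤
      (4 ^ (n + 1) * D ^ M * 2 ^ (β - (n + 1)) * m ^ M * m ^ ε) *
        (V c * T (fun t => c (.inr t)) ^ (β - (n + 1))) := by
    set ν := volume (triBase μ c) with hν
    have hν1 : ν ≤ 1 := volume_triBase_le_one hμ c
    have hμ2 : ENNReal.ofReal (μ / 2) = m / 2 := by
      rw [ENNReal.ofReal_div_of_pos (by norm_num)]; simp [hm]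
    have h1 : (m * ν) ^ (n + 1 + M) ≤ 4 ^ (n + 1) * D ^ M * m ^ M * V c := by
      have h := le_lintegral_triGood_vandermonde hμ c
      rw [hμ2] at h
      refine le_trans (le_of_eq ?_) (mul_le_mul_right h _)
      have e2 : (2 : ℝ≥0∞) * 2⁻¹ = 1 := ENNReal.mul_inv_cancel (by simp) (by simp)
      have eD : D * D⁻¹ = 1 := ENNReal.mul_inv_cancel hD0 hDt
      calc (m * ν) ^ (n + 1 + M) = (2 * 2⁻¹ * (2 * 2⁻¹) * (m * ν)) ^ (n + 1) * (D * D⁻¹ * m * ν) ^ M := by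
            rw [e2, eD]; ring
        _ = _ := by
            rw [← hD, ← hν, ← hM, show (4 : ℝ≥0∞) = 2 * 2 by norm_num]
            simp only [div_eq_mul_inv]
            simp only [mul_pow]
            ring
    have h2 : m * ν ≤ 2 * T (fun t => c (.inr t)) := by
      have h := mul_volume_le_volume_triGood hμ c le_rfl (measurableSet_triBase μ c)
      have h' := h.trans ((measure_mono inter_subset_left).trans (volume_triGood_le μ c))
      rw [hμ2] at h'
      calc m * ν = 2 * (m / 2 * ν) := by
            rw [← mul_assoc, ENNReal.mul_div_cancel (by simp) (by simp)]
        _ ≤ _ := by gcongr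
    have h3 : (m * ν) ^ ε ≤ m ^ ε := by
      gcongr
      exact mul_le_of_le_one_right' hν1
    have hexp : β + M + ε = ((n + 1 + M : ℕ) : ℝ) + (β - (n + 1)) + ε := by push_cast; ring
    rw [hexp, ENNReal.rpow_add_of_nonneg _ _ (by have := sub_nonneg.2 hβ; positivity) hε,
      ENNReal.rpow_add_of_nonneg _ _ (by positivity) (by linarith), ENNReal.rpow_natCast]
    calc _ ≤ (4 ^ (n + 1) * D ^ M * m ^ M * V c) * (2 * T (fun t => c (.inr t))) ^ (β - (n + 1)) * m ^ ε := by
          gcongr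
      _ = _ := by
          rw [ENNReal.mul_rpow_of_nonneg _ _ (by linarith)]; ring
  refine (lintegral_mono hpt).trans ?_
  rw [lintegral_const_mul' _ _ (by finiteness)]
  have hsplit : ∫⁻ c : Tri (n + 1) → ℝ, V c * T (fun t => c (.inr t)) ^ (β - (n + 1)) ≤
      2 ^ (n + 1) * ∫⁻ c, T c ^ β := by
    refine (lintegral_tri_succ_le _).trans ?_
    rw [← lintegral_const_mul' _ _ (by finiteness)]
    refine lintegral_mono fun c => ?_
    simp only [Tri.cons_inr]
    have hTt : T c ≤ 1 := volume_triSet_le_one _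
    rw [lintegral_mul_const' _ _ (ENNReal.rpow_ne_top_of_nonneg (by linarith) (hTt.trans_lt ENNReal.one_lt_top).ne)]
    refine (mul_le_mul_left (lintegral_triGood_vandermonde_le μ c) _).trans (le_of_eq ?_)
    rw [mul_assoc]
    congr 1
    change T c ^ (n + 1) * _ = _
    rw [← ENNReal.rpow_natCast, ← ENNReal.rpow_add_of_nonneg _ _ (by positivity) (by linarith)]
    congr 1
    push_cast; ring
  have hscale : m ^ M * ∫⁻ c, T c ^ β = D ^ M * K := by
    have h := lintegral_pi_comp_smul (r := μ / (4 * (n + 1))) (by positivity)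
      ((measurable_volume_triSet n).pow_const β)
    change ∫⁻ c, T c ^ β = _ at h
    rw [h, ← mul_assoc]
    congr 1
    rw [hm, ← ENNReal.ofReal_pow hμ.le, ← ENNReal.ofReal_mul (by positivity), abs_of_pos (by positivity), ← hM,
      hD, show (4 * ((n : ℝ≥0∞) + 1)) = ENNReal.ofReal (4 * (n + 1)) by
        rw [ENNReal.ofReal_mul (by norm_num), ENNReal.ofReal_add (by positivity) (by norm_num)]; simp,
      ← ENNReal.ofReal_pow (by positivity)]
    congr 1
    rw [div_pow]
    field_simp
  calc _ ≤ (4 ^ (n + 1) * D ^ M * 2 ^ (β - (n + 1)) * m ^ M * m ^ ε) * (2 ^ (n + 1) * ∫⁻ c, T c ^ β) := by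
        gcongr
    _ = (4 ^ (n + 1) * D ^ M * 2 ^ (β - (n + 1)) * 2 ^ (n + 1) * m ^ ε) * (m ^ M * ∫⁻ c, T c ^ β) := by ring
    _ = _ := by rw [hscale]; ring

theorem volume_triSet_le_tsum {n : ℕ} (c : Tri n → ℝ) :
    volume (triSet c) ≤ ∑' j : ℕ, 2 * (ENNReal.ofReal ((1 / 2) ^ (j + 1)) *
      volume (triBase ((1 / 2) ^ (j + 1)) c)) := by
  rw [Measure.volume_eq_prod, Measure.prod_apply (measurableSet_triSet c)]
  have hpt (u : ℝ) : volume (Prod.mk u ⁻¹' triSet c) ≤ ∑' j : ℕ, (triBase ((1 / 2) ^ (j + 1)) c).indicator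
      (fun _ => 2 * ENNReal.ofReal ((1 / 2) ^ (j + 1))) u := by
    set s := volume (Prod.mk u ⁻¹' triSet c) with hs
    have hs1 : s ≤ 1 := by
      calc s ≤ volume (Icc (0:ℝ) 1) := measure_mono fun v hv => ⟨hv.1.1.2, hv.1.2.2⟩
        _ = 1 := by simp
    by_cases h0 : s = 0
    · simp [h0]
    have hst : s ≠ ⊤ := (hs1.trans_lt ENNReal.one_lt_top).ne
    obtain ⟨j, hj1, hj2⟩ := exists_nat_pow_near_of_lt_one (x := s.toReal) (y := (1 / 2 : ℝ))
      (ENNReal.toReal_pos h0 hst) (ENNReal.toReal_le_of_le_ofReal zero_le_one (by simpa using hs1))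
      (by norm_num) (by norm_num)
    refine le_trans ?_ (ENNReal.le_tsum j)
    rw [indicator_of_mem]
    · rw [← ENNReal.ofReal_toReal hst, show (2 : ℝ≥0∞) = ENNReal.ofReal 2 by simp,
        ← ENNReal.ofReal_mul (by norm_num)]
      refine ENNReal.ofReal_le_ofReal (hj2.trans (le_of_eq ?_))
      rw [pow_succ]; ring
    · change ENNReal.ofReal _ ≤ s
      rw [ENNReal.ofReal_le_iff_le_toReal hst]
      exact hj1.le
  refine (lintegral_mono hpt).trans (le_of_eq ?_)
  rw [lintegral_tsum fun j => (measurable_const.indicator (measurableSet_triBase _ c)).aemeasurable]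
  refine tsum_congr fun j => ?_
  rw [lintegral_indicator_const (measurableSet_triBase _ c), mul_assoc]

theorem measurable_volume_triBase (n : ℕ) (μ : ℝ) :
    Measurable fun c : Tri n → ℝ => volume (triBase μ c) :=
  measurable_measure_prodMk_left (measurableSet_triBase_prod μ)

theorem lintegral_volume_triSet_succ_rpow_ne_top {n : ℕ} {β : ℝ} (hβ : n + 1 ≤ β)
    (hK : ∫⁻ c : Tri n → ℝ, volume (triSet c) ^ β ≠ ⊤) {ε : ℝ} (hε : 0 < ε) :
    ∫⁻ c : Tri (n + 1) → ℝ, volume (triSet c) ^ (β + Fintype.card (Tri n) + ε) ≠ ⊤ := by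
  set θ : ℝ := β + Fintype.card (Tri n) + ε with hθ
  have hβ0 : 0 ≤ β := le_trans (by positivity) hβ
  have hθ0 : 0 < θ := by positivity
  obtain ⟨C, hC, hCb⟩ := exists_lintegral_triBase_rpow_le hβ hK hε.le
  obtain ⟨B, hB, hBb⟩ := ENNReal.exists_tsum_rpow_le hθ0 (half_pos hε)
  set m : ℕ → ℝ≥0∞ := fun j => ENNReal.ofReal ((1 / 2) ^ (j + 1)) with hm
  have hmε (j : ℕ) : m j ^ ε = 2 ^ (-ε) * 2 ^ (-((j : ℝ) * ε)) := by
    rw [hm, ← ENNReal.rpow_add _ _ (by simp) (by simp)]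
    simp only
    rw [ENNReal.ofReal_pow (by norm_num), one_div, ENNReal.ofReal_inv_of_pos (by norm_num)]
    rw [ENNReal.ofReal_ofNat, ← ENNReal.rpow_natCast, ← ENNReal.rpow_mul, ENNReal.inv_rpow, ← ENNReal.rpow_neg]
    congr 1; push_cast; ring
  have hmeas (j : ℕ) : Measurable fun c : Tri (n + 1) → ℝ =>
      (2 * (m j * volume (triBase ((1 / 2) ^ (j + 1)) c))) ^ θ :=
    (((measurable_volume_triBase _ _).const_mul _).const_mul _).pow_const _
  have hr : (2 : ℝ≥0∞) ^ (-(ε / 2)) < 1 :=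
    ENNReal.rpow_lt_one_of_one_lt_of_neg (by norm_num) (by simp; positivity)
  have hgeo : ∑' j : ℕ, ((2 : ℝ≥0∞) ^ (-(ε / 2))) ^ j ≠ ⊤ := by
    rw [ENNReal.tsum_geometric]
    exact ENNReal.inv_ne_top.2 (tsub_pos_of_lt hr).ne'
  refine ne_top_of_le_ne_top ?_ (lintegral_mono fun c =>
    (ENNReal.rpow_le_rpow (volume_triSet_le_tsum c) hθ0.le).trans (hBb _))
  rw [lintegral_const_mul' _ _ hB, lintegral_tsum fun j => ((hmeas j).const_mul _).aemeasurable]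
  refine ENNReal.mul_ne_top hB (ne_top_of_le_ne_top (b := ∑' j : ℕ, (2 ^ θ * C * 2 ^ (-ε)) * ((2 : ℝ≥0∞) ^ (-(ε / 2))) ^ j) ?_ ?_)
  · rw [ENNReal.tsum_mul_left]
    refine ENNReal.mul_ne_top ?_ hgeo
    finiteness
  · refine ENNReal.tsum_le_tsum fun j => ?_
    rw [lintegral_const_mul _ (hmeas j)]
    simp only [ENNReal.mul_rpow_of_nonneg 2 _ hθ0.le]
    rw [lintegral_const_mul _ (((measurable_volume_triBase _ _).const_mul _).pow_const _)]
    calc _ ≤ (2 : ℝ≥0∞) ^ ((j : ℝ) * (ε / 2)) * (2 ^ θ * (C * m j ^ ε)) := by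
          gcongr
          exact hCb _ (by positivity) (pow_le_one₀ (by norm_num) (by norm_num))
      _ = _ := by
          rw [hmε, ← ENNReal.rpow_natCast, ← ENNReal.rpow_mul,
            show -(ε / 2) * (j : ℝ) = (j : ℝ) * (ε / 2) + -(j * ε) by ring,
            ENNReal.rpow_add (x := 2) ((j : ℝ) * (ε / 2)) (-(j * ε)) (by simp) (by simp)]
          ring

/-- The critical exponent for the integrability of sublevel volumes. -/
def triCrit : ℕ → ℕ
  | 0 => 2
  | n + 1 => triCrit n + Fintype.card (Tri n)

theorem lt_triCrit (n : ℕ) : n + 1 ≤ triCrit n := by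
  induction n with
  | zero => decide
  | succ n ih =>
    cases n with
    | zero => decide
    | succ n => rw [triCrit, Tri.card_succ]; omega

theorem lintegral_volume_triSet_rpow_ne_top (n : ℕ) {θ : ℝ} (hθ : triCrit n < θ) :
    ∫⁻ c : Tri n → ℝ, volume (triSet c) ^ θ ≠ ⊤ := by
  induction n generalizing θ with
  | zero =>
    have : IsEmpty (Tri 0) := inferInstanceAs (IsEmpty Empty)
    have hθ0 : 0 ≤ θ := le_trans (by positivity) hθ.le
    refine ne_top_of_le_ne_top ?_ (lintegral_mono fun c => ENNReal.rpow_le_rpow (volume_triSet_le_one c) hθ0)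
    rw [lintegral_const, volume_pi, Measure.pi_univ]
    simp
  | succ n ih =>
    set ε := θ - triCrit (n + 1) with hε
    have hε0 : 0 < ε := sub_pos.2 hθ
    have h1 : ((n + 1 : ℕ) : ℝ) ≤ triCrit n := by exact_mod_cast lt_triCrit n
    push_cast at h1
    have := lintegral_volume_triSet_succ_rpow_ne_top (n := n) (β := triCrit n + ε / 2) (by linarith)
      (ih (by linarith)) (half_pos hε0)
    convert this using 4
    rw [triCrit] at hε
    push_cast at hε
    linarith

theorem Matrix.abs_dotProduct_le_one_of_maximal {ι M : Type*} [Fintype M] [DecidableEq M]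
    (E : ι → M → ℝ) (a : M → ι)
    (hmax : ∀ a' : M → ι, |(Matrix.of fun γ => E (a' γ)).det| ≤ |(Matrix.of fun γ => E (a γ)).det|)
    (hdet : (Matrix.of fun γ => E (a γ)).det ≠ 0) {r : ℝ} (hr : Fintype.card M * r ≤ 1) {c : M → ℝ}
    (hc : ∀ γ, |((Matrix.of fun γ => E (a γ)).mulVec c) γ| ≤ r) (i : ι) : |E i ⬝ᵥ c| ≤ 1 := by
  classical
  set A : Matrix M M ℝ := Matrix.of fun γ => E (a γ) with hA
  set l := A.transpose.cramer (E i) with hl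
  have h1 : A.det * (E i ⬝ᵥ c) = l ⬝ᵥ A.mulVec c := by
    have h := Matrix.mulVec_cramer A.transpose (E i)
    rw [Matrix.det_transpose, Matrix.mulVec_transpose] at h
    rw [Matrix.dotProduct_mulVec, h, smul_dotProduct, smul_eq_mul]
  have h2 (γ : M) : |l γ| ≤ |A.det| := by
    rw [hl, Matrix.cramer_transpose_apply]
    refine le_trans (le_of_eq ?_) (hmax (Function.update a γ i))
    congr 2
    ext γ' m
    rw [Matrix.updateRow_apply, hA]
    simp only [Matrix.of_apply, Function.update_apply]
    split_ifs <;> rfl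
  have hd : 0 < |A.det| := abs_pos.2 hdet
  have h3 : |A.det| * |E i ⬝ᵥ c| ≤ |A.det| * 1 := by
    rw [← abs_mul, h1]
    calc |l ⬝ᵥ A.mulVec c| ≤ ∑ γ, |l γ * (A.mulVec c) γ| := Finset.abs_sum_le_sum_abs _ _
      _ ≤ ∑ _γ : M, |A.det| * r := by
          refine Finset.sum_le_sum fun γ _ => ?_
          rw [abs_mul]
          exact mul_le_mul (h2 γ) (hc γ) (abs_nonneg _) hd.le
      _ = |A.det| * (Fintype.card M * r) := by simp; ring
      _ ≤ _ := by gcongr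
  exact le_of_mul_le_mul_left h3 hd

theorem Matrix.abs_det_mul_norm_le {M : Type*} [Fintype M] [DecidableEq M] (A : Matrix M M ℝ)
    (hA : ∀ i j, |A i j| ≤ 1) {r : ℝ} (hr : Fintype.card M * r ≤ 1) {c : M → ℝ}
    (hc : ∀ γ, |(A.mulVec c) γ| ≤ r) : |A.det| * ‖c‖ ≤ (Fintype.card M).factorial := by
  rw [← Real.norm_eq_abs, ← norm_smul, pi_norm_le_iff_of_nonneg (by positivity)]
  intro m
  have h1 : A.det • c = A.adjugate.mulVec (A.mulVec c) := by
    rw [Matrix.mulVec_mulVec, Matrix.adjugate_mul, Matrix.smul_mulVec, Matrix.one_mulVec]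
  have h2 (i j : M) : |A.adjugate i j| ≤ (Fintype.card M).factorial := by
    rw [Matrix.adjugate_apply]
    have := Matrix.det_le (A := A.updateRow j (Pi.single i 1)) (abv := AbsoluteValue.abs) (x := (1 : ℝ)) ?_
    · simpa using this
    · intro i' j'
      rw [Matrix.updateRow_apply, AbsoluteValue.abs_apply]
      split_ifs
      · rw [Pi.single_apply]; split_ifs <;> simp
      · exact hA _ _
  rw [h1, Real.norm_eq_abs]
  calc |∑ γ, A.adjugate m γ * (A.mulVec c) γ| ≤ ∑ γ, |A.adjugate m γ * (A.mulVec c) γ| :=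
        Finset.abs_sum_le_sum_abs _ _
    _ ≤ ∑ _γ : M, ((Fintype.card M).factorial : ℝ) * r := by
        refine Finset.sum_le_sum fun γ _ => ?_
        rw [abs_mul]
        exact mul_le_mul (h2 _ _) (hc γ) (abs_nonneg _) (by positivity)
    _ = ((Fintype.card M).factorial : ℝ) * (Fintype.card M * r) := by simp; ring
    _ ≤ _ := mul_le_of_le_one_right (by positivity) hr

theorem Matrix.exists_rpow_det_le_lintegral (M : Type*) [Fintype M] [DecidableEq M] {τ : ℝ} (hτ : τ < 1) :
    ∃ C : ℝ≥0∞, C ≠ ⊤ ∧ ∀ {ι : Type} (E : ι → M → ℝ) (a : M → ι), (∀ i m, |E i m| ≤ 1) →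
      (∀ a' : M → ι, |(Matrix.of fun γ => E (a' γ)).det| ≤ |(Matrix.of fun γ => E (a γ)).det|) →
      (Matrix.of fun γ => E (a γ)).det ≠ 0 →
      ‖(Matrix.of fun γ => E (a γ)).det‖ₑ ^ (-τ) ≤
        C * ∫⁻ c in {c : M → ℝ | ∀ i, |E i ⬝ᵥ c| ≤ 1}, ENNReal.ofReal ((1 + ‖c‖) ^ (-(1 - τ))) := by
  set m := Fintype.card M with hm
  set r : ℝ := 1 / (m + 1) with hr
  have hr0 : 0 < r := by positivity
  have hmr : m * r ≤ 1 := by rw [hr, mul_one_div, div_le_one (by positivity)]; linarith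
  set B : ℝ := 2 * m.factorial with hB
  have hB0 : 0 < B := by positivity
  set W : ℝ≥0∞ := ENNReal.ofReal (2 * r) ^ m with hW
  have hW0 : W ≠ 0 := by
    refine pow_ne_zero _ ?_
    simp [hr0]
  have hWt : W ≠ ⊤ := by finiteness
  refine ⟨ENNReal.ofReal (B ^ (1 - τ)) * W⁻¹, by finiteness, fun {ι} E a hE hmax hdet => ?_⟩
  set A : Matrix M M ℝ := Matrix.of fun γ => E (a γ) with hA
  have hd : 0 < |A.det| := abs_pos.2 hdet
  have hdm : |A.det| ≤ m.factorial := by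
    have := Matrix.det_le (A := A) (abv := AbsoluteValue.abs) (x := (1 : ℝ)) fun i j => hE _ _
    simpa using this
  set K := {c : M → ℝ | ∀ i, |E i ⬝ᵥ c| ≤ 1} with hK
  set K' := {c : M → ℝ | ∀ γ, |(A.mulVec c) γ + (0 : M → ℝ) γ| ≤ r} with hK'
  have hK'm : MeasurableSet K' := by
    rw [hK']
    simp only [ofPred_forall]
    refine MeasurableSet.iInter fun l => (isClosed_le ?_ continuous_const).measurableSet
    simp only [Matrix.mulVec, dotProduct, Pi.zero_apply]
    fun_prop
  have hsub : K' ⊆ K := fun c hc i =>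
    Matrix.abs_dotProduct_le_one_of_maximal E a hmax hdet hmr (fun γ => by simpa using hc γ) i
  have hvol := Matrix.volume_abs_mulVec_add hdet (0 : M → ℝ) r
  rw [← hK', ← hm, ← hW] at hvol
  set d : ℝ≥0∞ := ‖A.det‖ₑ with hdd
  have hd0 : d ≠ 0 := by simpa [hdd] using hdet
  have hdt : d ≠ ⊤ := enorm_ne_top
  have hw (c : M → ℝ) (hc : c ∈ K') :
      ENNReal.ofReal ((B / |A.det|) ^ (-(1 - τ))) ≤ ENNReal.ofReal ((1 + ‖c‖) ^ (-(1 - τ))) := by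
    refine ENNReal.ofReal_le_ofReal (Real.rpow_le_rpow_of_nonpos (by positivity) ?_ (by linarith))
    have := Matrix.abs_det_mul_norm_le A (fun _ _ => hE _ _) hmr (c := c) fun γ => by simpa using hc γ
    rw [le_div_iff₀ hd]
    nlinarith
  have key : ENNReal.ofReal ((B / |A.det|) ^ (-(1 - τ))) * volume K' ≤
      ∫⁻ c in K, ENNReal.ofReal ((1 + ‖c‖) ^ (-(1 - τ))) := by
    rw [← setLIntegral_const]
    exact (setLIntegral_mono' hK'm hw).trans (lintegral_mono_set hsub)
  refine le_trans (le_of_eq ?_) (mul_le_mul_right key _)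
  have e1 : ENNReal.ofReal ((B / |A.det|) ^ (-(1 - τ))) = (ENNReal.ofReal (B ^ (1 - τ)))⁻¹ * d ^ (1 - τ) := by
    rw [hdd, Real.enorm_eq_ofReal_abs, ENNReal.ofReal_rpow_of_pos hd, ← ENNReal.ofReal_inv_of_pos (by positivity),
      ← ENNReal.ofReal_mul (by positivity), Real.rpow_neg (by positivity), Real.div_rpow hB0.le hd.le, inv_div,
      div_eq_inv_mul]
  have e2 : volume K' = W * d⁻¹ := by
    rw [← hvol, mul_assoc, ENNReal.mul_inv_cancel hd0 hdt, mul_one]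
  have e3 : ENNReal.ofReal (B ^ (1 - τ)) * (ENNReal.ofReal (B ^ (1 - τ)))⁻¹ = 1 :=
    ENNReal.mul_inv_cancel (by simp; positivity) ENNReal.ofReal_ne_top
  have e4 : W⁻¹ * W = 1 := ENNReal.inv_mul_cancel hW0 hWt
  have e5 : d ^ (1 - τ) * d⁻¹ = d ^ (-τ) := by
    rw [← ENNReal.rpow_neg_one, ← ENNReal.rpow_add _ _ hd0 hdt]; congr 1; ring
  rw [e1, e2, ← e5]
  calc d ^ (1 - τ) * d⁻¹ = (ENNReal.ofReal (B ^ (1 - τ)) * (ENNReal.ofReal (B ^ (1 - τ)))⁻¹) * (W⁻¹ * W) *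
      (d ^ (1 - τ) * d⁻¹) := by rw [e3, e4]; ring
    _ = _ := by ring

/-- The determinant of the monomials of degree less than `n` at points with coordinate variables
given by `pu` and `pv`. -/
def triDetPoly {n : ℕ} {κ : Type*} (pu pv : Tri n → κ) : MvPolynomial κ ℝ :=
  (Matrix.of fun γ γ' : Tri n => MvPolynomial.X (pu γ) ^ γ'.exp.1 *
    (MvPolynomial.C ((γ'.exp.2.factorial : ℝ)⁻¹) * MvPolynomial.X (pv γ) ^ γ'.exp.2)).det

theorem eval_triDetPoly {n : ℕ} {κ : Type*} (pu pv : Tri n → κ) (y : κ → ℝ) :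
    MvPolynomial.eval y (triDetPoly pu pv) =
      (Matrix.of fun γ γ' : Tri n => γ'.mono (y (pu γ)) (y (pv γ))).det := by
  rw [triDetPoly, RingHom.map_det]
  congr 1
  ext γ γ'
  simp [Tri.mono, div_eq_inv_mul]

theorem Tri.mono_inr {n : ℕ} (t : Tri n) (u v : ℝ) :
    Tri.mono (n := n + 1) (.inr t) u v = v * (((t.exp.2 : ℝ) + 1)⁻¹ * t.mono u v) := by
  change u ^ t.exp.1 * (v ^ (t.exp.2 + 1) / ((t.exp.2 + 1).factorial : ℝ)) = _
  rw [Tri.mono, Nat.factorial_succ]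
  push_cast
  have : (t.exp.2.factorial : ℝ) ≠ 0 := by positivity
  field_simp
  ring

theorem Tri.mono_inl {n : ℕ} (i : Fin (n + 1)) (u v : ℝ) :
    Tri.mono (n := n + 1) (.inl i) u v = u ^ (i : ℕ) := by
  simp [Tri.mono, Tri.exp]

theorem triDetPoly_ne_zero_of_exists {n : ℕ} {κ : Type*} {pu pv : Tri n → κ}
    (hinj : Function.Injective (Sum.elim pu pv))
    (h : ∃ u v : Tri n → ℝ, (Matrix.of fun γ γ' : Tri n => γ'.mono (u γ) (v γ)).det ≠ 0) :
    triDetPoly pu pv ≠ 0 := by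
  obtain ⟨u, v, huv⟩ := h
  intro h0
  apply huv
  set y : κ → ℝ := Function.extend (Sum.elim pu pv) (Sum.elim u v) 0 with hy
  have h1 (γ) : y (pu γ) = u γ := hinj.extend_apply (Sum.elim u v) 0 (.inl γ)
  have h2 (γ) : y (pv γ) = v γ := hinj.extend_apply (Sum.elim u v) 0 (.inr γ)
  have := eval_triDetPoly pu pv y
  rw [h0, map_zero] at this
  simpa only [h1, h2] using this.symm

theorem exists_det_mono_ne_zero (n : ℕ) :
    ∃ u v : Tri n → ℝ, (Matrix.of fun γ γ' : Tri n => γ'.mono (u γ) (v γ)).det ≠ 0 := by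
  induction n with
  | zero =>
    have : IsEmpty (Tri 0) := inferInstanceAs (IsEmpty Empty)
    exact ⟨0, 0, by simp⟩
  | succ n ih =>
    have hP := triDetPoly_ne_zero_of_exists (pu := Sum.inl) (pv := Sum.inr) (κ := Tri n ⊕ Tri n)
      (by rw [Sum.elim_inl_inr]; exact Function.injective_id) ih
    have hQ : triDetPoly (κ := Tri n ⊕ Tri n) Sum.inl Sum.inr *
        ∏ t : Tri n, (MvPolynomial.X (Sum.inr t) : MvPolynomial (Tri n ⊕ Tri n) ℝ) ≠ 0 :=
      mul_ne_zero hP (Finset.prod_ne_zero_iff.2 fun t _ => MvPolynomial.X_ne_zero _)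
    obtain ⟨y, hy⟩ : ∃ y, MvPolynomial.eval y (triDetPoly (κ := Tri n ⊕ Tri n) Sum.inl Sum.inr *
        ∏ t : Tri n, (MvPolynomial.X (Sum.inr t) : MvPolynomial (Tri n ⊕ Tri n) ℝ)) ≠ 0 := by
      by_contra! h
      exact hQ (MvPolynomial.funext fun y => by rw [h y, map_zero])
    rw [map_mul, eval_triDetPoly, map_prod] at hy
    simp only [MvPolynomial.eval_X] at hy
    obtain ⟨hy1, hy2⟩ := mul_ne_zero_iff.1 hy
    refine ⟨Sum.elim (fun i : Fin (n + 1) => (i : ℝ)) (fun t => y (.inl t)),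
      Sum.elim (fun _ : Fin (n + 1) => 0) (fun t => y (.inr t)), ?_⟩
    have hmat : (Matrix.of fun γ γ' : Tri (n + 1) =>
        γ'.mono (Sum.elim (fun i : Fin (n + 1) => (i : ℝ)) (fun t => y (.inl t)) γ)
          (Sum.elim (fun _ : Fin (n + 1) => 0) (fun t => y (.inr t)) γ)) =
        (Matrix.fromBlocks (Matrix.vandermonde fun i : Fin (n + 1) => (i : ℝ)) 0
          (Matrix.of fun (t : Tri n) (i : Fin (n + 1)) => y (.inl t) ^ (i : ℕ))
          (Matrix.of fun t t' : Tri n => y (.inr t) *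
            (Matrix.of fun t t' : Tri n => ((t'.exp.2 : ℝ) + 1)⁻¹ *
              (Matrix.of fun t t' : Tri n => t'.mono (y (.inl t)) (y (.inr t))) t t') t t') :
          Matrix (Fin (n + 1) ⊕ Tri n) (Fin (n + 1) ⊕ Tri n) ℝ) := by
      ext γ γ'
      rcases γ with i | t <;> rcases γ' with i' | t'
      · exact Tri.mono_inl i' _ _
      · exact (Tri.mono_inr t' _ _).trans (zero_mul _)
      · exact Tri.mono_inl i' _ _
      · exact Tri.mono_inr t' _ _
    rw [hmat]
    refine (Matrix.det_fromBlocks_zero₁₂ _ _ _).trans_ne ?_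
    rw [Matrix.det_mul_column, Matrix.det_mul_row]
    refine mul_ne_zero ?_ (mul_ne_zero hy2 (mul_ne_zero ?_ hy1))
    · rw [Matrix.det_vandermonde_ne_zero_iff]
      intro i j hij
      exact Fin.ext (Nat.cast_injective hij)
    · exact Finset.prod_ne_zero_iff.2 fun t _ => by positivity

theorem triDetPoly_ne_zero {n : ℕ} {κ : Type*} {pu pv : Tri n → κ}
    (hinj : Function.Injective (Sum.elim pu pv)) : triDetPoly pu pv ≠ 0 :=
  triDetPoly_ne_zero_of_exists hinj (exists_det_mono_ne_zero n)

/-- The points of the plane with abscissae and ordinates listed in `y`. -/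
def ptsEquiv (F : Type*) : (F ⊕ F → ℝ) ≃ᵐ (F → ℝ × ℝ) :=
  (MeasurableEquiv.sumPiEquivProdPi fun _ : F ⊕ F => ℝ).trans
    (MeasurableEquiv.arrowProdEquivProdArrow ℝ ℝ F).symm

theorem ptsEquiv_apply {F : Type*} (y : F ⊕ F → ℝ) (i : F) :
    ptsEquiv F y i = (y (.inl i), y (.inr i)) := rfl

theorem measurePreserving_ptsEquiv (F : Type*) [Fintype F] : MeasurePreserving (ptsEquiv F) volume volume :=
  (volume_measurePreserving_arrowProdEquivProdArrow ℝ ℝ F).symm.comp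
    (volume_measurePreserving_sumPiEquivProdPi fun _ : F ⊕ F => ℝ)

/-- The values of the monomials at a point. -/
def triRow (n : ℕ) {F : Type*} (y : F ⊕ F → ℝ) (i : F) : Tri n → ℝ :=
  fun t => t.mono (y (.inl i)) (y (.inr i))

/-- The largest determinant of monomials at points in a family. -/
def triMax (n : ℕ) {F : Type*} (y : F ⊕ F → ℝ) : ℝ≥0∞ :=
  ⨆ a : Tri n → F, ‖(Matrix.of fun γ => triRow n y (a γ)).det‖ₑ

theorem triRow_dotProduct {n : ℕ} {F : Type*} (y : F ⊕ F → ℝ) (i : F) (c : Tri n → ℝ) :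
    triRow n y i ⬝ᵥ c = triEval c (y (.inl i)) (y (.inr i)) := by
  simp only [triRow, dotProduct, triEval, mul_comm]

theorem abs_triRow_le_one {n : ℕ} {F : Type*} {y : F ⊕ F → ℝ} (hy : y ∈ Icc 0 1) (i : F) (t : Tri n) :
    |triRow n y i t| ≤ 1 := by
  have h (j) : 0 ≤ y j ∧ y j ≤ 1 := ⟨hy.1 j, hy.2 j⟩
  have h0 : 0 ≤ triRow n y i t := by
    have := (h (.inl i)).1; have := (h (.inr i)).1
    unfold triRow Tri.mono; positivity
  rw [abs_of_nonneg h0]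
  refine mul_le_one₀ (pow_le_one₀ (h _).1 (h _).2) (div_nonneg (pow_nonneg (h _).1 _) (by positivity)) ?_
  exact div_le_one_of_le₀ ((pow_le_one₀ (h _).1 (h _).2).trans (by exact_mod_cast Nat.succ_le_of_lt (Nat.factorial_pos _)))
    (by positivity)

theorem card_tri_le_triCrit (n : ℕ) : Fintype.card (Tri n) ≤ triCrit n := by
  cases n with
  | zero => decide
  | succ n =>
    rw [Tri.card_succ, triCrit]
    have := lt_triCrit n
    omega

theorem measurable_triMax (n : ℕ) (F : Type*) [Finite F] : Measurable (triMax n (F := F)) := by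
  refine Measurable.iSup fun a => Measurable.enorm (Continuous.measurable ?_)
  refine Continuous.matrix_det (continuous_matrix fun i j => ?_)
  simp only [Matrix.of_apply, triRow, Tri.mono]
  fun_prop

theorem ae_triMax_ne_zero {n : ℕ} {F : Type*} [Fintype F] (hF : Fintype.card (Tri n) ≤ Fintype.card F) :
    ∀ᵐ y : F ⊕ F → ℝ, triMax n y ≠ 0 := by
  obtain ⟨a⟩ := Function.Embedding.nonempty_of_card_le hF
  have hP := triDetPoly_ne_zero (n := n) (pu := fun γ => Sum.inl (a γ)) (pv := fun γ => Sum.inr (a γ))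
    (κ := F ⊕ F) (Function.Injective.sumElim (Sum.inl_injective.comp a.injective)
      (Sum.inr_injective.comp a.injective) (by simp))
  filter_upwards [MvPolynomial.ae_eval_ne_zero _ hP] with y hy
  rw [eval_triDetPoly] at hy
  have : ‖(Matrix.of fun γ => triRow n y (a γ)).det‖ₑ ≤ triMax n y :=
    le_iSup (fun a : Tri n → F => ‖(Matrix.of fun γ => triRow n y (a γ)).det‖ₑ) a
  exact ne_of_gt (lt_of_lt_of_le (pos_of_ne_zero (enorm_ne_zero.2 hy)) this)

theorem lintegral_mul_volume_triSet_pow_ne_top (n : ℕ) {N : ℕ} (hN : triCrit n ≤ N) {ε : ℝ} (hε : 0 < ε) :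
    ∫⁻ c : Tri n → ℝ, ENNReal.ofReal ((1 + ‖c‖) ^ (-ε)) * volume (triSet c) ^ N ≠ ⊤ := by
  set M : ℝ := ((Fintype.card (Tri n) : ℕ) : ℝ) with hM
  set b : ℝ := ((triCrit n : ℕ) : ℝ) with hb
  have hb0 : 0 < b := by
    have := lt_triCrit n
    rw [hb]; exact_mod_cast (by omega : 0 < triCrit n)
  set η : ℝ := ε * b / (M + 1) with hη
  have hη0 : 0 < η := by positivity
  have h1 := lintegral_volume_triSet_rpow_ne_top n (θ := b + η) (by linarith)
  have h2 : ∫⁻ c : Tri n → ℝ, ENNReal.ofReal ((1 + ‖c‖) ^ (-(ε + (M + 1)))) ≠ ⊤ := by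
    refine (finite_integral_one_add_norm ?_).ne
    rw [Module.finrank_fintype_fun_eq_card]
    linarith
  have hle (c : Tri n → ℝ) : ENNReal.ofReal ((1 + ‖c‖) ^ (-ε)) * volume (triSet c) ^ N ≤
      volume (triSet c) ^ (b + η) + ENNReal.ofReal ((1 + ‖c‖) ^ (-(ε + (M + 1)))) := by
    set S := volume (triSet c)
    have hS1 : S ≤ 1 := volume_triSet_le_one c
    set q : ℝ≥0∞ := ENNReal.ofReal (1 + ‖c‖) with hq
    have hq0 : q ≠ 0 := by rw [hq]; simp; positivity
    have hqt : q ≠ ⊤ := ENNReal.ofReal_ne_top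
    have hw (x : ℝ) : ENNReal.ofReal ((1 + ‖c‖) ^ x) = q ^ x := by
      rw [hq, ENNReal.ofReal_rpow_of_pos (by positivity)]
    have hSN : S ^ N ≤ S ^ b := by
      rw [hb, ENNReal.rpow_natCast]
      exact pow_le_pow_right_of_le_one' hS1 hN
    rw [hw, hw]
    rcases le_total (q ^ (-ε)) (S ^ η) with h | h
    · refine le_trans ?_ le_self_add
      rw [ENNReal.rpow_add_of_nonneg _ _ hb0.le hη0.le, mul_comm]
      gcongr
    · refine le_trans ?_ le_add_self
      have h3 : S ^ b ≤ q ^ (-(M + 1)) := by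
        have h4 := ENNReal.rpow_le_rpow h (z := b / η) (by positivity)
        rw [← ENNReal.rpow_mul, ← ENNReal.rpow_mul] at h4
        convert h4 using 2
        · field_simp
        · rw [hη]; field_simp
      rw [neg_add, ENNReal.rpow_add _ _ hq0 hqt]
      gcongr
      exact hSN.trans h3
  refine ne_top_of_le_ne_top ?_ (lintegral_mono hle)
  rw [lintegral_add_left ((measurable_volume_triSet n).pow_const _)]
  exact ENNReal.add_ne_top.2 ⟨h1, h2⟩

theorem lintegral_triMax_rpow_ne_top (n : ℕ) {F : Type} [Fintype F] (hF : triCrit n ≤ Fintype.card F)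
    {τ : ℝ} (hτ : τ < 1) : ∫⁻ y in Icc (0 : F ⊕ F → ℝ) 1, triMax n y ^ (-τ) ≠ ⊤ := by
  classical
  have hcard := (card_tri_le_triCrit n).trans hF
  obtain ⟨a₀⟩ := Function.Embedding.nonempty_of_card_le hcard
  obtain ⟨C, hC, hCb⟩ := Matrix.exists_rpow_det_le_lintegral (Tri n) hτ
  set w : (Tri n → ℝ) → ℝ≥0∞ := fun c => ENNReal.ofReal ((1 + ‖c‖) ^ (-(1 - τ))) with hw
  have hwm : Measurable w := by
    have : Measurable fun c : Tri n → ℝ => 1 + ‖c‖ := by fun_prop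
    exact (this.pow_const _).ennreal_ofReal
  set Z : Set ((F → ℝ × ℝ) × (Tri n → ℝ)) := {x | ∀ i, x.1 i ∈ triSet x.2} with hZ
  have hZm : MeasurableSet Z := by
    rw [hZ]
    simp only [ofPred_forall]
    refine MeasurableSet.iInter fun i => ?_
    exact ((isClosed_triSet_prod n).preimage (f := fun x : (F → ℝ × ℝ) × (Tri n → ℝ) => (x.2, x.1 i))
      (by fun_prop)).measurableSet
  have hpt : ∀ᵐ y : F ⊕ F → ℝ, y ∈ Icc (0 : F ⊕ F → ℝ) 1 →
      triMax n y ^ (-τ) ≤ C * ∫⁻ c, Z.indicator (fun x => w x.2) (ptsEquiv F y, c) := by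
    filter_upwards [ae_triMax_ne_zero hcard] with y hy hyI
    have : Nonempty (Tri n → F) := ⟨a₀⟩
    obtain ⟨a, ha⟩ := Finite.exists_max fun a : Tri n → F => |(Matrix.of fun γ => triRow n y (a γ)).det|
    have hmax : triMax n y = ‖(Matrix.of fun γ => triRow n y (a γ)).det‖ₑ := by
      refine le_antisymm (iSup_le fun a' => ?_)
        (le_iSup (fun a : Tri n → F => ‖(Matrix.of fun γ => triRow n y (a γ)).det‖ₑ) a)
      rw [Real.enorm_eq_ofReal_abs, Real.enorm_eq_ofReal_abs]
      exact ENNReal.ofReal_le_ofReal (ha a')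
    rw [hmax] at hy ⊢
    refine (hCb (fun i => triRow n y i) a (abs_triRow_le_one hyI) ha (by simpa using hy)).trans ?_
    refine mul_le_mul_right ?_ _
    have hKm : MeasurableSet {c : Tri n → ℝ | ∀ i, |triRow n y i ⬝ᵥ c| ≤ 1} := by
      simp only [ofPred_forall]
      refine MeasurableSet.iInter fun i => (isClosed_le ?_ continuous_const).measurableSet
      simp only [dotProduct]
      fun_prop
    rw [← lintegral_indicator hKm]
    refine lintegral_mono fun c => indicator_apply_le' (fun hc => ?_) fun _ => zero_le
    rw [indicator_of_mem]
    intro i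
    simp only [ptsEquiv_apply]
    refine ⟨⟨⟨hyI.1 _, hyI.1 _⟩, ⟨hyI.2 _, hyI.2 _⟩⟩, ?_⟩
    rw [← triRow_dotProduct]
    exact hc i
  have hfm : Measurable (Z.indicator fun x => w x.2) := (hwm.comp measurable_snd).indicator hZm
  have hZc (c : Tri n → ℝ) : MeasurableSet {ζ : F → ℝ × ℝ | (ζ, c) ∈ Z} := measurable_prodMk_right hZm
  refine ne_top_of_le_ne_top ?_ (setLIntegral_mono_ae' measurableSet_Icc hpt)
  refine ne_top_of_le_ne_top ?_ (setLIntegral_le_lintegral _ _)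
  rw [lintegral_const_mul' _ _ hC]
  refine ENNReal.mul_ne_top hC ?_
  rw [(measurePreserving_ptsEquiv F).lintegral_comp_emb (MeasurableEquiv.measurableEmbedding _)
    fun ζ => ∫⁻ c, Z.indicator (fun x => w x.2) (ζ, c)]
  have hswap := lintegral_lintegral_swap (μ := (volume : Measure (F → ℝ × ℝ)))
    (ν := (volume : Measure (Tri n → ℝ))) (f := fun ζ c => Z.indicator (fun x => w x.2) (ζ, c))
    hfm.aemeasurable
  rw [hswap]
  refine ne_top_of_le_ne_top (lintegral_mul_volume_triSet_pow_ne_top n hF (sub_pos.2 hτ))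
    (lintegral_mono fun c => le_of_eq ?_)
  have : (fun ζ : F → ℝ × ℝ => Z.indicator (fun x => w x.2) (ζ, c)) =
      {ζ : F → ℝ × ℝ | (ζ, c) ∈ Z}.indicator fun _ => w c := by
    ext ζ; rfl
  rw [this, lintegral_indicator_const (hZc c)]
  congr 1
  have h2 : {ζ : F → ℝ × ℝ | (ζ, c) ∈ Z} = univ.pi fun _ => triSet c := by
    ext ζ; simp [hZ]
  rw [h2, volume_pi, Measure.pi_pi]
  simp

theorem ENNReal.rpow_neg_le_rpow_neg {a b : ℝ≥0∞} {τ : ℝ} (hτ : 0 ≤ τ) (h : a ≤ b) :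
    b ^ (-τ) ≤ a ^ (-τ) := by
  rw [ENNReal.rpow_neg, ENNReal.rpow_neg, ENNReal.inv_le_inv]
  exact ENNReal.rpow_le_rpow h hτ

theorem volume_restrict_Icc_pi {ι : Type*} [Fintype ι] :
    (volume : Measure (ι → ℝ)).restrict (Icc 0 1) = Measure.pi fun _ : ι => volume.restrict (Icc (0 : ℝ) 1) := by
  have : (Icc 0 1 : Set (ι → ℝ)) = univ.pi fun _ => Icc (0 : ℝ) 1 := by
    rw [← Set.pi_univ_Icc]; rfl
  rw [this, volume_pi, Measure.restrict_pi_pi]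

theorem lintegral_pi_prod {X : Type*} [MeasurableSpace X] (μ : Measure X) [SigmaFinite μ] :
    ∀ {n : ℕ} {f : Fin n → X → ℝ≥0∞}, (∀ i, Measurable (f i)) →
      ∫⁻ x, ∏ i, f i (x i) ∂Measure.pi (fun _ : Fin n => μ) = ∏ i, ∫⁻ t, f i t ∂μ
  | 0, f, _ => by simp
  | n + 1, f, hf => by
    have hmp := (measurePreserving_piFinSuccAbove (fun _ : Fin (n + 1) => μ) 0).symm
    have hm (n : ℕ) (f : Fin n → X → ℝ≥0∞) (hf : ∀ i, Measurable (f i)) :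
        Measurable fun x : Fin n → X => ∏ i, f i (x i) := by
      fun_prop
    rw [← hmp.lintegral_comp (hm _ f hf)]
    have h0 (x : X × (Fin n → X)) : ∏ i, f i ((MeasurableEquiv.piFinSuccAbove
        (fun _ : Fin (n + 1) => X) 0).symm x i) = f 0 x.1 * ∏ i : Fin n, f i.succ (x.2 i) := by
      rw [Fin.prod_univ_succ]; rfl
    simp only [h0]
    have := lintegral_prod_mul (μ := μ) (ν := Measure.pi fun _ : Fin n => μ) (f := f 0)
      (g := fun y => ∏ i : Fin n, f i.succ (y i)) (hf 0).aemeasurable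
      (hm n _ fun i => hf i.succ).aemeasurable
    rw [Fin.prod_univ_succ, ← lintegral_pi_prod μ fun i => hf i.succ]
    exact this

theorem lintegral_star_le {τ : ℝ} {B : ℝ≥0∞} (hB : ∀ x : ℝ, ∫⁻ t in Icc (0:ℝ) 1, ‖t - x‖ₑ ^ (-τ) ≤ B)
    (h : ℕ) (t₀ : ℝ) (c : Option (Fin h)) :
    ∫⁻ u in Icc (0 : Fin h → ℝ) 1, ∏ i, (if i = c then 1 else ‖i.elim t₀ u - c.elim t₀ u‖ₑ ^ (-τ)) ≤
      B ^ h := by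
  rw [volume_restrict_Icc_pi]
  rcases c with _ | c
  · simp only [Fintype.prod_option, Option.elim_none, Option.elim_some, if_true, one_mul,
      reduceCtorEq, if_false]
    rw [lintegral_pi_prod _ (f := fun _ t => ‖t - t₀‖ₑ ^ (-τ)) fun i => by fun_prop]
    calc _ ≤ ∏ _i : Fin h, B := Finset.prod_le_prod' fun i _ => hB t₀
      _ = _ := by simp
  · obtain ⟨n, rfl⟩ : ∃ n, h = n + 1 := Nat.exists_eq_succ_of_ne_zero (by have := c.2; omega)
    have hmp := (measurePreserving_piFinSuccAbove (fun _ : Fin (n + 1) => volume.restrict (Icc (0:ℝ) 1)) c).symm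
    have hsplit (u : Fin (n + 1) → ℝ) : (∏ i : Option (Fin (n + 1)), if i = some c then 1 else
        ‖i.elim t₀ u - (some c).elim t₀ u‖ₑ ^ (-τ)) =
        ‖u c - t₀‖ₑ ^ (-τ) * ∏ j : Fin n, ‖u (c.succAbove j) - u c‖ₑ ^ (-τ) := by
      rw [Fintype.prod_option, Fin.prod_univ_succAbove _ c]
      simp [Fin.succAbove_ne, enorm_sub_rev t₀]
    simp only [hsplit]
    rw [← hmp.lintegral_comp (by fun_prop)]
    simp only [MeasurableEquiv.piFinSuccAbove_symm_apply, Fin.insertNthEquiv, Equiv.coe_fn_mk,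
      Fin.insertNth_apply_same, Fin.insertNth_apply_succAbove]
    rw [lintegral_prod _ (by fun_prop)]
    have hin (x : ℝ) : ∫⁻ y : Fin n → ℝ, ‖x - t₀‖ₑ ^ (-τ) * ∏ j, ‖y j - x‖ₑ ^ (-τ)
        ∂Measure.pi (fun _ => volume.restrict (Icc (0:ℝ) 1)) ≤ ‖x - t₀‖ₑ ^ (-τ) * B ^ n := by
      rw [lintegral_const_mul _ (by fun_prop),
        lintegral_pi_prod _ (f := fun _ t => ‖t - x‖ₑ ^ (-τ)) fun i => by fun_prop]
      refine mul_le_mul_right ?_ _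
      calc _ ≤ ∏ _i : Fin n, B := Finset.prod_le_prod' fun i _ => hB x
        _ = _ := by simp
    refine (lintegral_mono hin).trans ?_
    rw [lintegral_mul_const _ (by fun_prop), pow_succ']
    exact mul_le_mul_left (hB t₀) _

theorem exists_lintegral_vandermonde_rpow_le (n : ℕ) {τ : ℝ} (hτ0 : 0 ≤ τ) (hτ : τ < 1) :
    ∃ C : ℝ≥0∞, C ≠ ⊤ ∧ ∀ t₀ : ℝ, ∫⁻ u in Icc (0 : Fin (n * (n - 1) / 2) → ℝ) 1,
      (⨆ b : Fin n → Option (Fin (n * (n - 1) / 2)),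
        ‖(Matrix.vandermonde fun l => (b l).elim t₀ u).det‖ₑ) ^ (-τ) ≤ C := by
  obtain ⟨B, hB, hBb⟩ := exists_lintegral_enorm_sub_rpow_le hτ0 hτ
  set h := n * (n - 1) / 2 with hh
  refine ⟨∑ _c : Option (Fin h), B ^ h, ENNReal.sum_ne_top.2 fun _ _ => ENNReal.pow_ne_top hB, fun t₀ => ?_⟩
  have hpt (u : Fin h → ℝ) : (⨆ b : Fin n → Option (Fin h),
      ‖(Matrix.vandermonde fun l => (b l).elim t₀ u).det‖ₑ) ^ (-τ) ≤
      ∑ c : Option (Fin h), ∏ i, (if i = c then 1 else ‖i.elim t₀ u - c.elim t₀ u‖ₑ ^ (-τ)) := by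
    obtain ⟨c, b, -, hcb⟩ := exists_prod_abs_sub_le_det_vandermonde (P := Option (Fin h)) n
      (by simp [hh]) fun i => i.elim t₀ u
    refine le_trans ?_ (Finset.single_le_sum (fun _ _ => zero_le) (Finset.mem_univ c))
    have h1 : ∏ i ∈ Finset.univ.erase c, ‖i.elim t₀ u - c.elim t₀ u‖ₑ ≤
        ⨆ b : Fin n → Option (Fin h), ‖(Matrix.vandermonde fun l => (b l).elim t₀ u).det‖ₑ := by
      refine le_trans ?_ (le_iSup (fun b : Fin n → Option (Fin h) =>
        ‖(Matrix.vandermonde fun l => (b l).elim t₀ u).det‖ₑ) b)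
      simp only [Real.enorm_eq_ofReal_abs]
      rw [← ENNReal.ofReal_prod_of_nonneg fun _ _ => abs_nonneg _]
      exact ENNReal.ofReal_le_ofReal hcb
    calc _ ≤ (∏ i ∈ Finset.univ.erase c, ‖i.elim t₀ u - c.elim t₀ u‖ₑ) ^ (-τ) :=
          ENNReal.rpow_neg_le_rpow_neg hτ0 h1
      _ = ∏ i ∈ Finset.univ.erase c, ‖i.elim t₀ u - c.elim t₀ u‖ₑ ^ (-τ) :=
          (ENNReal.prod_rpow_of_ne_top (fun _ _ => enorm_ne_top) _).symm
      _ = _ := by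
          rw [← Finset.mul_prod_erase _ _ (Finset.mem_univ c), if_pos rfl, one_mul]
          exact Finset.prod_congr rfl fun i hi => (if_neg (Finset.ne_of_mem_erase hi)).symm
  refine (lintegral_mono hpt).trans ?_
  rw [lintegral_finsetSum]
  · exact Finset.sum_le_sum fun c _ => lintegral_star_le hBb h t₀ c
  · intro c _
    refine Finset.measurable_fun_prod _ fun i _ => ?_
    have hme (i : Option (Fin h)) : Measurable fun u : Fin h → ℝ => i.elim t₀ u := by
      cases i with
      | none => exact measurable_const
      | some j => exact measurable_pi_apply j
    split_ifs
    · exact measurable_const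
    · exact ((hme i).sub (hme c)).enorm.pow_const _

theorem MvPolynomial.hasFDerivAt_eval {κ : Type*} [Fintype κ] (P : MvPolynomial κ ℝ) (y : κ → ℝ) :
    HasFDerivAt (fun y => eval y P)
      (∑ j, eval y (pderiv j P) • ContinuousLinearMap.proj (R := ℝ) (φ := fun _ : κ => ℝ) j) y := by
  classical
  induction P using MvPolynomial.induction_on with
  | C a => simpa using hasFDerivAt_const a y
  | add p q hp hq =>
    simp only [map_add, add_smul, Finset.sum_add_distrib]
    exact hp.add hq
  | mul_X p i hp =>
    simp only [map_mul, eval_X]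
    refine (hp.mul (hasFDerivAt_apply i y)).congr_fderiv ?_
    simp only [pderiv_mul, pderiv_X, map_add, map_mul, eval_X, Pi.single_apply, add_smul,
      Finset.sum_add_distrib, Finset.smul_sum, smul_smul]
    rw [add_comm]
    congr 1
    · exact Finset.sum_congr rfl fun j _ => by rw [mul_comm]
    · rw [Finset.sum_eq_single i]
      · simp
      · intro j _ hj; simp [hj.symm]
      · simp

theorem MvPolynomial.contDiff_eval {κ : Type*} [Fintype κ] (P : MvPolynomial κ ℝ) :
    ContDiff ℝ 1 fun y => eval y P := by
  induction P using MvPolynomial.induction_on with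
  | C a => simpa using contDiff_const
  | add p q hp hq => simpa only [map_add] using hp.add hq
  | mul_X p i hp => simpa only [map_mul, eval_X] using hp.mul (contDiff_apply ℝ ℝ i)

theorem MvPolynomial.det_fderiv_eval {κ : Type*} [Fintype κ] [DecidableEq κ]
    (Ψ : κ → MvPolynomial κ ℝ) (y : κ → ℝ) :
    (fderiv ℝ (fun y => fun c => eval y (Ψ c)) y).det =
      (Matrix.of fun c c' => eval y (pderiv c' (Ψ c))).det := by
  have h := (hasFDerivAt_pi (𝕜 := ℝ)).2 fun c => hasFDerivAt_eval (Ψ c) y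
  rw [h.fderiv, ContinuousLinearMap.det, ← LinearMap.det_toMatrix']
  congr 1
  ext c c'
  simp [LinearMap.toMatrix'_apply, Pi.single_apply]

theorem measurePreserving_pi_comp_sum {I R κ : Type} [Fintype I] [Fintype R] [Fintype κ] (e : I ⊕ R ≃ κ) :
    MeasurePreserving (fun z : κ → ℝ => ((fun i => z (e (.inl i)), fun r => z (e (.inr r))) : (I → ℝ) × (R → ℝ)))
      volume volume :=
  (volume_measurePreserving_sumPiEquivProdPi fun _ : I ⊕ R => ℝ).comp
    (volume_measurePreserving_piCongrLeft (fun _ : κ => ℝ) e).symm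

theorem lintegral_pi_mul {I R κ : Type} [Fintype I] [Fintype R] [Fintype κ] (e : I ⊕ R ≃ κ)
    {h : (I → ℝ) → ℝ≥0∞} {g : (R → ℝ) → ℝ≥0∞} (hh : Measurable h) (hg : Measurable g) :
    ∫⁻ z : κ → ℝ, h (fun i => z (e (.inl i))) * g (fun r => z (e (.inr r))) =
      (∫⁻ z, h z) * ∫⁻ z, g z := by
  have h1 := (measurePreserving_pi_comp_sum e).lintegral_comp
    (f := fun x : (I → ℝ) × (R → ℝ) => h x.1 * g x.2) (by fun_prop)
  rw [h1]
  exact lintegral_prod_mul hh.aemeasurable hg.aemeasurable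

theorem MvPolynomial.exists_lintegral_det_pderiv_mul_le {I R κ : Type} [Fintype I] [DecidableEq I]
    [Fintype R] [Fintype κ] (e : I ⊕ R ≃ κ) (P : I → MvPolynomial κ ℝ) :
    ∃ K : ℕ, ∀ (h : (I → ℝ) → ℝ≥0∞) (g : (R → ℝ) → ℝ≥0∞), Measurable h → Measurable g →
      ∫⁻ y : κ → ℝ, ‖(Matrix.of fun i i' => eval y (pderiv (e (.inl i')) (P i))).det‖ₑ *
        (h (fun i => eval y (P i)) * g (fun r => y (e (.inr r)))) ≤
      K * ((∫⁻ z, h z) * ∫⁻ z, g z) := by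
  classical
  set Ψ : κ → MvPolynomial κ ℝ := fun c => Sum.elim P (fun r => X (e (.inr r))) (e.symm c) with hΨ
  have hΨl (i) : Ψ (e (.inl i)) = P i := by simp [hΨ]
  have hΨr (r) : Ψ (e (.inr r)) = X (e (.inr r)) := by simp [hΨ]
  obtain ⟨K, hK⟩ := exists_finset_card_le_of_fiber Ψ
  refine ⟨K, fun h g hh hg => ?_⟩
  have hm := lintegral_abs_det_fderiv_mul_comp_le volume (f := fun y => fun c => eval y (Ψ c))
    (contDiff_pi.2 fun c => contDiff_eval (Ψ c)) K hK
    (fun z => h (fun i => z (e (.inl i))) * g (fun r => z (e (.inr r)))) (by fun_prop)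
  rw [lintegral_pi_mul e hh hg] at hm
  refine le_of_eq_of_le (lintegral_congr fun y => ?_) hm
  simp only [hΨl, hΨr, eval_X]
  rw [← Real.enorm_eq_ofReal_abs, det_fderiv_eval]
  congr 2
  rw [← Matrix.det_submatrix_equiv_self e]
  have : (Matrix.of fun c c' => eval y (pderiv c' (Ψ c))).submatrix e e =
      Matrix.fromBlocks (Matrix.of fun i i' => eval y (pderiv (e (.inl i')) (P i)))
        (Matrix.of fun i r => eval y (pderiv (e (.inr r)) (P i))) 0 (1 : Matrix R R ℝ) := by
    ext c c'
    rcases c with i | r <;> rcases c' with i' | r'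
    · simp [hΨl]
    · simp [hΨl]
    · simp [hΨr, pderiv_X]
    · simp [hΨr, pderiv_X, Pi.single_apply, Matrix.one_apply]
  rw [this, Matrix.det_fromBlocks_zero₂₁, Matrix.det_one, mul_one]

theorem exists_equiv_sum_of_injective {α β : Type*} [Fintype α] [Fintype β] {f : α → β}
    (hf : Function.Injective f) {m : ℕ} (hm : Fintype.card α + m = Fintype.card β) :
    ∃ e : α ⊕ Fin m ≃ β, ∀ x, e (.inl x) = f x := by
  classical
  have hc : Fintype.card {y // ¬ y ∈ range f} = m := by
    rw [Fintype.card_subtype_compl]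
    have : Fintype.card {y // y ∈ range f} = Fintype.card α := Set.card_range_of_injective hf
    omega
  let e₁ := Equiv.ofInjective f hf
  let e₂ : Fin m ≃ {y // ¬ y ∈ range f} := (Fintype.equivFinOfCardEq hc).symm
  exact ⟨(Equiv.sumCongr e₁ e₂).trans (Equiv.sumCompl _), fun x => rfl⟩

/-- Splitting the coordinates of a family of points of the plane. -/
theorem exists_equiv_coordinates {K H M F ι : Type*} (eH : K ⊕ H ≃ M) (eF : M ⊕ F ≃ ι) :
    ∃ e : (K ⊕ M) ⊕ (H ⊕ (F ⊕ F)) ≃ ι ⊕ ι,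
      (∀ l, e (.inl (.inl l)) = .inl (eF (.inl (eH (.inl l))))) ∧
      (∀ t, e (.inl (.inr t)) = .inr (eF (.inl t))) ∧
      (∀ x, e (.inr (.inl x)) = .inl (eF (.inl (eH (.inr x))))) ∧
      (∀ f, e (.inr (.inr (.inl f))) = .inl (eF (.inr f))) ∧
      (∀ f, e (.inr (.inr (.inr f))) = .inr (eF (.inr f))) := by
  refine ⟨Equiv.ofBijective (Sum.elim
    (Sum.elim (fun l => .inl (eF (.inl (eH (.inl l))))) fun t => .inr (eF (.inl t)))
    (Sum.elim (fun x => .inl (eF (.inl (eH (.inr x)))))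
      (Sum.elim (fun f => .inl (eF (.inr f))) fun f => .inr (eF (.inr f))))) ⟨?_, ?_⟩,
    fun _ => rfl, fun _ => rfl, fun _ => rfl, fun _ => rfl, fun _ => rfl⟩
  · rintro ((l | t) | (x | (f | f))) ((l' | t') | (x' | (f' | f'))) <;> simp
  · rintro (i | i)
    · obtain ⟨t | f, rfl⟩ := eF.surjective i
      · obtain ⟨l | x, rfl⟩ := eH.surjective t
        · exact ⟨.inl (.inl l), rfl⟩
        · exact ⟨.inr (.inl x), rfl⟩
      · exact ⟨.inr (.inr (.inl f)), rfl⟩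
    · obtain ⟨t | f, rfl⟩ := eF.surjective i
      · exact ⟨.inl (.inr t), rfl⟩
      · exact ⟨.inr (.inr (.inr f)), rfl⟩

/-- The exponents of the monomials of the moment map, `i` in the first variable only or divisible by
the second variable. -/
def phaseExp (k : ℕ) : Fin k ⊕ Tri k → ℕ × ℕ :=
  Sum.elim (fun i => ((i : ℕ) + 1, 0)) fun t => (t.exp.1, t.exp.2 + 1)

/-- Signed sums of the monomials over a family of points. -/
def phasePoly (k : ℕ) {ι : Type} [Fintype ι] (ε : ι → ℝ) (m : Fin k ⊕ Tri k) : MvPolynomial (ι ⊕ ι) ℝ :=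
  ∑ i, MvPolynomial.C (ε i) * (MvPolynomial.X (.inl i) ^ (phaseExp k m).1 *
    MvPolynomial.X (.inr i) ^ (phaseExp k m).2)

theorem eval_pderiv_inl_phasePoly {k : ℕ} {ι : Type} [Fintype ι] (ε : ι → ℝ) (m : Fin k ⊕ Tri k)
    (y : ι ⊕ ι → ℝ) (i : ι) :
    MvPolynomial.eval y (MvPolynomial.pderiv (.inl i) (phasePoly k ε m)) =
      ε i * ((phaseExp k m).1 * y (.inl i) ^ ((phaseExp k m).1 - 1) * y (.inr i) ^ (phaseExp k m).2) := by
  classical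
  rw [phasePoly, map_sum, map_sum, Finset.sum_eq_single i]
  · simp [MvPolynomial.pderiv_X]
    exact Or.inl (by ring)
  · intro j _ hj
    simp [MvPolynomial.pderiv_X, hj]
  · simp

theorem eval_pderiv_inr_phasePoly {k : ℕ} {ι : Type} [Fintype ι] (ε : ι → ℝ) (m : Fin k ⊕ Tri k)
    (y : ι ⊕ ι → ℝ) (i : ι) :
    MvPolynomial.eval y (MvPolynomial.pderiv (.inr i) (phasePoly k ε m)) =
      ε i * (y (.inl i) ^ (phaseExp k m).1 * ((phaseExp k m).2 * y (.inr i) ^ ((phaseExp k m).2 - 1))) := by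
  classical
  rw [phasePoly, map_sum, map_sum, Finset.sum_eq_single i]
  · simp [MvPolynomial.pderiv_X]
  · intro j _ hj
    simp [MvPolynomial.pderiv_X, hj]
  · simp

theorem enorm_le_enorm_det_phasePoly {k : ℕ} {ι : Type} [Fintype ι] {ε : ι → ℝ} (hε : ∀ i, |ε i| = 1)
    (y : ι ⊕ ι → ℝ) (a : Tri k → ι) (b : Fin k → ι) (e : Fin k ⊕ Tri k → ι ⊕ ι)
    (hl : ∀ l, e (.inl l) = .inl (b l)) (hr : ∀ t, e (.inr t) = .inr (a t)) :
    ‖(Matrix.vandermonde fun l => y (.inl (b l))).det‖ₑ *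
      ‖(Matrix.of fun t => triRow k y (a t)).det‖ₑ ≤
    ‖(Matrix.of fun m m' => MvPolynomial.eval y (MvPolynomial.pderiv (e m') (phasePoly k ε m))).det‖ₑ := by
  set V := Matrix.vandermonde fun l => y (.inl (b l))
  set A := Matrix.of fun t => triRow k y (a t)
  have hB : (Matrix.of fun m m' => MvPolynomial.eval y (MvPolynomial.pderiv (e m') (phasePoly k ε m))) =
      Matrix.fromBlocks
        (Matrix.of fun l l' : Fin k => ((l : ℝ) + 1) * (Matrix.of fun l l' => ε (b l') * V.transpose l l') l l')
        0
        (Matrix.of fun (t : Tri k) (l : Fin k) =>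
          MvPolynomial.eval y (MvPolynomial.pderiv (e (.inl l)) (phasePoly k ε (.inr t))))
        (Matrix.of fun t t' : Tri k => ((t.exp.2 + 1).factorial : ℝ) *
          (Matrix.of fun t t' => ε (a t') * A.transpose t t') t t') := by
    ext m m'
    rcases m with l | t <;> rcases m' with l' | t'
    · simp [hl, eval_pderiv_inl_phasePoly, phaseExp, V, Matrix.vandermonde_apply]
      ring
    · simp [hr, eval_pderiv_inr_phasePoly, phaseExp]
    · simp
    · simp [hr, eval_pderiv_inr_phasePoly, phaseExp, A, triRow, Tri.mono, Nat.factorial_succ]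
      field_simp
  rw [hB, Matrix.det_fromBlocks_zero₁₂, Matrix.det_mul_column, Matrix.det_mul_column,
    Matrix.det_mul_row, Matrix.det_mul_row, Matrix.det_transpose, Matrix.det_transpose, ← enorm_mul,
    Real.enorm_eq_ofReal_abs, Real.enorm_eq_ofReal_abs]
  refine ENNReal.ofReal_le_ofReal ?_
  simp only [abs_mul, Finset.abs_prod, hε, Finset.prod_const_one, one_mul]
  have h1 : 1 ≤ ∏ l : Fin k, |(l : ℝ) + 1| :=
    Finset.prod_const_one.symm.le.trans <| Finset.prod_le_prod (fun _ _ => zero_le_one) fun l _ => by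
      rw [abs_of_nonneg (by positivity)]; linarith [(Nat.cast_nonneg (l : ℕ) : (0:ℝ) ≤ (l : ℕ))]
  have h2 : 1 ≤ ∏ t : Tri k, |((t.exp.2 + 1).factorial : ℝ)| :=
    Finset.prod_const_one.symm.le.trans <| Finset.prod_le_prod (fun _ _ => zero_le_one) fun t _ => by
      rw [Nat.abs_cast]; exact_mod_cast Nat.succ_le_of_lt (Nat.factorial_pos _)
  gcongr
  · exact le_mul_of_one_le_left (abs_nonneg _) h1
  · exact le_mul_of_one_le_left (abs_nonneg _) h2

/-- The largest Vandermonde determinant of points in a family. -/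
def vandMax (n : ℕ) {P : Type*} (t : P → ℝ) : ℝ≥0∞ :=
  ⨆ b : Fin n → P, ‖(Matrix.vandermonde fun l => t (b l)).det‖ₑ

theorem vandMax_comp_le (n : ℕ) {P Q : Type*} (t : P → ℝ) (f : Q → P) :
    vandMax n (fun q => t (f q)) ≤ vandMax n t :=
  iSup_le fun b => le_iSup (fun b : Fin n → P => ‖(Matrix.vandermonde fun l => t (b l)).det‖ₑ) fun l => f (b l)

theorem triMax_comp_le (n : ℕ) {F ι : Type*} (y : ι ⊕ ι → ℝ) (f : F → ι) :
    triMax n (fun x : F ⊕ F => y (x.map f f)) ≤ triMax n y :=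
  iSup_le fun a => le_iSup (fun a : Tri n → ι => ‖(Matrix.of fun γ => triRow n y (a γ)).det‖ₑ) fun l => f (a l)

theorem measurable_vandMax (n : ℕ) (P : Type*) [Finite P] : Measurable (vandMax n (P := P)) := by
  refine Measurable.iSup fun b => Measurable.enorm (Continuous.measurable ?_)
  simp only [Matrix.det_vandermonde]
  fun_prop

theorem card_tri_eq (n : ℕ) : Fintype.card (Tri (n + 1)) = n + 1 + (n + 1) * (n + 1 - 1) / 2 := by
  rw [Tri.card_succ, Tri.card_eq_sum, Finset.sum_range_id]

/-- The weight bounding the inverse of the Jacobian of the phase. -/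
def phaseWeight (n : ℕ) {F : Type} (τ : ℝ) (j : F)
    (z : Fin ((n + 1) * (n + 1 - 1) / 2) ⊕ (F ⊕ F) → ℝ) : ℝ≥0∞ :=
  (Icc 0 1).indicator (fun w => triMax (n + 1) w ^ (-τ)) (fun x => z (.inr x)) *
  (Icc 0 1).indicator (fun u => vandMax (n + 1) (fun o : Option (Fin ((n + 1) * (n + 1 - 1) / 2)) =>
    o.elim (z (.inr (.inl j))) u) ^ (-τ)) (fun x => z (.inl x))

theorem measurable_phaseWeight_left (n : ℕ) {F : Type} (τ : ℝ) (j : F) :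
    Measurable fun x : (Fin ((n + 1) * (n + 1 - 1) / 2) → ℝ) × (F ⊕ F → ℝ) =>
      (Icc 0 1).indicator (fun u => vandMax (n + 1) (fun o : Option (Fin ((n + 1) * (n + 1 - 1) / 2)) =>
        o.elim (x.2 (.inl j)) u) ^ (-τ)) x.1 := by
  have h1 : Measurable fun x : (Fin ((n + 1) * (n + 1 - 1) / 2) → ℝ) × (F ⊕ F → ℝ) =>
      vandMax (n + 1) (fun o : Option (Fin ((n + 1) * (n + 1 - 1) / 2)) =>
        o.elim (x.2 (.inl j)) x.1) ^ (-τ) := by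
    refine Measurable.pow_const ((measurable_vandMax _ _).comp (measurable_pi_lambda _ fun o => ?_)) _
    cases o with
    | none => exact (measurable_pi_apply _).comp measurable_snd
    | some i => exact (measurable_pi_apply _).comp measurable_fst
  exact h1.indicator (measurableSet_Icc.preimage measurable_fst)

theorem measurable_phaseWeight (n : ℕ) {F : Type} [Finite F] (τ : ℝ) (j : F) :
    Measurable (phaseWeight n τ j) := by
  refine Measurable.mul ?_ ?_
  · exact (((measurable_triMax _ _).pow_const _).indicator measurableSet_Icc).comp
      (measurable_pi_lambda _ fun x => measurable_pi_apply _)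
  · have hm : Measurable fun z : Fin ((n + 1) * (n + 1 - 1) / 2) ⊕ (F ⊕ F) → ℝ =>
        ((fun x => z (.inl x), fun x => z (.inr x)) :
          (Fin ((n + 1) * (n + 1 - 1) / 2) → ℝ) × (F ⊕ F → ℝ)) := by fun_prop
    exact (measurable_phaseWeight_left n τ j).comp hm

theorem lintegral_phaseWeight_ne_top (n : ℕ) {F : Type} [Fintype F]
    (hF : triCrit (n + 1) ≤ Fintype.card F) {τ : ℝ} (hτ0 : 0 ≤ τ) (hτ : τ < 1) (j : F) :
    ∫⁻ z, phaseWeight n τ j z ≠ ⊤ := by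
  obtain ⟨C, hC, hCb⟩ := exists_lintegral_vandermonde_rpow_le (n + 1) hτ0 hτ
  have hm := (measurable_phaseWeight n τ j)
  have hmp := volume_measurePreserving_sumPiEquivProdPi_symm
    fun _ : Fin ((n + 1) * (n + 1 - 1) / 2) ⊕ (F ⊕ F) => ℝ
  rw [← hmp.lintegral_comp hm, Measure.volume_eq_prod, lintegral_prod_symm' _ (by exact hm.comp hmp.measurable)]
  have hw : Measurable ((Icc (0 : F ⊕ F → ℝ) 1).indicator fun w => triMax (n + 1) w ^ (-τ)) :=
    ((measurable_triMax _ _).pow_const _).indicator measurableSet_Icc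
  have hin (w : F ⊕ F → ℝ) : ∫⁻ u : Fin ((n + 1) * (n + 1 - 1) / 2) → ℝ, phaseWeight n τ j
      ((MeasurableEquiv.sumPiEquivProdPi fun _ : Fin ((n + 1) * (n + 1 - 1) / 2) ⊕ (F ⊕ F) => ℝ).symm (u, w)) ≤
      (Icc 0 1).indicator (fun w => triMax (n + 1) w ^ (-τ)) w * C := by
    have h1 (u : Fin ((n + 1) * (n + 1 - 1) / 2) → ℝ) : phaseWeight n τ j
      ((MeasurableEquiv.sumPiEquivProdPi fun _ : Fin ((n + 1) * (n + 1 - 1) / 2) ⊕ (F ⊕ F) => ℝ).symm (u, w)) =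
      (Icc 0 1).indicator (fun w => triMax (n + 1) w ^ (-τ)) w *
      (Icc 0 1).indicator (fun u => vandMax (n + 1) (fun o : Option (Fin ((n + 1) * (n + 1 - 1) / 2)) =>
        o.elim (w (.inl j)) u) ^ (-τ)) u := rfl
    simp only [h1]
    rw [lintegral_const_mul _ (by exact (measurable_phaseWeight_left n τ j).comp measurable_prodMk_right),
      lintegral_indicator measurableSet_Icc]
    exact mul_le_mul_right (hCb _) _
  refine ne_top_of_le_ne_top ?_ (lintegral_mono hin)
  rw [lintegral_mul_const _ hw, lintegral_indicator measurableSet_Icc]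
  exact ENNReal.mul_ne_top (lintegral_triMax_rpow_ne_top (n + 1) hF hτ) hC

theorem exists_le_phaseWeight (n m : ℕ) {ι : Type} [Fintype ι]
    (hm : Fintype.card (Tri (n + 1)) + m = Fintype.card ι) {ε : ι → ℝ} (hε : ∀ i, |ε i| = 1) {τ : ℝ}
    (hτ0 : 0 ≤ τ) (j : Fin m) {y : ι ⊕ ι → ℝ} (hy : y ∈ Icc 0 1)
    (h0 : triMax (n + 1) y * vandMax (n + 1) (fun i => y (.inl i)) ≠ 0) :
    ∃ (eH : Fin (n + 1) ⊕ Fin ((n + 1) * (n + 1 - 1) / 2) ≃ Tri (n + 1)) (eF : Tri (n + 1) ⊕ Fin m ≃ ι),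
      (triMax (n + 1) y * vandMax (n + 1) (fun i => y (.inl i))) ^ (1 - τ) ≤
      (Fintype.card (Tri (n + 1)) : ℝ≥0∞) ^ (n + 1) *
      (‖(Matrix.of fun i i' => MvPolynomial.eval y
        (MvPolynomial.pderiv ((exists_equiv_coordinates eH eF).choose (.inl i')) (phasePoly (n + 1) ε i))).det‖ₑ *
        phaseWeight n τ j fun r => y ((exists_equiv_coordinates eH eF).choose (.inr r))) := by
  have hE (b : Fin (n + 1) → ι) : (Matrix.of fun l l' => triRow (n + 1) y (b l) (.inl l')) =
      Matrix.vandermonde fun l => y (.inl (b l)) := by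
    ext l l'
    exact Tri.mono_inl l' _ _
  obtain ⟨ht, hv⟩ := mul_ne_zero_iff.1 h0
  obtain ⟨a₀, ha₀⟩ : ∃ a₀ : Tri (n + 1) → ι, (Matrix.of fun γ => triRow (n + 1) y (a₀ γ)).det ≠ 0 := by
    by_contra! h
    exact ht (by simp [triMax, h])
  obtain ⟨b₀, hb₀⟩ : ∃ b₀ : Fin (n + 1) → ι, (Matrix.vandermonde fun l => y (.inl (b₀ l))).det ≠ 0 := by
    by_contra! h
    exact hv (by simp [vandMax, h])
  rw [← hE] at hb₀
  obtain ⟨a, σ, h1, h2, h3, h4⟩ := Matrix.exists_exchange (triRow (n + 1) y) Sum.inl a₀ ha₀ b₀ hb₀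
  simp only [hE] at h2 h4
  have ha : Function.Injective a := fun γ γ' h => by
    by_contra hne
    exact h3 (Matrix.det_zero_of_row_eq hne (by ext; simp [h]))
  have hσ : Function.Injective σ := fun l l' h => by
    by_contra hne
    exact h4 (Matrix.det_zero_of_row_eq hne (by ext; simp [h, Matrix.vandermonde_apply]))
  obtain ⟨eH, heH⟩ := exists_equiv_sum_of_injective hσ (m := (n + 1) * (n + 1 - 1) / 2)
    (by rw [card_tri_eq, Fintype.card_fin])
  obtain ⟨eF, heF⟩ := exists_equiv_sum_of_injective ha hm
  refine ⟨eH, eF, ?_⟩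
  obtain ⟨e1, e2, e3, e4, e5⟩ := (exists_equiv_coordinates eH eF).choose_spec
  set e := (exists_equiv_coordinates eH eF).choose
  set T := triMax (n + 1) y with hT
  set V := vandMax (n + 1) (fun i => y (.inl i)) with hV
  set c : ℝ≥0∞ := (Fintype.card (Tri (n + 1)) : ℝ≥0∞) ^ (n + 1) with hc
  have hTle : T ≤ c * ‖(Matrix.of fun γ => triRow (n + 1) y (a γ)).det‖ₑ := by
    refine iSup_le fun a' => ?_
    have := ENNReal.ofReal_le_ofReal (h1 a')
    rw [ENNReal.ofReal_mul (by positivity), ENNReal.ofReal_pow (by positivity), ENNReal.ofReal_natCast,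
      Fintype.card_fin] at this
    simpa only [Real.enorm_eq_ofReal_abs] using this
  have hVle : V ≤ ‖(Matrix.vandermonde fun l => y (.inl (a (σ l)))).det‖ₑ := by
    refine iSup_le fun b' => ?_
    simpa only [Real.enorm_eq_ofReal_abs] using ENNReal.ofReal_le_ofReal (h2 b')
  have hTt : T ≠ ⊤ := ne_top_of_le_ne_top
    (ENNReal.mul_ne_top (ENNReal.pow_ne_top (ENNReal.natCast_ne_top _)) enorm_ne_top) hTle
  have hVt : V ≠ ⊤ := ne_top_of_le_ne_top enorm_ne_top hVle
  rw [sub_eq_add_neg, ENNReal.rpow_add 1 (-τ) h0 (ENNReal.mul_ne_top hTt hVt), ENNReal.rpow_one,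
    ENNReal.mul_rpow_of_ne_top hTt hVt, ← mul_assoc c, phaseWeight]
  refine mul_le_mul' ?_ (mul_le_mul' ?_ ?_)
  · refine (mul_le_mul' hTle hVle).trans ?_
    rw [mul_assoc]
    refine mul_le_mul_right ?_ _
    rw [mul_comm]
    refine enorm_le_enorm_det_phasePoly hε y a (fun l => a (σ l)) (fun m => e (.inl m))
      (fun l => ?_) fun t => ?_
    · rw [e1, heF, heH]
    · rw [e2, heF]
  · have hmem : (fun x => y (e (.inr (.inr x)))) ∈ Icc (0 : Fin m ⊕ Fin m → ℝ) 1 :=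
      ⟨fun x => hy.1 _, fun x => hy.2 _⟩
    rw [indicator_of_mem hmem]
    refine ENNReal.rpow_neg_le_rpow_neg hτ0 ?_
    refine le_trans (le_of_eq ?_) (triMax_comp_le (n + 1) y fun f => eF (.inr f))
    congr 1
    ext x
    rcases x with x | x
    · rw [e4]; rfl
    · rw [e5]; rfl
  · have hmem : (fun x => y (e (.inr (.inl x)))) ∈ Icc (0 : Fin ((n + 1) * (n + 1 - 1) / 2) → ℝ) 1 :=
      ⟨fun x => hy.1 _, fun x => hy.2 _⟩
    rw [indicator_of_mem hmem]
    refine ENNReal.rpow_neg_le_rpow_neg hτ0 ?_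
    refine le_trans (le_of_eq ?_) (vandMax_comp_le (n + 1) (fun i => y (.inl i))
      fun o : Option (Fin ((n + 1) * (n + 1 - 1) / 2)) => o.elim (eF (.inr j)) fun x => eF (.inl (eH (.inr x))))
    congr 1
    ext o
    cases o with
    | none => simp only [Option.elim_none, e4]
    | some x => simp only [Option.elim_some, e3]

theorem exists_lintegral_phase_le (n : ℕ) {ι : Type} [Fintype ι]
    (hι : Fintype.card (Tri (n + 1)) + triCrit (n + 1) ≤ Fintype.card ι) {ε : ι → ℝ}
    (hε : ∀ i, |ε i| = 1) {τ : ℝ} (hτ0 : 0 ≤ τ) (hτ : τ < 1) :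
    ∃ C : ℝ≥0∞, C ≠ ⊤ ∧ ∀ h : (Fin (n + 1) ⊕ Tri (n + 1) → ℝ) → ℝ≥0∞, Measurable h →
      ∫⁻ y in Icc (0 : ι ⊕ ι → ℝ) 1,
        (triMax (n + 1) y * vandMax (n + 1) (fun i => y (.inl i))) ^ (1 - τ) *
        h (fun m => MvPolynomial.eval y (phasePoly (n + 1) ε m)) ≤ C * ∫⁻ z, h z := by
  classical
  obtain ⟨m, hm⟩ : ∃ m, Fintype.card (Tri (n + 1)) + m = Fintype.card ι :=
    ⟨Fintype.card ι - Fintype.card (Tri (n + 1)), by omega⟩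
  have hmt : triCrit (n + 1) ≤ m := by omega
  have hm0 : 0 < m := by have := lt_triCrit (n + 1); omega
  set j : Fin m := ⟨0, hm0⟩
  have hcov (s : (Fin (n + 1) ⊕ Fin ((n + 1) * (n + 1 - 1) / 2) ≃ Tri (n + 1)) × (Tri (n + 1) ⊕ Fin m ≃ ι)) :=
    MvPolynomial.exists_lintegral_det_pderiv_mul_le (exists_equiv_coordinates s.1 s.2).choose
      (phasePoly (n + 1) ε)
  choose K hK using hcov
  set G := ∫⁻ z, phaseWeight n τ j z with hG
  have hGt : G ≠ ⊤ := lintegral_phaseWeight_ne_top n (by simpa using hmt) hτ0 hτ j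
  set c : ℝ≥0∞ := (Fintype.card (Tri (n + 1)) : ℝ≥0∞) ^ (n + 1) with hc
  have hct : c ≠ ⊤ := ENNReal.pow_ne_top (ENNReal.natCast_ne_top _)
  refine ⟨∑ s, c * (K s * G), ENNReal.sum_ne_top.2 fun s _ =>
    ENNReal.mul_ne_top hct (ENNReal.mul_ne_top (ENNReal.natCast_ne_top _) hGt), fun h hh => ?_⟩
  set J := fun (s : (Fin (n + 1) ⊕ Fin ((n + 1) * (n + 1 - 1) / 2) ≃ Tri (n + 1)) × (Tri (n + 1) ⊕ Fin m ≃ ι))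
    (y : ι ⊕ ι → ℝ) => ‖(Matrix.of fun i i' => MvPolynomial.eval y
        (MvPolynomial.pderiv ((exists_equiv_coordinates s.1 s.2).choose (.inl i')) (phasePoly (n + 1) ε i))).det‖ₑ *
        (h (fun m => MvPolynomial.eval y (phasePoly (n + 1) ε m)) *
          phaseWeight n τ j fun r => y ((exists_equiv_coordinates s.1 s.2).choose (.inr r))) with hJ
  have hev (P : MvPolynomial (ι ⊕ ι) ℝ) : Measurable fun y => MvPolynomial.eval y P :=
    (MvPolynomial.contDiff_eval P).continuous.measurable
  have hJm (s) : Measurable (J s) := by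
    refine Measurable.mul (Measurable.enorm ?_) (Measurable.mul ?_ ?_)
    · refine (Continuous.matrix_det (continuous_matrix fun i i' => ?_)).measurable
      exact (MvPolynomial.contDiff_eval _).continuous
    · exact hh.comp (measurable_pi_lambda _ fun m => hev _)
    · exact (measurable_phaseWeight n τ j).comp (measurable_pi_lambda _ fun r => measurable_pi_apply _)
  calc _ ≤ ∫⁻ y in Icc (0 : ι ⊕ ι → ℝ) 1, ∑ s, c * J s y := by
        refine setLIntegral_mono' measurableSet_Icc fun y hy => ?_
        by_cases h0 : triMax (n + 1) y * vandMax (n + 1) (fun i => y (.inl i)) = 0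
        · rw [h0, ENNReal.zero_rpow_of_pos (sub_pos.2 hτ), zero_mul]
          exact zero_le
        · obtain ⟨eH, eF, hle⟩ := exists_le_phaseWeight n m hm hε hτ0 j hy h0
          refine (mul_le_mul_left hle _).trans ?_
          refine le_trans (le_of_eq ?_) (Finset.single_le_sum (fun _ _ => zero_le) (Finset.mem_univ (eH, eF)))
          simp only [hJ]
          ring
    _ ≤ ∫⁻ y, ∑ s, c * J s y := setLIntegral_le_lintegral _ _
    _ = ∑ s, c * ∫⁻ y, J s y := by
        rw [lintegral_finsetSum _ fun s _ => (hJm s).const_mul _]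
        exact Finset.sum_congr rfl fun s _ => lintegral_const_mul _ (hJm s)
    _ ≤ ∑ s, c * (K s * ((∫⁻ z, h z) * G)) :=
        Finset.sum_le_sum fun s _ => mul_le_mul_right (hK s h _ hh (measurable_phaseWeight n τ j)) _
    _ = _ := by
        rw [Finset.sum_mul]
        exact Finset.sum_congr rfl fun s _ => by ring

theorem integral_gaussian_mul_cexp {b : ℝ} (hb : 0 < b) (z : ℝ) :
    ∫ t : ℝ, (rexp (-(π * b) * t ^ 2) : ℂ) * Complex.exp (2 * π * Complex.I * (t * z : ℝ)) =
      ((√(1 / b) * rexp (-(π / b) * z ^ 2) : ℝ) : ℂ) := by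
  have hbc : (b : ℂ) ≠ 0 := by exact_mod_cast hb.ne'
  have hpc : (π : ℂ) ≠ 0 := by exact_mod_cast pi_ne_zero
  have h := fourierIntegral_gaussian (b := ((π * b : ℝ) : ℂ)) (by simpa using mul_pos pi_pos hb) (2 * π * z : ℂ)
  rw [show (fun t : ℝ => (rexp (-(π * b) * t ^ 2) : ℂ) * Complex.exp (2 * π * Complex.I * (t * z : ℝ))) =
    fun t : ℝ => Complex.exp (Complex.I * (2 * π * z : ℂ) * t) * Complex.exp (-((π * b : ℝ) : ℂ) * t ^ 2) by
      ext t; rw [mul_comm]; push_cast; congr 2; ring, h]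
  push_cast
  rw [Real.sqrt_eq_rpow, Complex.ofReal_cpow (by positivity)]
  congr 2
  · push_cast; field_simp
  · push_cast; rfl
  · field_simp; ring

/-- The centred Gaussian weight with parameter `b` on a finite product. -/
def gaussWeight {I : Type*} [Fintype I] (b : ℝ) (x : I → ℝ) : ℝ := ∏ i, rexp (-(π * b) * x i ^ 2)

section gaussWeight
variable {I : Type*} [Fintype I]

theorem gaussWeight_nonneg (b : ℝ) (x : I → ℝ) : 0 ≤ gaussWeight b x :=
  Finset.prod_nonneg fun _ _ => (exp_pos _).le

theorem continuous_gaussWeight (b : ℝ) : Continuous (gaussWeight (I := I) b) := by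
  unfold gaussWeight; fun_prop

theorem integrable_gaussWeight {b : ℝ} (hb : 0 < b) : Integrable (gaussWeight (I := I) b) :=
  Integrable.fintype_prod fun _ => integrable_exp_neg_mul_sq (mul_pos pi_pos hb)

theorem integral_gaussWeight (b : ℝ) : ∫ x, gaussWeight (I := I) b x = √(1 / b) ^ Fintype.card I := by
  unfold gaussWeight
  rw [integral_fintype_prod_volume_eq_pow (fun t : ℝ => rexp (-(π * b) * t ^ 2)), integral_gaussian]
  congr 2
  by_cases hb : b = 0
  · simp [hb]
  · field_simp

theorem integral_gaussWeight_mul_cexp {b : ℝ} (hb : 0 < b) (z : I → ℝ) :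
    ∫ x, (gaussWeight b x : ℂ) * Complex.exp (2 * π * Complex.I * (∑ i, x i * z i : ℝ)) =
      ((√(1 / b) ^ Fintype.card I * gaussWeight (1 / b) z : ℝ) : ℂ) := by
  have h := integral_fintype_prod_volume_eq_prod (ι := I) (fun i (t : ℝ) =>
    (rexp (-(π * b) * t ^ 2) : ℂ) * Complex.exp (2 * π * Complex.I * (t * z i : ℝ)))
  calc _ = _ := by
        refine integral_congr_ae (ae_of_all _ fun x => ?_)
        change _ = ∏ i, _ * _
        rw [Finset.prod_mul_distrib, ← Complex.exp_sum]
        unfold gaussWeight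
        push_cast
        rw [Finset.mul_sum]
    _ = _ := h
    _ = _ := by
        simp_rw [integral_gaussian_mul_cexp hb]
        rw [← Complex.ofReal_prod, Finset.prod_mul_distrib, gaussWeight]
        simp [div_eq_mul_inv]

theorem lintegral_ofReal_gaussWeight {b : ℝ} (hb : 0 < b) :
    ∫⁻ z, ENNReal.ofReal (√(1 / b) ^ Fintype.card I * gaussWeight (I := I) (1 / b) z) = 1 := by
  rw [← ofReal_integral_eq_lintegral_ofReal ((integrable_gaussWeight (by positivity)).const_mul _)
    (ae_of_all _ fun z => mul_nonneg (by positivity) (gaussWeight_nonneg _ _)), integral_const_mul,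
    integral_gaussWeight, ← mul_pow, ← Real.sqrt_mul (by positivity), ← ENNReal.ofReal_one]
  congr 1
  rw [one_div_one_div, one_div_mul_cancel hb.ne']
  simp

end gaussWeight

section energy
variable {X : Type*} [MeasurableSpace X] (μ : Measure X) [IsFiniteMeasure μ] {I : Type*} [Fintype I]

/-- The oscillatory integral with phase functions `Φ`. -/
def oscInt (Φ : X → I → ℝ) (F : X → ℂ) (x : I → ℝ) : ℂ :=
  ∫ ζ, F ζ * Complex.exp (2 * π * Complex.I * (∑ i, x i * Φ ζ i : ℝ)) ∂μ

theorem norm_cexp_two_pi_I_mul (r : ℝ) : ‖Complex.exp (2 * π * Complex.I * r)‖ = 1 := by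
  rw [show (2 * π * Complex.I * r : ℂ) = ((2 * π * r : ℝ) : ℂ) * Complex.I by push_cast; ring,
    Complex.norm_exp_ofReal_mul_I]

theorem stronglyMeasurable_oscInt {Φ : X → I → ℝ} (hΦ : Measurable Φ) {F : X → ℂ} (hF : Measurable F) :
    StronglyMeasurable (oscInt μ Φ F) := by
  unfold oscInt
  refine StronglyMeasurable.integral_prod_right (Measurable.stronglyMeasurable ?_)
  have : Measurable fun p : (I → ℝ) × X => ∑ i, p.1 i * Φ p.2 i := by fun_prop
  change Measurable fun p : (I → ℝ) × X => F p.2 * Complex.exp (2 * π * Complex.I * (∑ i, p.1 i * Φ p.2 i : ℝ))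
  fun_prop

theorem lintegral_gaussWeight_mul_oscInt_le {Φ : X → I → ℝ} (hΦ : Measurable Φ) {F : X → ℂ} (hF : Measurable F)
    (hF1 : ∀ x, ‖F x‖ ≤ 1) {A : ℝ≥0∞}
    (hA : ∀ h : (I → ℝ) → ℝ≥0∞, Measurable h →
      ∫⁻ p, h (fun i => Φ p.1 i - Φ p.2 i) ∂(μ.prod μ) ≤ A * ∫⁻ z, h z) {b : ℝ} (hb : 0 < b) :
    ∫⁻ x : I → ℝ, ENNReal.ofReal (gaussWeight b x) * ‖oscInt μ Φ F x‖ₑ ^ 2 ≤ A := by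
  set M := μ.real univ
  have hI (x : I → ℝ) : ‖oscInt μ Φ F x‖ ≤ M := by
    refine (norm_integral_le_of_norm_le_const (C := 1) (ae_of_all _ fun ζ => ?_)).trans (by simp [M])
    rw [norm_mul, norm_cexp_two_pi_I_mul, mul_one]
    exact hF1 ζ
  have hmeas := stronglyMeasurable_oscInt μ hΦ hF
  have hInt : Integrable fun x : I → ℝ => gaussWeight b x * ‖oscInt μ Φ F x‖ ^ 2 := by
    refine (integrable_gaussWeight hb).mul_bdd (c := M ^ 2) ?_ (ae_of_all _ fun x => ?_)
    · exact (hmeas.norm.pow 2).aestronglyMeasurable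
    · rw [norm_pow, norm_norm]; gcongr; exact hI x
  have hsq (x : I → ℝ) : ((gaussWeight b x * ‖oscInt μ Φ F x‖ ^ 2 : ℝ) : ℂ) =
      ∫ p, (gaussWeight b x : ℂ) * (F p.1 * (starRingEnd ℂ) (F p.2) *
        Complex.exp (2 * π * Complex.I * (∑ i, x i * (Φ p.1 i - Φ p.2 i) : ℝ))) ∂(μ.prod μ) := by
    rw [integral_const_mul]
    push_cast
    congr 1
    rw [← Complex.mul_conj', oscInt, ← integral_conj, ← integral_prod_mul]
    refine integral_congr_ae (ae_of_all _ fun p => ?_)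
    simp only [map_mul, ← Complex.exp_conj, map_ofNat, Complex.conj_ofReal, Complex.conj_I]
    rw [mul_mul_mul_comm, ← Complex.exp_add]
    congr 2
    push_cast
    simp only [mul_sub, Finset.sum_sub_distrib]
    ring
  have hF2 : Measurable fun p : X × X => F p.1 * (starRingEnd ℂ) (F p.2) := by
    have : Measurable fun p : X × X => (starRingEnd ℂ) (F p.2) :=
      Complex.continuous_conj.measurable.comp (hF.comp measurable_snd)
    fun_prop
  have hFn (p : X × X) : ‖F p.1 * (starRingEnd ℂ) (F p.2)‖ ≤ 1 := by
    rw [norm_mul, RCLike.norm_conj]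
    exact mul_le_one₀ (hF1 _) (norm_nonneg _) (hF1 _)
  have hkey : ((∫ x, gaussWeight b x * ‖oscInt μ Φ F x‖ ^ 2 : ℝ) : ℂ) =
      ∫ p, F p.1 * (starRingEnd ℂ) (F p.2) *
        ((√(1 / b) ^ Fintype.card I * gaussWeight (1 / b) (fun i => Φ p.1 i - Φ p.2 i) : ℝ) : ℂ) ∂(μ.prod μ) := by
    rw [← integral_complex_ofReal]
    simp_rw [hsq]
    rw [integral_integral_swap]
    · refine integral_congr_ae (ae_of_all _ fun p => ?_)
      simp only
      rw [← integral_gaussWeight_mul_cexp hb, ← integral_const_mul]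
      refine integral_congr_ae (ae_of_all _ fun x => ?_)
      simp only
      ring
    · have h1 : Integrable (fun q : (I → ℝ) × (X × X) => gaussWeight b q.1 * (1 : ℝ)) (volume.prod (μ.prod μ)) :=
        (integrable_gaussWeight hb).mul_prod (integrable_const 1)
      refine h1.mono' (Measurable.aestronglyMeasurable ?_) (ae_of_all _ fun q => ?_)
      · have h2 : Measurable fun q : (I → ℝ) × (X × X) => ∑ i, q.1 i * (Φ q.2.1 i - Φ q.2.2 i) := by fun_prop
        have h3 := (continuous_gaussWeight (I := I) b).measurable
        change Measurable fun q : (I → ℝ) × (X × X) => (gaussWeight b q.1 : ℂ) * (F q.2.1 * (starRingEnd ℂ) (F q.2.2) *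
          Complex.exp (2 * π * Complex.I * (∑ i, q.1 i * (Φ q.2.1 i - Φ q.2.2 i) : ℝ)))
        have h4 : Measurable fun q : (I → ℝ) × (X × X) => F q.2.1 * (starRingEnd ℂ) (F q.2.2) :=
          hF2.comp measurable_snd
        fun_prop
      · simp only [Function.uncurry]
        rw [norm_mul, norm_mul, norm_cexp_two_pi_I_mul, mul_one, Complex.norm_real, norm_of_nonneg (gaussWeight_nonneg _ _)]
        exact mul_le_mul_of_nonneg_left (hFn _) (gaussWeight_nonneg _ _)
  set H : (I → ℝ) → ℝ≥0∞ := fun z => ENNReal.ofReal (√(1 / b) ^ Fintype.card I * gaussWeight (1 / b) z) with hH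
  have hHm : Measurable H :=
    ((continuous_gaussWeight _).measurable.const_mul _).ennreal_ofReal
  calc ∫⁻ x : I → ℝ, ENNReal.ofReal (gaussWeight b x) * ‖oscInt μ Φ F x‖ₑ ^ 2
      = ∫⁻ x : I → ℝ, ENNReal.ofReal (gaussWeight b x * ‖oscInt μ Φ F x‖ ^ 2) := by
        refine lintegral_congr fun x => ?_
        rw [ENNReal.ofReal_mul (gaussWeight_nonneg _ _), ENNReal.ofReal_pow (norm_nonneg _), ofReal_norm]
    _ = ENNReal.ofReal (∫ x, gaussWeight b x * ‖oscInt μ Φ F x‖ ^ 2) :=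
        (ofReal_integral_eq_lintegral_ofReal hInt
          (ae_of_all _ fun x => mul_nonneg (gaussWeight_nonneg _ _) (by positivity))).symm
    _ ≤ ‖((∫ x, gaussWeight b x * ‖oscInt μ Φ F x‖ ^ 2 : ℝ) : ℂ)‖ₑ := by
        rw [← ofReal_norm, Complex.norm_real]
        exact ENNReal.ofReal_le_ofReal (le_norm_self _)
    _ ≤ ∫⁻ p, H (fun i => Φ p.1 i - Φ p.2 i) ∂(μ.prod μ) := by
        rw [hkey]
        refine (enorm_integral_le_lintegral_enorm _).trans (lintegral_mono fun p => ?_)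
        rw [enorm_mul, ← one_mul (H _)]
        refine mul_le_mul' ?_ (le_of_eq ?_)
        · rw [← ofReal_norm, ← ENNReal.ofReal_one]
          exact ENNReal.ofReal_le_ofReal (hFn p)
        · rw [← ofReal_norm, Complex.norm_real, norm_of_nonneg]
          exact mul_nonneg (by positivity) (gaussWeight_nonneg _ _)
    _ ≤ A * ∫⁻ z, H z := hA H hHm
    _ = A := by rw [hH, lintegral_ofReal_gaussWeight hb, mul_one]

theorem lintegral_sq_oscInt_le {Φ : X → I → ℝ} (hΦ : Measurable Φ) {F : X → ℂ} (hF : Measurable F)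
    (hF1 : ∀ x, ‖F x‖ ≤ 1) {A : ℝ≥0∞}
    (hA : ∀ h : (I → ℝ) → ℝ≥0∞, Measurable h →
      ∫⁻ p, h (fun i => Φ p.1 i - Φ p.2 i) ∂(μ.prod μ) ≤ A * ∫⁻ z, h z) :
    ∫⁻ x : I → ℝ, ‖oscInt μ Φ F x‖ₑ ^ 2 ≤ A := by
  have hmeas := stronglyMeasurable_oscInt μ hΦ hF
  set g : ℕ → (I → ℝ) → ℝ≥0∞ := fun n x =>
    ENNReal.ofReal (gaussWeight (1 / ((n : ℝ) + 1)) x) * ‖oscInt μ Φ F x‖ₑ ^ 2 with hg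
  have hlim (x : I → ℝ) : Filter.Tendsto (fun n => g n x) Filter.atTop (nhds (‖oscInt μ Φ F x‖ₑ ^ 2)) := by
    have h1 : Filter.Tendsto (fun n : ℕ => gaussWeight (1 / ((n : ℝ) + 1)) x) Filter.atTop (nhds 1) := by
      have hc : Continuous fun b : ℝ => gaussWeight b x := by unfold gaussWeight; fun_prop
      have := (hc.tendsto 0).comp (tendsto_one_div_add_atTop_nhds_zero_nat (𝕜 := ℝ))
      simpa [gaussWeight, Function.comp_def] using this
    have h2 := ENNReal.Tendsto.mul_const (b := ‖oscInt μ Φ F x‖ₑ ^ 2) (ENNReal.tendsto_ofReal h1)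
      (.inl (by simp))
    simpa [hg] using h2
  calc ∫⁻ x : I → ℝ, ‖oscInt μ Φ F x‖ₑ ^ 2
      = ∫⁻ x, Filter.liminf (fun n => g n x) Filter.atTop :=
        lintegral_congr fun x => (hlim x).liminf_eq.symm
    _ ≤ Filter.liminf (fun n => ∫⁻ x, g n x) Filter.atTop := by
        refine lintegral_liminf_le fun n => ?_
        exact (continuous_gaussWeight _).measurable.ennreal_ofReal.mul (hmeas.measurable.enorm.pow_const 2)
    _ ≤ A := by
        refine Filter.liminf_le_of_le (by isBoundedDefault) fun a ha => ?_
        obtain ⟨n, hn⟩ := ha.exists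
        exact hn.trans (lintegral_gaussWeight_mul_oscInt_le μ hΦ hF hF1 hA (by positivity))

end energy

/-- The configurations of points in the unit cube that are nondegenerate to the extent `κ`. -/
def nondegenerateSet (n : ℕ) (F : Type) (κ : ℝ) : Set (F ⊕ F → ℝ) :=
  Icc 0 1 ∩ {ζ | ENNReal.ofReal κ ≤ triMax n ζ * vandMax n fun j => ζ (.inl j)}

theorem measurableSet_nondegenerateSet (n : ℕ) (F : Type) [Fintype F] (κ : ℝ) :
    MeasurableSet (nondegenerateSet n F κ) := by
  refine measurableSet_Icc.inter (measurableSet_le measurable_const ((measurable_triMax n F).mul ?_))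
  exact (measurable_vandMax n F).comp (measurable_pi_lambda _ fun j => measurable_pi_apply _)

/-- The sum of the monomials in the phase over a family of points. -/
def phaseSum (k : ℕ) {F : Type} [Fintype F] (ζ : F ⊕ F → ℝ) (m : Fin k ⊕ Tri k) : ℝ :=
  ∑ j, ζ (.inl j) ^ (phaseExp k m).1 * ζ (.inr j) ^ (phaseExp k m).2

theorem continuous_phaseSum (k : ℕ) (F : Type) [Fintype F] : Continuous (phaseSum k (F := F)) := by
  unfold phaseSum; fun_prop

theorem eval_phasePoly_eq_phaseSum_sub (k : ℕ) {F : Type} [Fintype F] (y : (F ⊕ F) ⊕ (F ⊕ F) → ℝ)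
    (m : Fin k ⊕ Tri k) :
    MvPolynomial.eval y (phasePoly k (Sum.elim (fun _ : F => 1) fun _ : F => -1) m) =
      phaseSum k (fun a : F ⊕ F => y (a.map .inl .inl)) m -
      phaseSum k (fun a : F ⊕ F => y (a.map .inr .inr)) m := by
  simp [phasePoly, phaseSum, Fintype.sum_sum_type, sub_eq_add_neg]

theorem exists_lintegral_phaseSum_sub_le (n : ℕ) {F : Type} [Fintype F]
    (hF : Fintype.card (Tri (n + 1)) + triCrit (n + 1) ≤ 2 * Fintype.card F) {τ : ℝ} (hτ0 : 0 ≤ τ) (hτ : τ < 1) :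
    ∃ C : ℝ≥0∞, C ≠ ⊤ ∧ ∀ κ : ℝ, 0 < κ → ∀ h : (Fin (n + 1) ⊕ Tri (n + 1) → ℝ) → ℝ≥0∞, Measurable h →
      ∫⁻ p, h (fun m => phaseSum (n + 1) p.1 m - phaseSum (n + 1) p.2 m)
        ∂((volume.restrict (nondegenerateSet (n + 1) F κ)).prod (volume.restrict (nondegenerateSet (n + 1) F κ)))
      ≤ C * ENNReal.ofReal κ ^ (-(1 - τ)) * ∫⁻ z, h z := by
  obtain ⟨C, hC, hCh⟩ := exists_lintegral_phase_le n (ι := F ⊕ F)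
    (ε := Sum.elim (fun _ : F => 1) fun _ : F => -1) (by rw [Fintype.card_sum]; omega)
    (by rintro (i | i) <;> simp) hτ0 hτ
  refine ⟨C, hC, fun κ hκ h hh => ?_⟩
  have hη : 0 < 1 - τ := sub_pos.2 hτ
  set S := nondegenerateSet (n + 1) F κ with hS
  have hSm : MeasurableSet S := measurableSet_nondegenerateSet _ _ _
  set T : ((F ⊕ F) ⊕ (F ⊕ F) → ℝ) → (F ⊕ F → ℝ) × (F ⊕ F → ℝ) :=
    fun y => (fun a => y (a.map .inl .inl), fun a => y (a.map .inr .inr)) with hT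
  have hTm : MeasurePreserving T volume volume := by
    convert measurePreserving_pi_comp_sum (Equiv.sumSumSumComm F F F F) using 1
    ext y a
    · rcases a with a | a <;> rfl
    · rcases a with a | a <;> rfl
  have hcont := continuous_phaseSum (n + 1) F
  have hg : Measurable fun p : (F ⊕ F → ℝ) × (F ⊕ F → ℝ) =>
      h (fun m => phaseSum (n + 1) p.1 m - phaseSum (n + 1) p.2 m) := by
    refine hh.comp (Continuous.measurable ?_)
    exact (hcont.comp continuous_fst).sub (hcont.comp continuous_snd)
  have hκ0 : ENNReal.ofReal κ ^ (1 - τ) ≠ 0 :=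
    (ENNReal.rpow_pos (ENNReal.ofReal_pos.2 hκ) ENNReal.ofReal_ne_top).ne'
  have hκt : ENNReal.ofReal κ ^ (1 - τ) ≠ ⊤ := ENNReal.rpow_ne_top_of_nonneg hη.le ENNReal.ofReal_ne_top
  rw [Measure.prod_restrict, ← Measure.volume_eq_prod, ← lintegral_indicator (hSm.prod hSm),
    ← hTm.lintegral_comp (hg.indicator (hSm.prod hSm))]
  set M : ((F ⊕ F) ⊕ (F ⊕ F) → ℝ) → ℝ≥0∞ := fun y =>
    triMax (n + 1) y * vandMax (n + 1) fun i => y (.inl i) with hM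
  set H : ((F ⊕ F) ⊕ (F ⊕ F) → ℝ) → ℝ≥0∞ := fun y => M y ^ (1 - τ) *
    h (fun m => MvPolynomial.eval y (phasePoly (n + 1) (Sum.elim (fun _ : F => 1) fun _ : F => -1) m)) with hH
  calc _ ≤ ∫⁻ y, (Icc (0 : (F ⊕ F) ⊕ (F ⊕ F) → ℝ) 1).indicator
          (fun y => ENNReal.ofReal κ ^ (-(1 - τ)) * H y) y := by
        refine lintegral_mono fun y => ?_
        by_cases hy : T y ∈ S ×ˢ S
        · have hy1 : y ∈ Icc (0 : (F ⊕ F) ⊕ (F ⊕ F) → ℝ) 1 := by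
            have a1 := hy.1.1
            have a2 := hy.2.1
            constructor
            · rintro ((j | j) | (j | j))
              · exact a1.1 (.inl j)
              · exact a2.1 (.inl j)
              · exact a1.1 (.inr j)
              · exact a2.1 (.inr j)
            · rintro ((j | j) | (j | j))
              · exact a1.2 (.inl j)
              · exact a2.2 (.inl j)
              · exact a1.2 (.inr j)
              · exact a2.2 (.inr j)
          have hκM : ENNReal.ofReal κ ≤ M y := by
            refine hy.1.2.trans (mul_le_mul' ?_ ?_)
            · exact triMax_comp_le (n + 1) y (Sum.inl : F → F ⊕ F)
            · exact vandMax_comp_le (n + 1) (fun i => y (.inl i)) (Sum.inl : F → F ⊕ F)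
          rw [indicator_of_mem hy, indicator_of_mem hy1]
          simp only [hH, eval_phasePoly_eq_phaseSum_sub]
          rw [← mul_assoc]
          refine le_mul_of_one_le_left' ?_
          rw [ENNReal.rpow_neg, ← ENNReal.inv_mul_cancel hκ0 hκt]
          exact mul_le_mul_right (ENNReal.rpow_le_rpow hκM hη.le) _
        · rw [indicator_of_notMem hy]; exact zero_le
    _ = ∫⁻ y in Icc (0 : (F ⊕ F) ⊕ (F ⊕ F) → ℝ) 1, ENNReal.ofReal κ ^ (-(1 - τ)) * H y :=
        lintegral_indicator measurableSet_Icc _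
    _ = ENNReal.ofReal κ ^ (-(1 - τ)) * ∫⁻ y in Icc (0 : (F ⊕ F) ⊕ (F ⊕ F) → ℝ) 1, H y :=
        lintegral_const_mul' _ _ (by rw [ENNReal.rpow_neg]; exact ENNReal.inv_ne_top.2 hκ0)
    _ ≤ ENNReal.ofReal κ ^ (-(1 - τ)) * (C * ∫⁻ z, h z) := mul_le_mul_right (hCh h hh) _
    _ = _ := by ring

theorem exists_lintegral_sq_oscInt_phaseSum_le (n : ℕ) {F : Type} [Fintype F]
    (hF : Fintype.card (Tri (n + 1)) + triCrit (n + 1) ≤ 2 * Fintype.card F) {η : ℝ} (hη : 0 < η) (hη1 : η ≤ 1) :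
    ∃ C : ℝ≥0∞, C ≠ ⊤ ∧ ∀ κ : ℝ, 0 < κ → ∀ g : (F ⊕ F → ℝ) → ℂ, Measurable g → (∀ ζ, ‖g ζ‖ ≤ 1) →
      ∫⁻ x, ‖oscInt (volume.restrict (nondegenerateSet (n + 1) F κ)) (phaseSum (n + 1)) g x‖ₑ ^ 2
      ≤ C * ENNReal.ofReal κ ^ (-η) := by
  obtain ⟨C, hC, hCh⟩ := exists_lintegral_phaseSum_sub_le n hF (τ := 1 - η) (by linarith) (by linarith)
  refine ⟨C, hC, fun κ hκ g hg hg1 => ?_⟩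
  have : IsFiniteMeasure (volume.restrict (nondegenerateSet (n + 1) F κ)) := by
    refine ⟨?_⟩
    rw [Measure.restrict_apply_univ]
    exact (measure_mono inter_subset_left).trans_lt isCompact_Icc.measure_lt_top
  refine lintegral_sq_oscInt_le _ (continuous_phaseSum _ _).measurable hg hg1 fun h hh => ?_
  have := hCh κ hκ h hh
  rwa [sub_sub_cancel] at this

theorem exists_lintegral_rpow_le_of_forall_approx {X : Type*} [MeasurableSpace X] (μ : Measure X)
    {C c η δ : ℝ} {D : ℝ≥0∞} (hC : 0 ≤ C) (hc : 0 < c) (hD : D ≠ ⊤) (hηδ : η < δ * c) (hδ : 0 < δ) :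
    ∃ B : ℝ≥0∞, B ≠ ⊤ ∧ ∀ (a : X → ℝ) (J : ℝ → X → ℂ), (∀ x, 0 ≤ a x) → (∀ x, a x ≤ 1) →
      (∀ κ, Measurable (J κ)) → (∀ κ, 0 < κ → ∀ x, a x ≤ ‖J κ x‖ + C * κ ^ c) →
      (∀ κ, 0 < κ → ∫⁻ x, ‖J κ x‖ₑ ^ 2 ∂μ ≤ D * ENNReal.ofReal κ ^ (-η)) →
      ∫⁻ x, ENNReal.ofReal (a x ^ (2 + δ)) ∂μ ≤ B := by
  set q : ℝ := 1 / (4 * (C + 1)) with hq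
  have hq0 : 0 < q := by positivity
  have hCq : C * q ≤ 1 / 4 := by
    rw [hq, mul_one_div, div_le_div_iff₀ (by positivity) (by norm_num)]; linarith
  set κ : ℕ → ℝ := fun j => (q * (1 / 2) ^ j) ^ (1 / c) with hκ
  have hκ0 (j) : 0 < κ j := by positivity
  have hκc (j) : κ j ^ c = q * (1 / 2) ^ j := by
    rw [hκ, ← Real.rpow_mul (by positivity), one_div_mul_cancel hc.ne', Real.rpow_one]
  set ρ : ℝ := (1 / 2 : ℝ) ^ (δ - η / c) with hρ
  have hρ0 : 0 < ρ := by positivity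
  have hρ1 : ρ < 1 := by
    refine Real.rpow_lt_one (by norm_num) (by norm_num) ?_
    rw [sub_pos, div_lt_iff₀ hc]; exact hηδ
  have hterm (j : ℕ) : ((1 / 2 : ℝ) ^ j) ^ δ * κ j ^ (-η) = q ^ (-(η / c)) * ρ ^ j := by
    rw [hκ, ← Real.rpow_mul (by positivity), Real.mul_rpow hq0.le (by positivity),
      show 1 / c * -η = -(η / c) by ring, mul_left_comm, ← Real.rpow_add (by positivity), hρ,
      ← Real.rpow_natCast, ← Real.rpow_natCast, ← Real.rpow_mul (by norm_num), ← Real.rpow_mul (by norm_num)]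
    congr 2
    ring
  refine ⟨∑' j : ℕ, 16 * D * ENNReal.ofReal (q ^ (-(η / c)) * ρ ^ j), ?_, fun a J ha0 ha1 hJm haJ hJ => ?_⟩
  · rw [ENNReal.tsum_mul_left]
    refine ENNReal.mul_ne_top (ENNReal.mul_ne_top (by norm_num) hD) ?_
    exact ((summable_geometric_of_lt_one hρ0.le hρ1).mul_left _).tsum_ofReal_ne_top
  have hpt (x : X) : ENNReal.ofReal (a x ^ (2 + δ)) ≤
      ∑' j : ℕ, 16 * ENNReal.ofReal (((1 / 2 : ℝ) ^ j) ^ δ) * ‖J (κ j) x‖ₑ ^ 2 := by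
    rcases (ha0 x).eq_or_lt with h0 | h0
    · rw [← h0, Real.zero_rpow (by positivity), ENNReal.ofReal_zero]; exact zero_le
    obtain ⟨j, hj1, hj2⟩ := exists_nat_pow_near_of_lt_one h0 (ha1 x) (by norm_num : (0 : ℝ) < 1 / 2) (by norm_num)
    refine le_trans ?_ (ENNReal.le_tsum j)
    have h1 := haJ (κ j) (hκ0 j) x
    rw [hκc, ← mul_assoc] at h1
    have h2 : (0 : ℝ) < (1 / 2) ^ j := by positivity
    have h3 : C * q * (1 / 2) ^ j ≤ 1 / 4 * (1 / 2) ^ j := mul_le_mul_of_nonneg_right hCq h2.le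
    rw [pow_succ] at hj1
    have h4 : a x ≤ 4 * ‖J (κ j) x‖ := by linarith
    rw [Real.rpow_add h0, ← ofReal_norm, ← ENNReal.ofReal_pow (norm_nonneg _),
      show (16 : ℝ≥0∞) = ENNReal.ofReal 16 by simp, ← ENNReal.ofReal_mul (by norm_num),
      ← ENNReal.ofReal_mul (by positivity)]
    refine ENNReal.ofReal_le_ofReal ?_
    calc a x ^ (2 : ℝ) * a x ^ δ ≤ (4 * ‖J (κ j) x‖) ^ 2 * ((1 / 2 : ℝ) ^ j) ^ δ := by
          rw [Real.rpow_two]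
          exact mul_le_mul (pow_le_pow_left₀ h0.le h4 2) (Real.rpow_le_rpow h0.le hj2 hδ.le)
            (by positivity) (by positivity)
      _ = _ := by ring
  calc _ ≤ ∫⁻ x, ∑' j : ℕ, 16 * ENNReal.ofReal (((1 / 2 : ℝ) ^ j) ^ δ) * ‖J (κ j) x‖ₑ ^ 2 ∂μ :=
        lintegral_mono hpt
    _ = ∑' j : ℕ, 16 * ENNReal.ofReal (((1 / 2 : ℝ) ^ j) ^ δ) * ∫⁻ x, ‖J (κ j) x‖ₑ ^ 2 ∂μ := by
        rw [lintegral_tsum fun j => (((hJm _).enorm.pow_const 2).const_mul _).aemeasurable]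
        exact tsum_congr fun j => lintegral_const_mul _ ((hJm _).enorm.pow_const 2)
    _ ≤ _ := by
        refine ENNReal.tsum_le_tsum fun j => ?_
        refine (mul_le_mul_right (hJ (κ j) (hκ0 j)) _).trans (le_of_eq ?_)
        rw [← hterm, ENNReal.ofReal_mul (by positivity), ENNReal.ofReal_rpow_of_pos (hκ0 j)]
        ring

theorem exists_volume_diff_nondegenerateSet_le (n : ℕ) {F : Type} [Fintype F]
    (hF : Fintype.card (Tri n) ≤ Fintype.card F) (hn : n ≤ Fintype.card F) :
    ∃ c : ℝ, 0 < c ∧ ∃ C : ℝ, 0 ≤ C ∧ ∀ κ : ℝ, 0 < κ →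
      volume.real (Icc 0 1 \ nondegenerateSet n F κ) ≤ C * κ ^ c := by
  obtain ⟨a⟩ := Function.Embedding.nonempty_of_card_le hF
  obtain ⟨b⟩ := Function.Embedding.nonempty_of_card_le (α := Fin n) (by simpa using hn)
  have hP := triDetPoly_ne_zero (n := n) (pu := fun γ => Sum.inl (a γ)) (pv := fun γ => Sum.inr (a γ))
    (κ := F ⊕ F) (Function.Injective.sumElim (Sum.inl_injective.comp a.injective)
      (Sum.inr_injective.comp a.injective) (by simp))
  set P := triDetPoly (n := n) (fun γ => Sum.inl (a γ)) (fun γ => (Sum.inr (a γ) : F ⊕ F))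
  set Q : MvPolynomial (F ⊕ F) ℝ := (Matrix.vandermonde fun l => MvPolynomial.X (.inl (b l))).det
  have hQ : Q ≠ 0 := by
    refine Matrix.det_vandermonde_ne_zero_iff.2 fun l l' h => b.injective ?_
    exact Sum.inl_injective (MvPolynomial.X_injective h)
  have hQe (y : F ⊕ F → ℝ) : MvPolynomial.eval y Q = (Matrix.vandermonde fun l => y (.inl (b l))).det := by
    rw [RingHom.map_det]
    congr 1
    ext i j
    simp [Matrix.vandermonde]
  obtain ⟨c, hc, C, hC, h⟩ := MvPolynomial.exists_measure_sublevel_le (P * Q) (mul_ne_zero hP hQ)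
  refine ⟨c, hc, C.toReal, ENNReal.toReal_nonneg, fun κ hκ => ?_⟩
  have h1 : volume (Icc 0 1 \ nondegenerateSet n F κ) ≤ C * ENNReal.ofReal κ ^ c := by
    refine (measure_mono ?_).trans (h κ hκ)
    rintro y ⟨hy, hyn⟩
    refine ⟨?_, hy⟩
    by_contra hlt
    rw [mem_ofPred_eq, not_le] at hlt
    refine hyn ⟨hy, ?_⟩
    rw [mem_ofPred_eq]
    refine (ENNReal.ofReal_le_ofReal hlt.le).trans ?_
    rw [map_mul, ← Real.enorm_eq_ofReal_abs, enorm_mul, hQe, eval_triDetPoly]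
    refine mul_le_mul' ?_ ?_
    · exact le_iSup (fun a : Tri n → F => ‖(Matrix.of fun γ => triRow n y (a γ)).det‖ₑ) a
    · exact le_iSup (fun b : Fin n → F => ‖(Matrix.vandermonde fun l => y (.inl (b l))).det‖ₑ) b
  have h2 := ENNReal.toReal_mono (ENNReal.mul_ne_top hC (ENNReal.rpow_ne_top_of_nonneg hc.le ENNReal.ofReal_ne_top)) h1
  rwa [ENNReal.toReal_mul, ENNReal.ofReal_rpow_of_pos hκ, ENNReal.toReal_ofReal (by positivity)] at h2

theorem setIntegral_Icc_pow_card {F : Type} [Fintype F] (φ : (Fin 2 → ℝ) → ℂ) :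
    (∫ ξ in Icc (0 : Fin 2 → ℝ) 1, φ ξ) ^ Fintype.card F =
      ∫ ζ in Icc (0 : F ⊕ F → ℝ) 1, ∏ j : F, φ ![ζ (.inl j), ζ (.inr j)] := by
  rw [← integral_fintype_prod_eq_pow, ← Measure.restrict_pi_pi]
  set e : (F ⊕ F → ℝ) ≃ᵐ (F → Fin 2 → ℝ) := (ptsEquiv F).trans
    (MeasurableEquiv.piCongrRight fun _ => MeasurableEquiv.finTwoArrow.symm) with he
  have hmp : MeasurePreserving e volume volume :=
    (volume_preserving_pi fun _ : F => (volume_preserving_finTwoArrow ℝ).symm).comp (measurePreserving_ptsEquiv F)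
  have hval (ζ) (j) : e ζ j = ![ζ (.inl j), ζ (.inr j)] := by
    ext i
    fin_cases i <;> rfl
  have hset : e ⁻¹' (univ.pi fun _ => Icc (0 : Fin 2 → ℝ) 1) = Icc (0 : F ⊕ F → ℝ) 1 := by
    ext ζ
    simp only [mem_preimage, mem_univ_pi, hval, mem_Icc, Pi.le_def, Fin.forall_fin_two, Sum.forall]
    simp
    grind
  have h := hmp.setIntegral_preimage_emb e.measurableEmbedding
    (fun z : F → Fin 2 → ℝ => ∏ j, φ (z j)) (univ.pi fun _ => Icc (0 : Fin 2 → ℝ) 1)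
  rw [hset] at h
  simp only [hval] at h
  exact h.symm

theorem setIntegral_phase_pow_card (k : ℕ) {F : Type} [Fintype F] (f : (Fin 2 → ℝ) → ℂ) (x : Fin k ⊕ Tri k → ℝ) :
    (∫ ξ in Icc (0 : Fin 2 → ℝ) 1, f ξ * Complex.exp (2 * π * Complex.I *
      (∑ m, x m * (ξ 0 ^ (phaseExp k m).1 * ξ 1 ^ (phaseExp k m).2) : ℝ))) ^ Fintype.card F =
    oscInt (volume.restrict (Icc 0 1)) (phaseSum k) (fun ζ => ∏ j : F, f ![ζ (.inl j), ζ (.inr j)]) x := by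
  rw [setIntegral_Icc_pow_card, oscInt]
  refine integral_congr_ae (ae_of_all _ fun ζ => ?_)
  simp only
  rw [Finset.prod_mul_distrib, ← Complex.exp_sum]
  congr 2
  rw [← Finset.mul_sum]
  congr 1
  push_cast
  simp only [phaseSum]
  rw [Finset.sum_comm]
  refine Finset.sum_congr rfl fun m _ => ?_
  push_cast
  rw [Finset.mul_sum]

theorem exists_lintegral_phase_rpow_le (n : ℕ) {F : Type} [Fintype F]
    (hF : Fintype.card (Tri (n + 1)) + triCrit (n + 1) ≤ 2 * Fintype.card F)
    (hF1 : Fintype.card (Tri (n + 1)) ≤ Fintype.card F) (hF2 : n + 1 ≤ Fintype.card F)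
    {p : ℝ} (hp : 2 * Fintype.card F < p) :
    ∃ B : ℝ≥0∞, B ≠ ⊤ ∧ ∀ f : (Fin 2 → ℝ) → ℂ, Measurable f → (∀ ξ, ‖f ξ‖ ≤ 1) →
      ∫⁻ x : Fin (n + 1) ⊕ Tri (n + 1) → ℝ,
        ‖∫ ξ in Icc (0 : Fin 2 → ℝ) 1, f ξ * Complex.exp (2 * π * Complex.I *
          (∑ m, x m * (ξ 0 ^ (phaseExp (n + 1) m).1 * ξ 1 ^ (phaseExp (n + 1) m).2) : ℝ))‖ₑ ^ p ≤ B := by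
  set s : ℝ := ((Fintype.card F : ℕ) : ℝ) with hs
  have hs0 : 0 < s := by rw [hs]; exact_mod_cast (by omega : 0 < Fintype.card F)
  obtain ⟨c, hc, C, hC, hbad⟩ := exists_volume_diff_nondegenerateSet_le (n + 1) hF1 hF2
  set δ : ℝ := p / s - 2 with hδ
  have hδ0 : 0 < δ := by rw [hδ, sub_pos, lt_div_iff₀ hs0]; exact hp
  set η : ℝ := min 1 (δ * c / 2) with hη
  have hη0 : 0 < η := lt_min one_pos (by positivity)
  have hηlt : η < δ * c := (min_le_right _ _).trans_lt (half_lt_self (by positivity))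
  obtain ⟨D, hD, hDb⟩ := exists_lintegral_sq_oscInt_phaseSum_le n hF hη0 (min_le_left _ _)
  obtain ⟨B, hB, hBb⟩ := exists_lintegral_rpow_le_of_forall_approx
    (volume : Measure (Fin (n + 1) ⊕ Tri (n + 1) → ℝ)) hC hc hD hηlt hδ0
  refine ⟨B, hB, fun f hf hf1 => ?_⟩
  set E : (Fin (n + 1) ⊕ Tri (n + 1) → ℝ) → ℂ := fun x =>
    ∫ ξ in Icc (0 : Fin 2 → ℝ) 1, f ξ * Complex.exp (2 * π * Complex.I *
          (∑ m, x m * (ξ 0 ^ (phaseExp (n + 1) m).1 * ξ 1 ^ (phaseExp (n + 1) m).2) : ℝ)) with hE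
  have hEn (x) : ‖E x‖ ≤ 1 := by
    have : IsFiniteMeasure (volume.restrict (Icc (0 : Fin 2 → ℝ) 1)) :=
      ⟨by rw [Measure.restrict_apply_univ]; exact isCompact_Icc.measure_lt_top⟩
    refine (norm_integral_le_of_norm_le_const (C := 1) (ae_of_all _ fun ξ => ?_)).trans ?_
    · rw [norm_mul, norm_cexp_two_pi_I_mul, mul_one]; exact hf1 ξ
    · rw [one_mul, measureReal_def, Measure.restrict_apply_univ, Real.volume_Icc_pi]
      simp
  set g : (F ⊕ F → ℝ) → ℂ := fun ζ => ∏ j : F, f ![ζ (.inl j), ζ (.inr j)] with hg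
  have hgm : Measurable g := by
    refine Finset.measurable_prod _ fun j _ => hf.comp ?_
    fun_prop
  have hg1 (ζ) : ‖g ζ‖ ≤ 1 := by
    rw [hg, norm_prod]
    exact Finset.prod_le_one (fun _ _ => norm_nonneg _) fun _ _ => hf1 _
  have hΦ : Measurable (phaseSum (n + 1) (F := F)) := (continuous_phaseSum _ _).measurable
  have hfin (S : Set (F ⊕ F → ℝ)) (hS : S ⊆ Icc 0 1) : IsFiniteMeasure (volume.restrict S) :=
    ⟨by rw [Measure.restrict_apply_univ]; exact (measure_mono hS).trans_lt isCompact_Icc.measure_lt_top⟩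
  have hmain := hBb (fun x => ‖E x‖ ^ Fintype.card F)
    (fun κ x => oscInt (volume.restrict (nondegenerateSet (n + 1) F κ)) (phaseSum (n + 1)) g x)
    (fun x => by positivity) (fun x => pow_le_one₀ (norm_nonneg _) (hEn x))
    (fun κ => ?_) (fun κ hκ x => ?_) fun κ hκ => hDb κ hκ g hgm hg1
  · refine le_trans (le_of_eq (lintegral_congr fun x => ?_)) hmain
    rw [← ofReal_norm, ENNReal.ofReal_rpow_of_nonneg (norm_nonneg _) (by linarith), ← Real.rpow_natCast,
      ← Real.rpow_mul (norm_nonneg _)]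
    congr 2
    rw [hδ, ← hs]
    field_simp
    ring
  · have : IsFiniteMeasure (volume.restrict (nondegenerateSet (n + 1) F κ)) := hfin _ inter_subset_left
    exact (stronglyMeasurable_oscInt _ hΦ hgm).measurable
  · have hsub : nondegenerateSet (n + 1) F κ ⊆ Icc 0 1 := inter_subset_left
    have h1 := hfin (Icc 0 1) subset_rfl
    have hInt : Integrable (fun ζ => g ζ * Complex.exp (2 * π * Complex.I * (∑ i, x i * phaseSum (n + 1) ζ i : ℝ)))
        (volume.restrict (Icc 0 1)) := by
      refine Integrable.of_bound (C := 1) (Measurable.aestronglyMeasurable ?_) (ae_of_all _ fun ζ => ?_)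
      · have : Measurable fun ζ : F ⊕ F → ℝ => ∑ i, x i * phaseSum (n + 1) ζ i := by fun_prop
        fun_prop
      · rw [norm_mul, norm_cexp_two_pi_I_mul, mul_one]; exact hg1 ζ
    rw [← norm_pow, hE, setIntegral_phase_pow_card, oscInt,
      ← Set.union_sdiff_cancel hsub, setIntegral_union disjoint_sdiff_right
        (measurableSet_Icc.diff (measurableSet_nondegenerateSet _ _ _)) (IntegrableOn.mono_set hInt hsub)
        (IntegrableOn.mono_set hInt sdiff_subset)]
    refine (norm_add_le _ _).trans (add_le_add (le_of_eq ?_) ?_)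
    · rfl
    · have : IsFiniteMeasure (volume.restrict (Icc 0 1 \ nondegenerateSet (n + 1) F κ)) := hfin _ sdiff_subset
      refine (norm_integral_le_of_norm_le_const (C := 1) (ae_of_all _ fun ζ => ?_)).trans ?_
      · rw [norm_mul, norm_cexp_two_pi_I_mul, mul_one]; exact hg1 ζ
      · rw [one_mul, measureReal_restrict_apply_univ]
        exact hbad κ hκ

theorem Tri.exp_injective : ∀ n, Function.Injective (Tri.exp (n := n))
  | 0 => fun a => a.elim
  | n + 1 => by
    rintro (a | a) (b | b) h
    · have : (a : ℕ) = b := congrArg Prod.fst h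
      exact congrArg Sum.inl (Fin.ext this)
    · exact absurd (congrArg Prod.snd h) (Nat.succ_ne_zero _).symm
    · exact absurd (congrArg Prod.snd h) (Nat.succ_ne_zero _)
    · have h1 := congrArg Prod.fst h
      refine congrArg Sum.inr (Tri.exp_injective n (Prod.ext h1 ?_))
      exact Nat.succ_injective (congrArg Prod.snd h)

theorem Tri.exists_exp_eq : ∀ {n i j : ℕ}, i + j < n → ∃ t : Tri n, t.exp = (i, j)
  | n + 1, i, 0, h => ⟨.inl ⟨i, by omega⟩, rfl⟩
  | n + 1, i, j + 1, h => by
    obtain ⟨t, ht⟩ := Tri.exists_exp_eq (n := n) (i := i) (j := j) (by omega)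
    refine ⟨.inr t, ?_⟩
    change (t.exp.1, t.exp.2 + 1) = _
    rw [ht]

theorem phaseExp_injective (k : ℕ) : Function.Injective (phaseExp k) := by
  rintro (a | a) (b | b) h
  · have : (a : ℕ) + 1 = b + 1 := congrArg Prod.fst h
    exact congrArg Sum.inl (Fin.ext (by omega))
  · exact absurd (congrArg Prod.snd h) (Nat.succ_ne_zero _).symm
  · exact absurd (congrArg Prod.snd h) (Nat.succ_ne_zero _)
  · have h1 := congrArg Prod.fst h
    refine congrArg Sum.inr (Tri.exp_injective k (Prod.ext h1 ?_))
    exact Nat.succ_injective (congrArg Prod.snd h)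

theorem phaseExp_mem (k : ℕ) (m : Fin k ⊕ Tri k) :
    1 ≤ (phaseExp k m).1 + (phaseExp k m).2 ∧ (phaseExp k m).1 + (phaseExp k m).2 ≤ k := by
  rcases m with i | t
  · simp only [phaseExp, Sum.elim_inl]; omega
  · have := t.exp_add_lt
    simp only [phaseExp, Sum.elim_inr]; omega

theorem exists_phaseExp_eq {k i j : ℕ} (h1 : 1 ≤ i + j) (h2 : i + j ≤ k) : ∃ m, phaseExp k m = (i, j) := by
  cases j with
  | zero => exact ⟨.inl ⟨i - 1, by omega⟩, Prod.ext (by simp [phaseExp]; omega) rfl⟩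
  | succ j =>
    obtain ⟨t, ht⟩ := Tri.exists_exp_eq (n := k) (i := i) (j := j) (by omega)
    exact ⟨.inr t, by simp [phaseExp, ht]⟩

theorem exists_equiv_idx (k : ℕ) : ∃ e : Fin k ⊕ Tri k ≃ Idx k, ∀ m,
    ((e m).1.1 : ℕ) = (phaseExp k m).1 ∧ ((e m).1.2 : ℕ) = (phaseExp k m).2 := by
  set g : Fin k ⊕ Tri k → Idx k := fun m =>
    ⟨(⟨(phaseExp k m).1, by have := phaseExp_mem k m; omega⟩, ⟨(phaseExp k m).2, by have := phaseExp_mem k m; omega⟩),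
      phaseExp_mem k m⟩ with hg
  have hinj : Function.Injective g := fun m m' h => by
    refine phaseExp_injective k (Prod.ext ?_ ?_)
    · exact congrArg (fun β : Idx k => (β.1.1 : ℕ)) h
    · exact congrArg (fun β : Idx k => (β.1.2 : ℕ)) h
  have hsurj : Function.Surjective g := fun β => by
    obtain ⟨m, hm⟩ := exists_phaseExp_eq β.2.1 β.2.2
    refine ⟨m, Subtype.ext (Prod.ext (Fin.ext ?_) (Fin.ext ?_))⟩
    · exact congrArg Prod.fst hm
    · exact congrArg Prod.snd hm
  exact ⟨Equiv.ofBijective g ⟨hinj, hsurj⟩, fun m => ⟨rfl, rfl⟩⟩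

theorem two_mul_card_tri (n : ℕ) : 2 * Fintype.card (Tri n) = n * (n + 1) := by
  induction n with
  | zero => rfl
  | succ n ih => rw [Tri.card_succ, mul_add, ih]; ring

theorem six_mul_triCrit (n : ℕ) : 6 * triCrit (n + 1) = n * (n + 1) * (n + 2) + 12 := by
  induction n with
  | zero => rfl
  | succ n ih =>
    rw [triCrit, mul_add, ih]
    have := two_mul_card_tri (n + 1)
    linarith

theorem lintegral_idx_eq {k : ℕ} {e : Fin k ⊕ Tri k ≃ Idx k}
    (he : ∀ m, ((e m).1.1 : ℕ) = (phaseExp k m).1 ∧ ((e m).1.2 : ℕ) = (phaseExp k m).2)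
    (f : (Fin 2 → ℝ) → ℂ) (p : ℝ) :
    ∫⁻ x, ‖Eext k f x‖ₑ ^ p = ∫⁻ x : Fin k ⊕ Tri k → ℝ,
        ‖∫ ξ in Icc (0 : Fin 2 → ℝ) 1, f ξ * Complex.exp (2 * π * Complex.I *
          (∑ m, x m * (ξ 0 ^ (phaseExp k m).1 * ξ 1 ^ (phaseExp k m).2) : ℝ))‖ₑ ^ p := by
  have hT := volume_measurePreserving_piCongrLeft (fun _ : Idx k => ℝ) e
  rw [← hT.lintegral_comp_emb (MeasurableEquiv.measurableEmbedding _)]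
  refine lintegral_congr fun x => ?_
  have hx (ξ) : Pphase k (MeasurableEquiv.piCongrLeft (fun _ : Idx k => ℝ) e x) ξ =
      ∑ m, x m * (ξ 0 ^ (phaseExp k m).1 * ξ 1 ^ (phaseExp k m).2) := by
    rw [Pphase, ← e.sum_comp]
    refine Finset.sum_congr rfl fun m _ => ?_
    rw [(he m).1, (he m).2, mul_assoc]
    congr 1
    exact Equiv.piCongrLeft_apply_apply (fun _ : Idx k => ℝ) e x m
  simp only [Eext, hx]

theorem eLpNorm_Eext_le_of_forall_norm_le_one {k : ℕ} {q : ℝ≥0∞} {C : ℝ≥0∞} (hC : C ≠ 0)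
    (h : ∀ f : (Fin 2 → ℝ) → ℂ, Measurable f → (∀ ξ, ‖f ξ‖ ≤ 1) → eLpNorm (Eext k f) q volume ≤ C)
    {f : (Fin 2 → ℝ) → ℂ} (hf : Measurable f) :
    eLpNorm (Eext k f) q volume ≤ C * eLpNorm f ⊤ (volume.restrict (Icc (0 : Fin 2 → ℝ) 1)) := by
  set M := eLpNorm f ⊤ (volume.restrict (Icc (0 : Fin 2 → ℝ) 1)) with hM
  by_cases hMt : M = ⊤
  · rw [hMt, ENNReal.mul_top hC]; exact le_top
  set r := M.toReal with hr
  have hr0 : 0 ≤ r := ENNReal.toReal_nonneg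
  set g : (Fin 2 → ℝ) → ℂ := fun ξ => if ‖f ξ‖ ≤ r then f ξ / r else 0 with hg
  have hgm : Measurable g :=
    Measurable.ite (measurableSet_le hf.norm measurable_const) (hf.div_const _) measurable_const
  have hg1 (ξ) : ‖g ξ‖ ≤ 1 := by
    simp only [hg]
    split_ifs with hξ
    · rw [norm_div, Complex.norm_real, norm_of_nonneg hr0]
      exact div_le_one_of_le₀ hξ hr0
    · simp
  have hfg : ∀ᵐ ξ ∂(volume.restrict (Icc (0 : Fin 2 → ℝ) 1)), f ξ = r * g ξ := by
    filter_upwards [ae_le_eLpNormEssSup (f := f) (μ := volume.restrict (Icc (0 : Fin 2 → ℝ) 1))] with ξ hξ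
    rw [← eLpNorm_exponent_top, ← hM] at hξ
    have h1 : ‖f ξ‖ ≤ r := by
      have := ENNReal.toReal_mono hMt hξ
      rwa [toReal_enorm] at this
    simp only [hg, if_pos h1]
    rcases eq_or_ne r 0 with h0 | h0
    · rw [h0] at h1 ⊢
      simp [norm_le_zero_iff.1 h1]
    · rw [mul_div_cancel₀]
      exact_mod_cast h0
  have hE : Eext k f = (r : ℂ) • Eext k g := by
    ext x
    simp only [Eext, Pi.smul_apply, smul_eq_mul]
    rw [← integral_const_mul]
    refine integral_congr_ae ?_
    filter_upwards [hfg] with ξ hξ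
    rw [hξ, mul_assoc]
  rw [hE, eLpNorm_const_smul, mul_comm]
  refine mul_le_mul' (h g hgm hg1) (le_of_eq ?_)
  rw [← ofReal_norm, Complex.norm_real, norm_of_nonneg hr0, ENNReal.ofReal_toReal hMt]

/-- **Corollary 1.4**, positive part: for every `k ≥ 2` and every real `p > p̄_k`,
where `p̄_k` is the smallest even integer `≥ q_k = k(k+1)(k+2)/6 + 2`, one has
`‖E_k f‖_{L^p(ℝ^N)} ≤ C(k,p) ‖f‖_{L^∞([0,1]²)}` for every `f ∈ L^∞([0,1]²)`. -/
theorem extension_estimate (k : ℕ) (hk : 2 ≤ k)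
    (pbar : ℕ) (hpbarEven : Even pbar)
    (hpbarGe : (k : ℝ) * (k + 1) * (k + 2) / 6 + 2 ≤ (pbar : ℝ))
    (hpbarMin : ∀ m : ℕ, Even m → (k : ℝ) * (k + 1) * (k + 2) / 6 + 2 ≤ (m : ℝ) → pbar ≤ m) :
    ∀ p : ℝ, (pbar : ℝ) < p →
      ∃ C : ℝ≥0∞, C < ⊤ ∧
        ∀ f : (Fin 2 → ℝ) → ℂ, Measurable f →
          eLpNorm (Eext k f) (ENNReal.ofReal p) volume ≤
            C * eLpNorm f ⊤ (volume.restrict (Icc (0 : Fin 2 → ℝ) 1)) := by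
  intro p hp
  obtain ⟨n, rfl⟩ : ∃ n, k = n + 1 := ⟨k - 1, by omega⟩
  obtain ⟨s, rfl⟩ := hpbarEven
  have hge : (n + 1) * (n + 2) * (n + 3) + 12 ≤ 12 * s := by
    have : (((n + 1) * (n + 2) * (n + 3) + 12 : ℕ) : ℝ) ≤ ((12 * s : ℕ) : ℝ) := by
      push_cast at hpbarGe ⊢
      linarith
    exact_mod_cast this
  have hcard := two_mul_card_tri (n + 1)
  have hcrit := six_mul_triCrit n
  have hF : Fintype.card (Tri (n + 1)) + triCrit (n + 1) ≤ 2 * Fintype.card (Fin s) := by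
    rw [Fintype.card_fin]
    have : 3 * (2 * Fintype.card (Tri (n + 1))) + 6 * triCrit (n + 1) ≤ 12 * s := by
      rw [hcard, hcrit]; linarith
    omega
  have hF1 : Fintype.card (Tri (n + 1)) ≤ Fintype.card (Fin s) := by
    rw [Fintype.card_fin]
    have : 6 * (2 * Fintype.card (Tri (n + 1))) ≤ 12 * s := by
      rw [hcard]
      refine le_trans ?_ hge
      obtain rfl | rfl | h3 : n = 1 ∨ n = 2 ∨ 3 ≤ n := by omega
      · norm_num
      · norm_num
      · obtain ⟨d, rfl⟩ := Nat.exists_eq_add_of_le h3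
        ring_nf
        nlinarith
    omega
  have hF2 : n + 1 ≤ Fintype.card (Fin s) := by
    refine le_trans ?_ hF1
    rw [Tri.card_succ]
    exact Nat.le_add_right _ _
  have hp2 : 2 * ((Fintype.card (Fin s) : ℕ) : ℝ) < p := by
    rw [Fintype.card_fin]; push_cast at hp; linarith
  have hp0 : 0 < p := lt_of_le_of_lt (by positivity) hp
  obtain ⟨B, hB, hBb⟩ := exists_lintegral_phase_rpow_le n hF hF1 hF2 hp2
  obtain ⟨e, he⟩ := exists_equiv_idx (n + 1)
  refine ⟨B ^ (1 / p) + 1, ENNReal.add_lt_top.2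
    ⟨ENNReal.rpow_lt_top_of_nonneg (by positivity) hB, ENNReal.one_lt_top⟩, fun f hf => ?_⟩
  refine eLpNorm_Eext_le_of_forall_norm_le_one (by simp) (fun g hg hg1 => ?_) hf
  rw [eLpNorm_eq_lintegral_rpow_enorm_toReal (by simpa using hp0) ENNReal.ofReal_ne_top,
    ENNReal.toReal_ofReal hp0.le, lintegral_idx_eq he]
  exact (ENNReal.rpow_le_rpow (hBb g hg hg1) (by positivity)).trans le_self_add
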